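/- Let Ψ be the set of roots of L of the form (λ; 1, θ(−3 − |λ|²)/6 + β + n), where λ ∈ Λ, n ∈ ℤ, and β is chosen so that the last entry lies in ℰ. Then rad(Ψ) = Φ_L, the set of all roots of L; in particular the ω-reflections in the elements of Ψ generate the reflection group R(L). -/

import Mathlib

noncomputable section

open ComplexConjugate

namespace Bimonster

/-- The primitive cube root of unity `ω = e^{2πi/3}`. -/
def ω : ℂ := Complex.exp (2 * (Real.pi : ℂ) * Complex.I / 3)

/-- `θ = ω - ω̄ = √-3`. -/
def θ : ℂ := ω - conj ω

/-- `ξ = e^{-πi/6}`. -/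
def ξ : ℂ := Complex.exp (-((Real.pi : ℂ) * Complex.I) / 6)

/-- Membership in the ring of Eisenstein integers `ℰ = ℤ[ω] ⊆ ℂ`. -/
def EisP (z : ℂ) : Prop := ∃ a b : ℤ, z = (a : ℂ) + (b : ℂ) * ω

/-- The units of the ring of Eisenstein integers. -/
def EisUnit (z : ℂ) : Prop :=
  z = 1 ∨ z = -1 ∨ z = ω ∨ z = -ω ∨ z = ω ^ 2 ∨ z = -ω ^ 2

/-- A generator matrix of the ternary Golay code `𝒞₁₂ ⊆ 𝔽₃¹²`. -/
def golay : Fin 6 → Fin 12 → ℤ :=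
  ![![1, 0, 0, 0, 0, 0, 0, 1, 1, 1, 1, 1],
    ![0, 1, 0, 0, 0, 0, -1, 0, 1, -1, -1, 1],
    ![0, 0, 1, 0, 0, 0, -1, 1, 0, 1, -1, -1],
    ![0, 0, 0, 1, 0, 0, -1, -1, 1, 0, 1, -1],
    ![0, 0, 0, 0, 1, 0, -1, -1, -1, 1, 0, 1],
    ![0, 0, 0, 0, 0, 1, -1, 1, -1, -1, 1, 0]]

/-- The complex Leech lattice `Λ ⊆ ℰ¹²`: vectors `(m + θc_i + 3z_i)` with
`m ∈ {0, ±1}`, `(c_i)` in the ternary Golay code and `z_i ∈ ℰ` with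
`Σ z_i ≡ m mod θ`. -/
def Leech : Set (Fin 12 → ℂ) :=
  {lam | ∃ (m : ℤ) (s : Fin 6 → ℤ) (za zb : Fin 12 → ℤ),
    (m = 0 ∨ m = 1 ∨ m = -1) ∧
    (∀ i, lam i = (m : ℂ) + θ * ((∑ j, golay j i * s j : ℤ) : ℂ) +
        3 * ((za i : ℂ) + (zb i : ℂ) * ω)) ∧
    ∃ a b : ℤ, (∑ i, ((za i : ℂ) + (zb i : ℂ) * ω)) - (m : ℂ) = θ * ((a : ℂ) + (b : ℂ) * ω)}

/-- The underlying 14-dimensional complex vector space of `L = Λ ⊕ H`. -/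
abbrev V : Type := Fin 14 → ℂ

/-- The Hermitian form of `L = Λ ⊕ H`: `⟨u,v⟩ = -(1/3)Σ ū_i v_i` on the twelve Leech
coordinates, and the hyperbolic cell with Gram matrix `[[0, θ̄], [θ, 0]]` on the last
two coordinates.  It is conjugate-linear in the first variable. -/
def herm (u v : V) : ℂ :=
  -(1 / 3) *
      (∑ i : Fin 12, conj (u (Fin.castLE (by norm_num) i)) * v (Fin.castLE (by norm_num) i)) +
    conj (u 12) * conj θ * v 13 + conj (u 13) * θ * v 12

/-- The norm `⟨λ,λ⟩ = -(1/3)Σ |λ_i|²` of a vector of the complex Leech lattice. -/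
def normL (lam : Fin 12 → ℂ) : ℂ := -(1 / 3) * ∑ i, conj (lam i) * lam i

/-- Assemble a vector `(λ; x, y)` of `Λ ⊕ H` from its Leech part and its two
hyperbolic coordinates. -/
def glue (lam : Fin 12 → ℂ) (x y : ℂ) : V := fun i =>
  if h : (i : ℕ) < 12 then lam ⟨(i : ℕ), h⟩ else if (i : ℕ) = 12 then x else y

/-- The lattice `L = Λ ⊕ H` as a subset of `ℂ¹⁴`. -/
def Lset : Set V :=
  {v | (fun i : Fin 12 => v (Fin.castLE (by norm_num) i)) ∈ Leech ∧
    EisP (v 12) ∧ EisP (v 13)}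

/-- A root of `L`: a primitive lattice vector of norm `-3`. -/
def IsRoot (r : V) : Prop :=
  r ∈ Lset ∧ herm r r = -3 ∧
    ∀ α : ℂ, EisP α → ∀ y ∈ Lset, r = α • y → EisUnit α

/-- The `μ`-reflection in a vector `r`: `v ↦ v − (1−μ)·r·⟨r,v⟩/|r|²`. -/
def reflMap (μ : ℂ) (r v : V) : V := v - ((1 - μ) * herm r v / herm r r) • r

/-- The automorphism group of the lattice `L`. -/
def AutL : Subgroup (V ≃ₗ[ℂ] V) where
  carrier := {g | (∀ v : V, v ∈ Lset ↔ g v ∈ Lset) ∧ ∀ u v : V, herm (g u) (g v) = herm u v}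
  one_mem' := ⟨fun _ => Iff.rfl, fun _ _ => rfl⟩
  mul_mem' := by
    rintro f g ⟨hf1, hf2⟩ ⟨hg1, hg2⟩
    refine ⟨fun v => ?_, fun u v => ?_⟩
    · exact (hg1 v).trans (hf1 (g v))
    · exact (hf2 (g u) (g v)).trans (hg2 u v)
  inv_mem' := by
    rintro g ⟨hg1, hg2⟩
    refine ⟨fun v => ?_, fun u v => ?_⟩
    · have h := hg1 (g.symm v)
      have hv : g (g.symm v) = v := g.apply_symm_apply v
      rw [hv] at h
      exact h.symm
    · have h := hg2 (g.symm u) (g.symm v)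
      have hu : g (g.symm u) = u := g.apply_symm_apply u
      have hv : g (g.symm v) = v := g.apply_symm_apply v
      rw [hu, hv] at h
      exact h.symm

/-- The set of elements of `Aut(L)` acting as the `ω`-reflection in some root in `S`. -/
def ReflAutos (S : Set V) : Set (V ≃ₗ[ℂ] V) :=
  {g | g ∈ AutL ∧ ∃ r ∈ S, ∀ v, g v = reflMap ω r v}

/-- The reflection group `R(L)` of `L`. -/
def RL : Subgroup (V ≃ₗ[ℂ] V) := Subgroup.closure (ReflAutos {r | IsRoot r})

/-- Two roots are adjacent when `|⟨a,b⟩| = √3`. -/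
def Adj (a b : V) : Prop := ‖herm a b‖ = Real.sqrt 3

/-- A set of roots is connected if its adjacency graph is connected. -/
def ConnectedSet (Φ : Set V) : Prop :=
  ∀ a ∈ Φ, ∀ b ∈ Φ, Relation.ReflTransGen (fun x y => x ∈ Φ ∧ y ∈ Φ ∧ Adj x y) a b

/-- `Rad Φ` is the radical of a set `Φ` of roots: the closure of `Φ` under reflecting
members of the set in each other (and identification of unit multiples). -/
inductive Rad (Φ : Set V) : V → Prop
  | base {r : V} : r ∈ Φ → Rad Φ r
  | refl {a b : V} : Rad Φ a → Rad Φ b → Rad Φ (reflMap ω a b)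
  | inv {a b : V} : Rad Φ a → Rad Φ b → Rad Φ (reflMap (conj ω) a b)
  | unit {u : ℂ} {r : V} : EisUnit u → Rad Φ r → Rad Φ (u • r)

/-- The set `Ψ` of roots of the form `(λ; 1, θ(−3 − |λ|²)/6 + β + n)` with `λ ∈ Λ`,
`n ∈ ℤ`, and `β` chosen so that the last entry lies in `ℰ`. -/
def Psi8 : Set V :=
  {r | IsRoot r ∧ ∃ (lam : Fin 12 → ℂ) (β : ℝ) (n : ℤ),
    lam ∈ Leech ∧ r = glue lam 1 (θ * (-3 - normL lam) / 6 + (β : ℂ) + (n : ℂ))}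

section PartA
open UpperHalfPlane ModularForm SlashInvariantForm SlashInvariantFormClass ModularFormClass
  CuspFormClass MatrixGroups OnePoint Filter EisensteinSeries Function
open scoped Manifold

/-- A function given by a convergent `q`-expansion, with the right transformation under `S`,
is a level one modular form. -/
theorem exists_modularForm {k : ℤ} {f : ℍ → ℂ} {c : ℕ → ℂ}
    (hf : ∀ τ : ℍ, HasSum (fun m ↦ c m • (Periodic.qParam 1 (τ : ℂ)) ^ m) (f τ))
    (hS : ∀ τ : ℍ, f (ModularGroup.S • τ) = (τ : ℂ) ^ k * f τ) :
    ∃ F : ModularForm 𝒮ℒ k, ⇑F = f ∧ ∀ m, (qExpansion 1 F).coeff m = c m := by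
  have hS' : f ∣[k] ModularGroup.S = f := by
    ext z
    rw [SL_slash_apply, hS]
    have hz : (z : ℂ) ≠ 0 := ne_zero z
    rw [ModularGroup.denom_S, zpow_neg]
    field_simp
  have hT' : f ∣[k] ModularGroup.T = f := by
    ext z
    rw [SL_slash_apply, modular_T_smul]
    have hd : denom ModularGroup.T z = 1 := by
      have h10 : (ModularGroup.T : Matrix (Fin 2) (Fin 2) ℤ) 1 0 = 0 := rfl
      have h11 : (ModularGroup.T : Matrix (Fin 2) (Fin 2) ℤ) 1 1 = 1 := rfl
      have := ModularGroup.denom_apply ModularGroup.T z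
      rw [this, h10, h11]
      simp
    have h1 := hf ((1:ℝ) +ᵥ z)
    have h2 := hf z
    have : Periodic.qParam 1 (((1:ℝ) +ᵥ z : ℍ) : ℂ) = Periodic.qParam 1 (z : ℂ) := by
      have h3 := Complex.exp_periodic (2 * Real.pi * Complex.I * z)
      simp only [Periodic.qParam]
      rw [show 2 * Real.pi * Complex.I * (((1:ℝ) +ᵥ z : ℍ) : ℂ) / ((1:ℝ):ℂ) =
        2 * Real.pi * Complex.I * z + 2 * Real.pi * Complex.I by simp; ring]
      rw [h3]
      simp
    rw [this] at h1
    rw [hd, h1.unique h2]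
    simp
  have hbdd : IsBoundedAtImInfty f := isBoundedAtImInfty_of_hasSum_qExpansion one_pos hf
  have hhol : MDiff f := by
    rw [UpperHalfPlane.mdifferentiable_iff]
    -- power series
    have hsum : ∀ q : ℂ, ‖q‖ < 1 → Summable (fun m => c m * q ^ m) := by
      intro q hq
      by_cases hq0 : q = 0
      · subst hq0
        apply summable_of_ne_finset_zero (s := {0})
        intro b hb
        simp at hb
        simp [hb]
      · have h1 := Periodic.im_invQParam_pos_of_norm_lt_one one_pos hq hq0
        have := (hf ⟨Periodic.invQParam 1 q, h1⟩).summable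
        simpa [Periodic.qParam_right_inv one_ne_zero hq0] using this
    have hdiff : DifferentiableOn ℂ (fun q => ∑' m, c m * q ^ m) (Metric.ball 0 1) := by
      intro q hq
      have hq1 : ‖q‖ < 1 := by simpa using hq
      obtain ⟨r, hr1, hr2⟩ := exists_between hq1
      have hr0 : 0 ≤ r := (norm_nonneg q).trans hr1.le
      have : DifferentiableOn ℂ (fun q => ∑' m, c m * q ^ m) (Metric.ball 0 r) := by
        apply Complex.differentiableOn_tsum_of_summable_norm (u := fun m => ‖c m‖ * r ^ m)
        · have := (hsum r (by simpa [abs_of_nonneg hr0] using hr2)).norm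
          simpa [abs_of_nonneg hr0] using this
        · intro i; fun_prop
        · exact Metric.isOpen_ball
        · intro i w hw
          rw [norm_mul, norm_pow]
          gcongr
          simpa using (Metric.mem_ball.1 hw).le
      exact ((this q (by simpa using hr1)).differentiableAt
        (Metric.isOpen_ball.mem_nhds (by simpa using hr1))).differentiableWithinAt
    have : ∀ z ∈ upperHalfPlaneSet, (f ∘ ofComplex) z =
        (fun q => ∑' m, c m * q ^ m) (Periodic.qParam 1 z) := by
      intro z hz
      have := (hf ⟨z, hz⟩).tsum_eq
      simp only [comp_apply]
      rw [ofComplex_apply_of_im_pos hz, ← this]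
      simp
    refine DifferentiableOn.congr ?_ this
    refine hdiff.comp (Periodic.differentiable_qParam.differentiableOn) ?_
    intro z hz
    simpa using Periodic.norm_qParam_lt_one one_pos hz
  have hall := slash_action_generators_SL2Z hS' hT'
  let F : ModularForm 𝒮ℒ k :=
    { toFun := f
      slash_action_eq' := by
        rintro _ ⟨A, rfl⟩
        exact hall A
      holo' := hhol
      bdd_at_cusps' := by
        intro c hc
        rw [Subgroup.IsArithmetic.isCusp_iff_isCusp_SL2Z] at hc
        rw [isBoundedAt_iff_forall_SL2Z hc]
        intro γ _
        rw [hall γ]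
        exact hbdd }
  exact ⟨F, rfl, fun m => (ModularFormClass.qExpansion_coeff_unique (f := F) one_pos
    one_mem_strictPeriods_SL hf m).symm⟩

/-- Weight 14 with vanishing constant term: everything vanishes. -/
theorem weight14 {f : ℍ → ℂ} {c : ℕ → ℂ}
    (hf : ∀ τ : ℍ, HasSum (fun m ↦ c m • (Periodic.qParam 1 (τ : ℂ)) ^ m) (f τ))
    (hS : ∀ τ : ℍ, f (ModularGroup.S • τ) = (τ : ℂ) ^ (14 : ℤ) * f τ) (h0 : c 0 = 0) (m : ℕ) :
    c m = 0 := by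
  obtain ⟨F, hF, hc⟩ := exists_modularForm hf hS
  have hz : (qExpansion 1 F).coeff 0 = 0 := by rw [hc, h0]
  have h2 : CuspForm.discriminantEquiv (toCuspForm F hz) = 0 := by
    have := rank_zero_iff_forall_zero.1 levelOne_weight_two_rank_zero
    exact this _
  have h3 := qExpansion_eq_qExpansion_discriminant_mul F hz
  rw [← hc, h3, h2]
  simp [qExpansion_zero]

/-- Weight 12 with q-expansion starting `1 + 0 q`. -/
theorem weight12 {f : ℍ → ℂ} {c : ℕ → ℂ}
    (hf : ∀ τ : ℍ, HasSum (fun m ↦ c m • (Periodic.qParam 1 (τ : ℂ)) ^ m) (f τ))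
    (hS : ∀ τ : ℍ, f (ModularGroup.S • τ) = (τ : ℂ) ^ (12 : ℤ) * f τ) (h0 : c 0 = 1)
    (h1 : c 1 = 0) : c 2 = 196560 ∧ c 3 = 16773120 ∧ c 4 = 398034000 := by
  obtain ⟨F, hF, hc⟩ := exists_modularForm hf hS
  let A : ModularForm 𝒮ℒ (4 + 4 + 4) := (E₄.mul E₄).mul E₄
  let B : ModularForm 𝒮ℒ (6 + 6) := E₆.mul E₆
  have hA : qExpansion 1 A = qExpansion 1 E₄ * qExpansion 1 E₄ * qExpansion 1 E₄ := by
    rw [ModularForm.qExpansion_mul one_pos one_mem_strictPeriods_SL,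
      ModularForm.qExpansion_mul one_pos one_mem_strictPeriods_SL]
  have hB : qExpansion 1 B = qExpansion 1 E₆ * qExpansion 1 E₆ := by
    rw [ModularForm.qExpansion_mul one_pos one_mem_strictPeriods_SL]
  have hb4 : bernoulli 4 = -1 / 30 := by decide +kernel
  have hb6 : bernoulli 6 = 1 / 42 := by decide +kernel
  have e4 : ∀ m, (qExpansion 1 E₄).coeff m =
      if m = 0 then 1 else 240 * (ArithmeticFunction.sigma 3 m : ℂ) := by
    intro m
    rw [E_qExpansion_coeff _ ⟨2, rfl⟩]
    norm_num [hb4]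
  have e6 : ∀ m, (qExpansion 1 E₆).coeff m =
      if m = 0 then 1 else -504 * (ArithmeticFunction.sigma 5 m : ℂ) := by
    intro m
    rw [E_qExpansion_coeff _ ⟨3, rfl⟩]
    norm_num [hb6]
  have s31 : ArithmeticFunction.sigma 3 1 = 1 := by decide +kernel
  have s32 : ArithmeticFunction.sigma 3 2 = 9 := by decide +kernel
  have s33 : ArithmeticFunction.sigma 3 3 = 28 := by decide +kernel
  have s34 : ArithmeticFunction.sigma 3 4 = 73 := by decide +kernel
  have s51 : ArithmeticFunction.sigma 5 1 = 1 := by decide +kernel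
  have s52 : ArithmeticFunction.sigma 5 2 = 33 := by decide +kernel
  have s53 : ArithmeticFunction.sigma 5 3 = 244 := by decide +kernel
  have s54 : ArithmeticFunction.sigma 5 4 = 1057 := by decide +kernel
  let A' : ModularForm 𝒮ℒ 12 := A
  let B' : ModularForm 𝒮ℒ 12 := B
  let M : ModularForm 𝒮ℒ 12 := (7/12 : ℂ) • A' + (5/12 : ℂ) • B'
  let G : ModularForm 𝒮ℒ 12 := F - M
  have hM : qExpansion 1 M = (7/12 : ℂ) • qExpansion 1 A + (5/12 : ℂ) • qExpansion 1 B := by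
    have h1 := ModularForm.qExpansion_add one_pos one_mem_strictPeriods_SL
      ((7/12 : ℂ) • A') ((5/12 : ℂ) • B')
    have h2 := ModularForm.qExpansion_smul one_pos one_mem_strictPeriods_SL (7/12 : ℂ) A'
    have h3 := ModularForm.qExpansion_smul one_pos one_mem_strictPeriods_SL (5/12 : ℂ) B'
    refine h1.trans ?_
    exact congrArg₂ (· + ·) h2 h3
  have hq : qExpansion 1 G = qExpansion 1 F - qExpansion 1 M :=
    ModularForm.qExpansion_sub one_pos one_mem_strictPeriods_SL F M
  have e40 := e4 0
  have e41 := e4 1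
  have e42 := e4 2
  have e43 := e4 3
  have e44 := e4 4
  have e60 := e6 0
  have e61 := e6 1
  have e62 := e6 2
  have e63 := e6 3
  have e64 := e6 4
  have hc0 := hc 0
  norm_num [s31, s32, s33, s34, s51, s52, s53, s54, h0] at e40 e41 e42 e43 e44 e60 e61 e62 e63 e64 hc0
  have key : G = 0 := by
    apply sturm_bound_levelOne
    rw [show ((12:ℤ).toNat / 12 : ℕ) = 1 from rfl]
    have hlt : ((2 : ℕ) : ℕ∞) ≤ (qExpansion 1 G).order := by
      apply PowerSeries.le_order
      intro i hi
      have hi' : i < 2 := by exact_mod_cast hi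
      rw [hq, hM]
      interval_cases i
      · simp [hc0, hA, hB, e40, e60]
        norm_num
      · simp [hc, h1, hA, hB, PowerSeries.coeff_mul, Finset.Nat.antidiagonal_succ,
          e40, e60, e41, e61]
        norm_num
    exact lt_of_lt_of_le (by norm_num) hlt
  have hfin : ∀ m, c m = (7/12 : ℂ) * (qExpansion 1 A).coeff m +
      (5/12 : ℂ) * (qExpansion 1 B).coeff m := by
    intro m
    have h2 : qExpansion 1 F = qExpansion 1 M := by
      rw [← sub_eq_zero, ← hq, key]
      exact qExpansion_zero 1
    rw [← hc, h2, hM]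
    simp
  refine ⟨?_, ?_, ?_⟩ <;> rw [hfin]
  all_goals
    simp [hA, hB, PowerSeries.coeff_mul, Finset.Nat.antidiagonal_succ,
      e40, e41, e42, e43, e44, e60, e61, e62, e63, e64]
    norm_num

end PartA

section PartB1
open MeasureTheory Filter Topology UnitAddTorus Set

/-- Cast of an integer vector into a real vector. -/
def icast {ι : Type*} (n : ι → ℤ) : ι → ℝ := fun i => (n i : ℝ)

/-- Poisson summation for the standard lattice `ℤ^ι`. -/
theorem poisson_pi {ι : Type*} [Fintype ι] (h : (ι → ℝ) → ℂ) (hc : Continuous h)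
    (hi : Integrable h)
    (hb : ∀ R : ℝ, ∃ u : (ι → ℤ) → ℝ, Summable u ∧ ∀ n x, ‖x‖ ≤ R → ‖h (x + icast n)‖ ≤ u n)
    (hs : Summable fun n : ι → ℤ =>
      ∫ x : ι → ℝ, Complex.exp (-(2 * Real.pi * Complex.I * ∑ i, (n i : ℂ) * x i)) * h x) :
    ∑' n : ι → ℤ, h (icast n) = ∑' n : ι → ℤ,
      ∫ x : ι → ℝ, Complex.exp (-(2 * Real.pi * Complex.I * ∑ i, (n i : ℂ) * x i)) * h x := by
  have hsum : ∀ x, Summable fun n : ι → ℤ => h (x + icast n) := by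
    intro x
    obtain ⟨u, hu, hux⟩ := hb ‖x‖
    exact Summable.of_norm_bounded hu (fun n => hux n x le_rfl)
  set G : (ι → ℝ) → ℂ := fun x => ∑' n : ι → ℤ, h (x + icast n) with hG
  have hGc : Continuous G := by
    rw [continuous_iff_continuousAt]
    intro x
    obtain ⟨u, hu, hux⟩ := hb (‖x‖ + 1)
    have : ContinuousOn G (Metric.ball x 1) := by
      apply continuousOn_tsum (u := u)
      · intro n
        exact (hc.comp (continuous_id.add continuous_const)).continuousOn
      · exact hu
      · intro n y hy
        apply hux
        have h1 : ‖y - x‖ < 1 := by simpa [dist_eq_norm] using hy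
        calc ‖y‖ = ‖x + (y - x)‖ := by simp
          _ ≤ ‖x‖ + ‖y - x‖ := norm_add_le _ _
          _ ≤ _ := by linarith
    exact this.continuousAt (Metric.ball_mem_nhds x one_pos)
  have hGp : ∀ x (m : ι → ℤ), G (x + icast m) = G x := by
    intro x m
    simp only [hG]
    rw [← (Equiv.addLeft m).tsum_eq (fun n => h (x + icast n))]
    congr 1
    ext n
    congr 1
    ext i
    simp [icast, add_assoc]
  let π : (ι → ℝ) → UnitAddTorus ι := Pi.map fun _ x => (x : UnitAddCircle)
  have hπ : IsOpenQuotientMap π := IsOpenQuotientMap.piMap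
    (fun _ => QuotientAddGroup.isOpenQuotientMap_mk)
  let πc : C(ι → ℝ, UnitAddTorus ι) := ⟨π, hπ.continuous⟩
  let Gc : C(ι → ℝ, ℂ) := ⟨G, hGc⟩
  have hlift : ∀ a b, πc a = πc b → Gc a = Gc b := by
    intro a b hab
    have : ∀ i, ∃ n : ℤ, b i = a i + n := by
      intro i
      have h1 : ((a i : ℝ) : UnitAddCircle) = (b i : ℝ) := congrFun hab i
      have h2 : ((b i - a i : ℝ) : UnitAddCircle) = 0 := by
        rw [AddCircle.coe_sub, h1, sub_self]
      obtain ⟨n, hn⟩ := (AddCircle.coe_eq_zero_iff 1).1 h2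
      refine ⟨n, ?_⟩
      have h3 : (n : ℝ) = b i - a i := by simpa using hn
      linarith
    choose m hm using this
    have h2 : b = a + icast m := by ext i; simp [icast, hm]
    change G a = G b
    rw [h2, hGp]
  let F : C(UnitAddTorus ι, ℂ) :=
    Topology.IsQuotientMap.lift (f := πc) hπ.isQuotientMap Gc hlift
  have hF : ∀ x, F (π x) = G x := fun x => 
    congrArg (fun k => k x) (Topology.IsQuotientMap.lift_comp (f := πc) hπ.isQuotientMap Gc hlift)
  have hexp : ∀ (n : ι → ℤ) (x : ι → ℝ), mFourier (-n) (π x) =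
      Complex.exp (-(2 * Real.pi * Complex.I * ∑ i, (n i : ℂ) * x i)) := by
    intro n x
    simp only [mFourier, ContinuousMap.coe_mk, π, Pi.map_apply, fourier_coe_apply]
    rw [← Complex.exp_sum]
    congr 1
    rw [Finset.mul_sum, ← Finset.sum_neg_distrib]
    apply Finset.sum_congr rfl
    intro i _
    simp
    ring
  have hcoeff : ∀ n, mFourierCoeff F n =
      ∫ x : ι → ℝ, Complex.exp (-(2 * Real.pi * Complex.I * ∑ i, (n i : ℂ) * x i)) * h x := by
    intro n
    set e : (ι → ℝ) → ℂ :=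
      fun x => Complex.exp (-(2 * Real.pi * Complex.I * ∑ i, (n i : ℂ) * x i)) with he
    have hec : Continuous e := by fun_prop
    have hen : ∀ x, ‖e x‖ = 1 := by
      intro x
      rw [he]
      simp only
      rw [show -(2 * Real.pi * Complex.I * ∑ i, (n i : ℂ) * x i) =
        ((-(2 * Real.pi * ∑ i, (n i : ℝ) * x i) : ℝ) : ℂ) * Complex.I by push_cast; ring]
      exact Complex.norm_exp_ofReal_mul_I _
    have hep : ∀ x (m : ι → ℤ), e (x + icast m) = e x := by
      intro x m
      rw [he]
      simp only
      rw [Complex.exp_eq_exp_iff_exists_int]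
      refine ⟨-∑ i, n i * m i, ?_⟩
      simp only [icast, Pi.add_apply]
      push_cast
      simp only [mul_add, Finset.sum_add_distrib]
      ring
    let Cb : (ι → ℤ) → Set (ι → ℝ) := fun m => {x | ∀ i, x i ∈ Ioc (m i : ℝ) (m i + 1)}
    have hCm : ∀ m, MeasurableSet (Cb m) := by
      intro m
      have : Cb m = Set.pi univ (fun i => Ioc (m i : ℝ) (m i + 1)) := by ext; simp [Cb]
      rw [this]
      exact MeasurableSet.univ_pi (fun i => measurableSet_Ioc)
    have hCd : Pairwise (Function.onFun Disjoint Cb) := by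
      intro m m' hmm
      rw [Function.onFun, Set.disjoint_left]
      intro x hx hx'
      apply hmm
      ext i
      have h1 := hx i
      have h2 := hx' i
      have h3 : (m i : ℝ) < m' i + 1 := by linarith [h1.1, h2.2]
      have h4 : (m' i : ℝ) < m i + 1 := by linarith [h2.1, h1.2]
      norm_cast at h3 h4
      omega
    have hCu : (⋃ m, Cb m) = univ := by
      rw [eq_univ_iff_forall]
      intro x
      rw [mem_iUnion]
      refine ⟨fun i => ⌈x i⌉ - 1, fun i => ⟨?_, ?_⟩⟩
      · push_cast
        linarith [Int.ceil_lt_add_one (x i)]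
      · push_cast
        linarith [Int.le_ceil (x i)]
    have h_integ : Integrable (fun x => e x * h x) := by
      refine hi.bdd_mul hec.aestronglyMeasurable (c := 1) ?_
      exact Eventually.of_forall fun x => (hen x).le
    have h1 : ∫ x, e x * h x = ∑' m, ∫ x in Cb m, e x * h x := by
      rw [← integral_iUnion hCm hCd h_integ.integrableOn, hCu, setIntegral_univ]
    have h2 : ∀ m, ∫ x in Cb m, e x * h x = ∫ x in Cb 0, e x * h (x + icast m) := by
      intro m
      have := (measurePreserving_add_right (volume : Measure (ι → ℝ))
        (icast m)).setIntegral_preimage_emb (measurableEmbedding_addRight (icast m))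
        (fun x => e x * h x) (Cb m)
      rw [← this]
      have h3 : (fun x => x + icast m) ⁻¹' Cb m = Cb 0 := by
        ext x
        simp only [Cb, icast, mem_preimage, mem_setOf_eq, Pi.add_apply, mem_Ioc, Pi.zero_apply,
          Int.cast_zero, zero_add]
        refine forall_congr' fun i => ?_
        constructor <;> rintro ⟨h1, h2⟩ <;> constructor <;> linarith
      rw [h3]
      simp only [hep]
    have hC1 : ∀ x ∈ Cb 0, ‖x‖ ≤ 1 := by
      intro x hx
      rw [pi_norm_le_iff_of_nonneg zero_le_one]
      intro i
      have := hx i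
      simp at this
      rw [Real.norm_eq_abs, abs_le]
      constructor <;> linarith [this.1, this.2]
    have hCvol : volume (Cb 0) < ⊤ := by
      refine lt_of_le_of_lt (measure_mono (t := Metric.closedBall 0 1) ?_)
        measure_closedBall_lt_top
      intro x hx
      simpa using hC1 x hx
    obtain ⟨u, hu, hux⟩ := hb 1
    have h4 : HasSum (fun m => ∫ x in Cb 0, e x * h (x + icast m))
        (∫ x in Cb 0, ∑' m, e x * h (x + icast m)) := by
      apply hasSum_integral_of_summable_integral_norm
      · intro m
        refine Measure.integrableOn_of_bounded hCvol.ne ?_ (M := u m) ?_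
        · exact (hec.mul (hc.comp (continuous_id.add continuous_const))).aestronglyMeasurable
        · refine (ae_restrict_iff' (hCm 0)).2 (Eventually.of_forall fun x hx => ?_)
          rw [norm_mul, hen, one_mul]
          exact hux m x (hC1 x hx)
      · refine Summable.of_nonneg_of_le (fun m => integral_nonneg fun x => norm_nonneg _)
          (f := fun m => u m * volume.real (Cb 0)) (fun m => ?_) (hu.mul_right _)
        have := norm_setIntegral_le_of_norm_le_const (μ := volume) (s := Cb 0) hCvol
          (f := fun x => ‖e x * h (x + icast m)‖) (C := u m) (fun x hx => by
            rw [norm_norm, norm_mul, hen, one_mul]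
            exact hux m x (hC1 x hx))
        exact (Real.le_norm_self _).trans this
    rw [h1]
    simp_rw [h2]
    rw [h4.tsum_eq, mFourierCoeff_eq_integral F n 0]
    have h5 : {x : ι → ℝ | ∀ i, x i ∈ Ioc ((0 : ι → ℝ) i) ((0 : ι → ℝ) i + 1)} = Cb 0 := by
      ext x; simp [Cb]
    rw [h5]
    apply setIntegral_congr_fun (hCm 0)
    intro x _
    simp only
    rw [tsum_mul_left]
    have := hexp n x
    have h6 := hF x
    simp only [π, Pi.map] at this h6
    rw [smul_eq_mul]
    exact congrArg₂ (· * ·) this h6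
  have hfin := UnitAddTorus.hasSum_mFourier_series_apply_of_summable (f := F) (by
    rw [funext hcoeff]; exact hs) (π 0)
  have h0 : F (π 0) = ∑' n : ι → ℤ, h (icast n) := by
    rw [hF]; simp [hG]
  rw [← h0, ← hfin.tsum_eq]
  congr 1
  ext n
  rw [hcoeff]
  have : mFourier n (π 0) = 1 := by
    have := hexp (-n) 0
    simpa using this
  rw [this]
  simp

end PartB1

section PartB2
open MeasureTheory Filter Topology Set Module
open scoped FourierTransform

section Lattice
variable {E : Type*} [NormedAddCommGroup E] [InnerProductSpace ℝ E]

/-- Even unimodular lattices (as `ℤ`-submodules of a Euclidean space). -/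
structure EvenUnimod (L : Submodule ℤ E) : Prop where
  even : ∀ v ∈ L, ∃ k : ℤ, ‖v‖ ^ 2 = 2 * k
  dual : ∀ x : E, (∀ v ∈ L, ∃ k : ℤ, inner ℝ x v = k) → x ∈ L

variable {L : Submodule ℤ E}

theorem EvenUnimod.inner_int (hL : EvenUnimod L) {u v : E} (hu : u ∈ L) (hv : v ∈ L) :
    ∃ k : ℤ, inner ℝ u v = k := by
  obtain ⟨a, ha⟩ := hL.even u hu
  obtain ⟨b, hb⟩ := hL.even v hv
  obtain ⟨c, hc⟩ := hL.even (u + v) (L.add_mem hu hv)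
  refine ⟨c - a - b, ?_⟩
  have := norm_add_sq_real u v
  push_cast
  linarith

theorem EvenUnimod.norm_sq_ge (hL : EvenUnimod L) {v : E} (hv : v ∈ L) (h0 : v ≠ 0) :
    2 ≤ ‖v‖ ^ 2 := by
  obtain ⟨a, ha⟩ := hL.even v hv
  have h1 : 0 < ‖v‖ ^ 2 := by positivity
  rw [ha] at h1 ⊢
  have h2 : 0 < a := by
    have : (0:ℝ) < a := by linarith
    exact_mod_cast this
  have : (1:ℝ) ≤ a := by exact_mod_cast h2
  linarith

theorem EvenUnimod.discrete (hL : EvenUnimod L) : DiscreteTopology L := by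
  apply discreteTopology_of_isOpen_singleton_zero
  rw [Metric.isOpen_iff]
  intro x hx
  refine ⟨1, one_pos, ?_⟩
  intro y hy
  rw [mem_singleton_iff] at hx ⊢
  subst hx
  by_contra hne
  have h1 := hL.norm_sq_ge y.2 (by simpa using hne)
  have h2 : ‖(y : E)‖ < 1 := by simpa [dist_eq_norm] using hy
  nlinarith [norm_nonneg (y : E)]

variable [FiniteDimensional ℝ E]

theorem EvenUnimod.span_top (hL : EvenUnimod L) : Submodule.span ℝ (L : Set E) = ⊤ := by
  rw [← Submodule.orthogonal_eq_bot_iff, Submodule.eq_bot_iff]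
  intro x hx
  by_contra hne
  have h : ∀ c : ℝ, c • x ∈ L := by
    intro c
    apply hL.dual
    intro v hv
    refine ⟨0, ?_⟩
    rw [inner_smul_left, real_inner_comm, (Submodule.mem_orthogonal _ _).1 hx v (Submodule.subset_span hv)]
    simp
  have h1 := hL.norm_sq_ge (h (1 / ‖x‖)) (by
    have : ‖x‖ ≠ 0 := by simpa using hne
    simp [hne])
  rw [norm_smul] at h1
  have : ‖x‖ ≠ 0 := by simpa using hne
  simp [this] at h1

theorem EvenUnimod.isZLattice (hL : EvenUnimod L) [DiscreteTopology L] : IsZLattice ℝ L := ⟨hL.span_top⟩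

variable [MeasurableSpace E] [BorelSpace E]

theorem summable_L (hL : EvenUnimod L) (hd : finrank ℝ E = 24) :
    Summable fun v : L => (1 + ‖(v : E)‖)⁻¹ ^ 30 := by
  classical
  haveI := hL.discrete
  haveI := hL.isZLattice
  have h1 : finrank ℤ L < 30 := by rw [ZLattice.rank ℝ L, hd]; norm_num
  have h2 := ZLattice.summable_norm_pow_inv L 30 h1
  have h3 : Summable (fun v : L => if v = 0 then (1:ℝ) else 0) :=
    summable_of_ne_finset_zero (s := {0}) (fun b hb => by simp at hb; simp [hb])
  refine Summable.of_nonneg_of_le (fun v => by positivity) (fun v => ?_) (h2.add h3)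
  by_cases hv : v = 0
  · subst hv; simp
  · have : 0 < ‖(v:E)‖ := by simpa using hv
    simp only [hv, if_false, add_zero]
    gcongr
    simp

/-- Poisson summation for an even unimodular lattice, up to a constant. -/
theorem poisson_L (hL : EvenUnimod L) (hd : finrank ℝ E = 24) :
    ∃ κ : ℂ, ∀ g : E → ℂ, Continuous g → Integrable g →
      (∃ C : ℝ, ∀ x, ‖g x‖ ≤ C * (1 + ‖x‖)⁻¹ ^ 30) →
      (Summable fun v : L => 𝓕 g (v : E)) →
      ∑' v : L, g v = κ * ∑' v : L, 𝓕 g (v : E) := by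
  haveI := hL.discrete
  haveI := hL.isZLattice
  let b0 := Module.Free.chooseBasis ℤ L
  let ι := Module.Free.ChooseBasisIndex ℤ L
  let b : Basis ι ℝ E := b0.ofZLatticeBasis ℝ L
  let B : (ι → ℝ) ≃L[ℝ] E := b.equivFunL.symm
  have hB : ∀ x, B x = ∑ i, x i • b i := fun x => b.equivFun_symm_apply x
  let ν : Measure E := Measure.map B volume
  haveI : ν.IsAddHaarMeasure := by
    exact B.isAddHaarMeasure_map _
  let c := Measure.addHaarScalarFactor ν volume
  have hν : ν = c • volume := Measure.isAddLeftInvariant_eq_smul ν volume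
  have h_integ : ∀ φ : E → ℂ, ∫ x, φ (B x) = (c : ℂ) * ∫ y, φ y := by
    intro φ
    have := integral_map_equiv B.toHomeomorph.toMeasurableEquiv φ (μ := volume)
    have h2 : Measure.map B.toHomeomorph.toMeasurableEquiv volume = ν := rfl
    rw [h2, hν, integral_smul_nnreal_measure] at this
    rw [NNReal.smul_def] at this
    simpa using this.symm
  let e1 : (ι → ℤ) ≃ L := b0.equivFun.symm.toEquiv
  have he1 : ∀ n, (e1 n : E) = B (icast n) := by
    intro n
    rw [hB]
    change ((b0.equivFun.symm n : L) : E) = _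
    rw [Basis.equivFun_symm_apply]
    simp [icast, b, Basis.ofZLatticeBasis_apply, Int.cast_smul_eq_zsmul]
    rfl
  have hw : ∀ n : ι → ℤ, ∃ w : L, ∀ x : ι → ℝ, inner ℝ (B x) (w : E) = ∑ i, (n i : ℝ) * x i := by
    intro n
    let φ : StrongDual ℝ E := LinearMap.toContinuousLinearMap
      ((∑ i, (n i : ℝ) • b.coord i) : E →ₗ[ℝ] ℝ)
    let w := (InnerProductSpace.toDual ℝ E).symm φ
    have h1 : ∀ x : ι → ℝ, inner ℝ (B x) w = ∑ i, (n i : ℝ) * x i := by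
      intro x
      rw [real_inner_comm, InnerProductSpace.toDual_symm_apply]
      simp only [φ, LinearMap.coe_toContinuousLinearMap', LinearMap.sum_apply,
        LinearMap.smul_apply, smul_eq_mul]
      apply Finset.sum_congr rfl
      intro i _
      congr 1
      exact congrFun (b.equivFun.apply_symm_apply x) i
    refine ⟨⟨w, ?_⟩, h1⟩
    apply hL.dual
    intro v hv
    obtain ⟨m, hm⟩ := e1.surjective ⟨v, hv⟩
    have h2 : v = B (icast m) := by rw [← he1, hm]
    refine ⟨∑ i, n i * m i, ?_⟩
    rw [real_inner_comm, h2, h1]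
    simp [icast]
  choose w hw using hw
  have hwb : Function.Bijective w := by
    constructor
    · intro n n' hnn
      classical
      ext i
      have h1 := hw n (Pi.single i 1)
      have h2 := hw n' (Pi.single i 1)
      rw [hnn, h2] at h1
      simp [Pi.single_apply] at h1
      exact h1.symm
    · intro v
      classical
      have h1 : ∀ i, ∃ k : ℤ, inner ℝ (b i) (v : E) = k := by
        intro i
        refine hL.inner_int ?_ v.2
        simp [b, Basis.ofZLatticeBasis_apply]
      choose n hn using h1
      refine ⟨n, ?_⟩
      apply Subtype.ext
      apply ext_inner_left ℝ
      intro y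
      obtain ⟨x, rfl⟩ := B.surjective y
      rw [hw, hB, sum_inner]
      apply Finset.sum_congr rfl
      intro i _
      rw [inner_smul_left, hn]
      simp
      ring
  let e2 : (ι → ℤ) ≃ L := Equiv.ofBijective w hwb
  refine ⟨c, fun g hgc hgi ⟨C, hC⟩ hgs => ?_⟩
  have hcoef : ∀ n : ι → ℤ,
      ∫ x : ι → ℝ, Complex.exp (-(2 * Real.pi * Complex.I * ∑ i, (n i : ℂ) * x i)) * g (B x)
        = c * 𝓕 g (e2 n : E) := by
    intro n
    rw [Real.fourier_eq', ← h_integ]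
    congr 1
    ext x
    rw [smul_eq_mul]
    congr 2
    change _ = (((-2 * Real.pi * inner ℝ (B x) (w n : E) : ℝ)) : ℂ) * Complex.I
    rw [hw]
    push_cast
    ring
  have hC0 : 0 ≤ C := by
    have := (norm_nonneg _).trans (hC 0)
    simpa using this
  obtain ⟨K, hK0, hK⟩ : ∃ K : ℝ, 0 ≤ K ∧ ∀ x, ‖B x‖ ≤ K * ‖x‖ :=
    ⟨‖(B : (ι → ℝ) →L[ℝ] E)‖, ContinuousLinearMap.opNorm_nonneg _, fun x => (B : (ι → ℝ) →L[ℝ] E).le_opNorm x⟩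
  have hmain := poisson_pi (fun x => g (B x)) (hgc.comp B.continuous) ?_ ?_ ?_
  · simp_rw [hcoef] at hmain
    rw [tsum_mul_left, e2.tsum_eq (fun v : L => 𝓕 g (v : E))] at hmain
    rw [← hmain, ← e1.tsum_eq (fun v : L => g v)]
    simp_rw [he1]
  · have h1 : Integrable g ν := by rw [hν]; exact hgi.smul_measure_nnreal
    exact (integrable_map_equiv B.toHomeomorph.toMeasurableEquiv g).1 h1
  · intro R
    refine ⟨fun n => C * (1 + K * |R|) ^ 30 * (1 + ‖(e1 n : E)‖)⁻¹ ^ 30, ?_, ?_⟩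
    · exact (e1.summable_iff.2 (summable_L hL hd)).mul_left _
    · intro n x hx
      rw [map_add, ← he1]
      set v : E := (e1 n : E)
      refine (hC _).trans ?_
      change _ ≤ C * (1 + K * |R|) ^ 30 * (1 + ‖v‖)⁻¹ ^ 30
      rw [mul_assoc]
      gcongr
      rw [← mul_pow]
      gcongr
      have h1 : ‖B x‖ ≤ K * |R| := (hK x).trans (by gcongr; exact hx.trans (le_abs_self R))
      have h2 : ‖v‖ ≤ ‖B x + v‖ + ‖B x‖ := by
        calc ‖v‖ = ‖(B x + v) - B x‖ := by simp
          _ ≤ _ := norm_sub_le _ _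
      rw [← div_eq_mul_inv, inv_eq_one_div, div_le_div_iff₀ (by positivity) (by positivity)]
      have h3 : 0 ≤ K * |R| := by positivity
      nlinarith [norm_nonneg (B x + v), norm_nonneg v]
  · simp_rw [hcoef]
    exact (e2.summable_iff.2 hgs).mul_left _
end Lattice

end PartB2

section PartB3
open MeasureTheory Filter Topology Set Module
open scoped FourierTransform

section Gauss

theorem gauss_bound {β : ℝ} (hβ : 0 < β) :
    ∃ C : ℝ, 0 ≤ C ∧ ∀ t : ℝ, 0 ≤ t → Real.exp (-β * t ^ 2) ≤ C * (1 + t)⁻¹ ^ 32 := by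
  refine ⟨Real.exp β * (Nat.factorial 16) * 2 ^ 16 / β ^ 16, by positivity, fun t ht => ?_⟩
  have h1 := Real.pow_div_factorial_le_exp (β * (1 + t ^ 2)) (by positivity) 16
  have h2 : (1 + t) ^ 32 ≤ 2 ^ 16 * (1 + t ^ 2) ^ 16 := by
    rw [← mul_pow, show (1 + t) ^ 32 = ((1 + t) ^ 2) ^ 16 by rw [← pow_mul]]
    gcongr
    nlinarith [sq_nonneg (1 - t)]
  have h3 : Real.exp (-β * t ^ 2) * Real.exp (β * (1 + t ^ 2)) = Real.exp β := by
    rw [← Real.exp_add]; congr 1; ring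
  have h4 : 0 < Real.exp (-β * t ^ 2) := Real.exp_pos _
  rw [inv_pow, ← div_eq_mul_inv, le_div_iff₀ (by positivity), le_div_iff₀ (by positivity), ← h3]
  have h5 : (β * (1 + t ^ 2)) ^ 16 ≤ Real.exp (β * (1 + t ^ 2)) * (Nat.factorial 16) := by
    rwa [div_le_iff₀ (by positivity)] at h1
  calc Real.exp (-β * t ^ 2) * (1 + t) ^ 32 * β ^ 16
      ≤ Real.exp (-β * t ^ 2) * (2 ^ 16 * (1 + t ^ 2) ^ 16) * β ^ 16 := by gcongr
    _ = Real.exp (-β * t ^ 2) * 2 ^ 16 * (β * (1 + t ^ 2)) ^ 16 := by rw [mul_pow]; ring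
    _ ≤ Real.exp (-β * t ^ 2) * 2 ^ 16 * (Real.exp (β * (1 + t ^ 2)) * (Nat.factorial 16)) := by
        gcongr
    _ = _ := by ring

variable {E : Type*} [NormedAddCommGroup E] [InnerProductSpace ℝ E] [FiniteDimensional ℝ E]
  [MeasurableSpace E] [BorelSpace E]

theorem integrable_of_dec {F : Type*} [NormedAddCommGroup F] (hd : finrank ℝ E = 24)
    {f : E → F} (hm : AEStronglyMeasurable f volume) (h : ∃ C : ℝ, ∀ x, ‖f x‖ ≤ C * (1 + ‖x‖)⁻¹ ^ 30) :
    Integrable f := by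
  obtain ⟨C, hC⟩ := h
  have h1 : Integrable (fun x : E => (1 + ‖x‖) ^ (-(30:ℝ))) volume :=
    integrable_one_add_norm (by rw [hd]; norm_num)
  refine Integrable.mono' (h1.const_mul C) hm (Eventually.of_forall fun x => ?_)
  refine (hC x).trans (le_of_eq ?_)
  rw [Real.rpow_neg (by positivity), inv_pow]
  norm_cast

/-- Gaussians. -/
def gs (b : ℂ) (x : E) : ℂ := Complex.exp (-b * ‖x‖ ^ 2)

theorem norm_gs (b : ℂ) (x : E) : ‖gs b x‖ = Real.exp (-b.re * ‖x‖ ^ 2) := by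
  rw [gs, Complex.norm_exp]
  congr 1
  have : (‖x‖ : ℂ) ^ 2 = ((‖x‖ ^ 2 : ℝ) : ℂ) := by push_cast; rfl
  rw [this, Complex.re_mul_ofReal]
  simp

theorem continuous_gs (b : ℂ) : Continuous (gs b : E → ℂ) := by
  unfold gs; fun_prop

theorem dec_gs {b : ℂ} (hb : 0 < b.re) (F : Type*) [NormedAddCommGroup F] (f : E → F) (K : ℝ)
    (hf : ∀ x, ‖f x‖ ≤ K * (1 + ‖x‖) ^ 2 * ‖gs b x‖) :
    ∃ C : ℝ, ∀ x, ‖f x‖ ≤ C * (1 + ‖x‖)⁻¹ ^ 30 := by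
  obtain ⟨C, hC0, hC⟩ := gauss_bound hb
  have hK : 0 ≤ K := by
    have h1 := (norm_nonneg _).trans (hf 0)
    rw [norm_gs] at h1
    simpa using h1
  refine ⟨K * C, fun x => (hf x).trans ?_⟩
  rw [norm_gs]
  calc K * (1 + ‖x‖) ^ 2 * Real.exp (-b.re * ‖x‖ ^ 2)
      ≤ K * (1 + ‖x‖) ^ 2 * (C * (1 + ‖x‖)⁻¹ ^ 32) := by
        gcongr
        exact hC _ (norm_nonneg x)
    _ = K * C * (1 + ‖x‖)⁻¹ ^ 30 := by
        have : (1 + ‖x‖) ≠ 0 := by positivity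
        field_simp

theorem hasFDerivAt_gs (b : ℂ) (x : E) :
    HasFDerivAt (gs b : E → ℂ) ((-2 * b * gs b x) • (Complex.ofRealCLM.comp (innerSL ℝ x))) x := by
  have h1 := (hasStrictFDerivAt_norm_sq x).hasFDerivAt
  have h2 := (Complex.ofRealCLM.hasFDerivAt (x := ‖x‖ ^ 2)).comp x h1
  have h3 := (h2.const_mul (-b)).cexp
  convert! h3 using 1
  · ext y
    simp [gs]
  · ext y
    simp [gs]
    ring

theorem hasFDerivAt_gs1 (b : ℂ) (p x : E) :
    HasFDerivAt (fun x : E => ((inner ℝ p x : ℝ) : ℂ) * gs b x)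
      (((inner ℝ p x : ℝ) : ℂ) • ((-2 * b * gs b x) • (Complex.ofRealCLM.comp (innerSL ℝ x))) +
        gs b x • (Complex.ofRealCLM.comp (innerSL ℝ p))) x := by
  have h1 := (Complex.ofRealCLM.hasFDerivAt (x := inner ℝ p x)).comp x
    (innerSL ℝ p).hasFDerivAt
  exact h1.mul (hasFDerivAt_gs b x)

theorem fourier_dir {f : E → ℂ} {f' : E → E →L[ℝ] ℂ} (hf : ∀ x, HasFDerivAt f (f' x) x)
    (hi : Integrable f) (hi' : Integrable f') (q w : E) :
    𝓕 (fun x => f' x q) w = 2 * Real.pi * Complex.I * (inner ℝ q w : ℝ) * 𝓕 f w := by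
  have hfd : fderiv ℝ f = f' := by ext1 x; exact (hf x).fderiv
  have h := Real.fourier_fderiv hi (fun x => (hf x).differentiableAt) (by rw [hfd]; exact hi')
  have h2 := congrArg (fun T => T q) (congrFun h w)
  rw [hfd] at h2
  simp only [VectorFourier.fourierSMulRight_apply] at h2
  have h3 : 𝓕 (fun x => f' x q) w = (𝓕 f' w) q := by
    rw [Real.fourier_eq', Real.fourier_eq', ContinuousLinearMap.integral_apply]
    · rfl
    · have := (Real.fourierIntegral_convergent_iff (μ := volume) (f := f') w).2 hi'
      simp only [Circle.smul_def, Real.fourierChar_apply] at this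
      convert! this using 3
      push_cast
      ring_nf
  have h4 : (innerSL ℝ w) q = inner ℝ q w := by
    rw [innerSL_apply_apply, real_inner_comm]
  rw [h3, h2]
  simp [h4]
  ring

theorem fourier_gs2 (hd : finrank ℝ E = 24) {b : ℂ} (hb : 0 < b.re) {p q : E}
    (hpq : inner ℝ p q = 0) (w : E) :
    𝓕 (fun x : E => ((inner ℝ p x : ℝ) : ℂ) * ((inner ℝ q x : ℝ) : ℂ) * gs b x) w =
      -(Real.pi / b) ^ 2 * (((inner ℝ p w : ℝ) : ℂ) * ((inner ℝ q w : ℝ) : ℂ) * 𝓕 (gs b : E → ℂ) w) := by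
  have hb0 : b ≠ 0 := by rintro rfl; simp at hb
  have hcg : Continuous (gs b : E → ℂ) := continuous_gs b
  have hsm : ∀ (c : ℂ) (T : E →L[ℝ] ℂ), ‖c • T‖ = ‖c‖ * ‖T‖ := fun c T => norm_smul c T
  have hn1 : ∀ y : E, ‖Complex.ofRealCLM.comp (innerSL ℝ y)‖ ≤ ‖y‖ := by
    intro y
    refine ContinuousLinearMap.opNorm_le_bound _ (norm_nonneg _) (fun z => ?_)
    simpa using abs_real_inner_le_norm y z
  have i0 : Integrable (gs b : E → ℂ) := integrable_of_dec hd hcg.aestronglyMeasurable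
    (dec_gs hb ℂ _ 1 fun x => by
      have : (1:ℝ) ≤ (1 + ‖x‖) ^ 2 := by nlinarith [norm_nonneg x]
      nlinarith [norm_nonneg (gs b x)])
  have i1 : Integrable (fun x : E => ((inner ℝ p x : ℝ) : ℂ) * gs b x) :=
    integrable_of_dec hd (by fun_prop)
    (dec_gs hb ℂ _ ‖p‖ fun x => by
      rw [norm_mul, Complex.norm_real, Real.norm_eq_abs]
      gcongr
      refine (abs_real_inner_le_norm p x).trans ?_
      gcongr
      nlinarith [norm_nonneg x])
  have hcomp : Continuous (fun x : E => Complex.ofRealCLM.comp (innerSL ℝ x)) := by fun_prop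
  have i0' : Integrable (fun x : E => (-2 * b * gs b x) • (Complex.ofRealCLM.comp (innerSL ℝ x))) :=
    integrable_of_dec hd (Continuous.aestronglyMeasurable (by fun_prop))
    (dec_gs hb _ _ (2 * ‖b‖) fun x => by
      rw [norm_smul, norm_mul, norm_mul]
      have h1 := hn1 x
      have h2 : ‖x‖ ≤ (1 + ‖x‖) ^ 2 := by nlinarith [norm_nonneg x]
      calc ‖(-2 : ℂ)‖ * ‖b‖ * ‖gs b x‖ * ‖Complex.ofRealCLM.comp (innerSL ℝ x)‖
         ≤ ‖(-2 : ℂ)‖ * ‖b‖ * ‖gs b x‖ * (1 + ‖x‖) ^ 2 := by gcongr; exact h1.trans h2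
       _ = _ := by simp; ring)
  have i1' : Integrable (fun x : E => ((inner ℝ p x : ℝ) : ℂ) • ((-2 * b * gs b x) •
      (Complex.ofRealCLM.comp (innerSL ℝ x))) + gs b x • (Complex.ofRealCLM.comp (innerSL ℝ p))) :=
    integrable_of_dec hd (Continuous.aestronglyMeasurable (by fun_prop))
    (dec_gs hb _ _ (2 * ‖b‖ * ‖p‖ + ‖p‖) fun x => by
      refine (norm_add_le _ _).trans ?_
      rw [norm_smul, norm_smul, norm_smul, norm_mul, norm_mul, Complex.norm_real, Real.norm_eq_abs]
      have h1 := hn1 x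
      have h2 : ‖x‖ * ‖x‖ ≤ (1 + ‖x‖) ^ 2 := by nlinarith [norm_nonneg x]
      have h3 : 1 ≤ (1 + ‖x‖) ^ 2 := by nlinarith [norm_nonneg x]
      have h4 := abs_real_inner_le_norm p x
      have h5 := hn1 p
      calc |inner ℝ p x| * (‖(-2 : ℂ)‖ * ‖b‖ * ‖gs b x‖ * ‖Complex.ofRealCLM.comp (innerSL ℝ x)‖)
            + ‖gs b x‖ * ‖Complex.ofRealCLM.comp (innerSL ℝ p)‖
         ≤ (‖p‖ * ‖x‖) * (‖(-2 : ℂ)‖ * ‖b‖ * ‖gs b x‖ * ‖x‖) + ‖gs b x‖ * ‖p‖ := by gcongr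
       _ = 2 * ‖b‖ * ‖p‖ * ‖gs b x‖ * (‖x‖ * ‖x‖) + ‖p‖ * ‖gs b x‖ * 1 := by simp; ring
       _ ≤ 2 * ‖b‖ * ‖p‖ * ‖gs b x‖ * (1 + ‖x‖) ^ 2 + ‖p‖ * ‖gs b x‖ * (1 + ‖x‖) ^ 2 := by gcongr
       _ = _ := by ring)
  have e1 := fourier_dir (hasFDerivAt_gs b) i0 i0' p w
  have e2 := fourier_dir (hasFDerivAt_gs1 b p) i1 i1' q w
  have c1 : (fun x : E => ((-2 * b * gs b x) • (Complex.ofRealCLM.comp (innerSL ℝ x))) p) =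
      (-2 * b) • (fun x : E => ((inner ℝ p x : ℝ) : ℂ) * gs b x) := by
    ext x
    simp [real_inner_comm]
    ring
  have c2 : (fun x : E => (((inner ℝ p x : ℝ) : ℂ) • ((-2 * b * gs b x) •
      (Complex.ofRealCLM.comp (innerSL ℝ x))) + gs b x • (Complex.ofRealCLM.comp (innerSL ℝ p))) q) =
      (-2 * b) • (fun x : E => ((inner ℝ p x : ℝ) : ℂ) * ((inner ℝ q x : ℝ) : ℂ) * gs b x) := by
    ext x
    simp [real_inner_comm, hpq]
    ring
  have hsmul : ∀ (c : ℂ) (f : E → ℂ), 𝓕 (c • f) w = c * 𝓕 f w := by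
    intro c f
    rw [Real.fourier_eq', Real.fourier_eq', ← integral_const_mul]
    congr 1
    ext x
    simp
    ring
  rw [c1, hsmul] at e1
  rw [c2, hsmul] at e2
  have e3 : (-2 * b) * ((-2 * b) *
      𝓕 (fun x : E => ((inner ℝ p x : ℝ) : ℂ) * ((inner ℝ q x : ℝ) : ℂ) * gs b x) w) =
      (2 * Real.pi * Complex.I) ^ 2 * (inner ℝ p w : ℝ) * (inner ℝ q w : ℝ) * 𝓕 (gs b : E → ℂ) w := by
    rw [e2]
    linear_combination (2 * Real.pi * Complex.I * (inner ℝ q w : ℝ)) * e1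
  rw [mul_pow, Complex.I_sq] at e3
  field_simp
  linear_combination (1/4) * e3
end Gauss

end PartB3

section PartB4
open MeasureTheory Filter Topology Set Module UpperHalfPlane
open scoped FourierTransform

section Theta
variable {E : Type*} [NormedAddCommGroup E] [InnerProductSpace ℝ E]

open Classical in
/-- The shell of vectors of norm `2n` of a lattice. -/
def Sh (L : Submodule ℤ E) (n : ℕ) : Finset E :=
  if h : {v : E | v ∈ L ∧ ‖v‖ ^ 2 = 2 * n}.Finite then h.toFinset else ∅

variable {L : Submodule ℤ E} [FiniteDimensional ℝ E]

theorem EvenUnimod.finite_ball (hL : EvenUnimod L) (R : ℝ) : {v : E | v ∈ L ∧ ‖v‖ ≤ R}.Finite := by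
  haveI := hL.discrete
  have h := Metric.finite_isBounded_inter_isClosed (K := Metric.closedBall (0:E) R) (s := (L : Set E))
    ⟨hL.discrete⟩ Metric.isBounded_closedBall (by
      haveI : DiscreteTopology L.toAddSubgroup := hL.discrete
      exact AddSubgroup.isClosed_of_discrete (H := L.toAddSubgroup))
  refine h.subset ?_
  rintro v ⟨h1, h2⟩
  exact ⟨by simpa using h2, h1⟩

theorem EvenUnimod.mem_Sh (hL : EvenUnimod L) {n : ℕ} {v : E} :
    v ∈ Sh L n ↔ v ∈ L ∧ ‖v‖ ^ 2 = 2 * n := by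
  have h : {v : E | v ∈ L ∧ ‖v‖ ^ 2 = 2 * n}.Finite := by
    refine (hL.finite_ball (2 * n + 1)).subset ?_
    rintro v ⟨h1, h2⟩
    refine ⟨h1, ?_⟩
    nlinarith [norm_nonneg v]
  rw [Sh, dif_pos h]
  simp

/-- The half norm of a lattice vector, as a natural number. -/
def hn (v : E) : ℕ := ⌊‖v‖ ^ 2 / 2⌋₊

theorem EvenUnimod.hn_spec (hL : EvenUnimod L) {v : E} (hv : v ∈ L) : ‖v‖ ^ 2 = 2 * hn v := by
  obtain ⟨k, hk⟩ := hL.even v hv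
  have h0 : 0 ≤ ‖v‖ ^ 2 := by positivity
  have hk0 : 0 ≤ k := by
    have : (0:ℝ) ≤ k := by linarith
    exact_mod_cast this
  obtain ⟨m, rfl⟩ := Int.eq_ofNat_of_zero_le hk0
  have : hn v = m := by
    rw [hn, hk]
    simp
  rw [this, hk]
  simp

theorem one_bound (x : E) : ‖(1:ℂ)‖ ≤ 1 * (1 + ‖x‖) ^ 2 := by
  rw [norm_one, one_mul]; nlinarith [norm_nonneg x]

variable [MeasurableSpace E] [BorelSpace E]

/-- Parameter of the Gaussian attached to `τ`. -/
def bτ (τ : ℍ) : ℂ := -(Real.pi * Complex.I * τ)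

theorem bτ_re (τ : ℍ) : 0 < (bτ τ).re := by
  simp only [bτ, Complex.neg_re, Complex.mul_re, Complex.ofReal_re, Complex.I_re, Complex.ofReal_im, Complex.I_im, Complex.mul_im]
  have := τ.im_pos
  simp
  positivity

theorem gs_bτ (hL : EvenUnimod L) (τ : ℍ) {v : E} (hv : v ∈ L) :
    gs (bτ τ) v = Function.Periodic.qParam 1 (τ : ℂ) ^ (hn v) := by
  have h1 : (‖v‖ : ℂ) ^ 2 = 2 * (hn v : ℂ) := by
    have := hL.hn_spec hv
    exact_mod_cast congrArg (fun x : ℝ => (x : ℂ)) this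
  rw [gs, h1, Function.Periodic.qParam, ← Complex.exp_nat_mul, bτ]
  congr 1
  simp
  ring

theorem summable_theta (hL : EvenUnimod L) (hd : finrank ℝ E = 24) (P : E → ℂ)
    (hP : ∃ K : ℝ, ∀ x, ‖P x‖ ≤ K * (1 + ‖x‖) ^ 2) (τ : ℍ) :
    Summable fun v : L => P v * gs (bτ τ) (v : E) := by
  obtain ⟨K, hK⟩ := hP
  obtain ⟨C, hC⟩ := dec_gs (bτ_re τ) ℂ (fun x : E => P x * gs (bτ τ) x) K (fun x => by
    rw [norm_mul]; gcongr; exact hK x)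
  exact Summable.of_norm_bounded ((summable_L hL hd).mul_left C) (fun v => hC v)

theorem theta_hasSum (hL : EvenUnimod L) (hd : finrank ℝ E = 24) (P : E → ℂ)
    (hP : ∃ K : ℝ, ∀ x, ‖P x‖ ≤ K * (1 + ‖x‖) ^ 2) (τ : ℍ) :
    HasSum (fun n => (∑ v ∈ Sh L n, P v) • (Function.Periodic.qParam 1 (τ : ℂ)) ^ n)
      (∑' v : L, P v * gs (bτ τ) (v : E)) := by
  have h1 := (summable_theta hL hd P hP τ).hasSum
  rw [← (Equiv.sigmaFiberEquiv (fun v : L => hn (v : E))).hasSum_iff] at h1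
  refine h1.sigma (fun n => ?_)
  let e : {v : L // hn (v : E) = n} ≃ {v : E // v ∈ Sh L n} :=
    { toFun := fun v => ⟨v.1, hL.mem_Sh.2 ⟨v.1.2, by rw [hL.hn_spec v.1.2, v.2]⟩⟩
      invFun := fun v => ⟨⟨v.1, (hL.mem_Sh.1 v.2).1⟩, by
        have h2 := (hL.mem_Sh.1 v.2)
        have h3 := hL.hn_spec h2.1
        rw [h2.2] at h3
        have h4 : (n : ℝ) = hn (v : E) := by linarith
        exact_mod_cast h4.symm⟩
      left_inv := fun v => rfl
      right_inv := fun v => rfl }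
  rw [← e.symm.hasSum_iff, Finset.sum_smul]
  have h5 := hasSum_fintype (fun v : {v : E // v ∈ Sh L n} => P v • (Function.Periodic.qParam 1 (τ : ℂ)) ^ n)
  rw [Finset.univ_eq_attach, Finset.sum_attach (Sh L n) (fun v => P v • (Function.Periodic.qParam 1 (τ : ℂ)) ^ n)] at h5
  convert! h5 using 2 with v
  have h6 := (e.symm v).2
  change P v * gs (bτ τ) (v : E) = _
  rw [gs_bτ hL τ (hL.mem_Sh.1 v.2).1]
  change hn (v : E) = n at h6
  rw [h6, smul_eq_mul]

theorem coe_S (τ : ℍ) : ((ModularGroup.S • τ : ℍ) : ℂ) = -(τ : ℂ)⁻¹ := by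
  rw [modular_S_smul]
  simp [inv_neg]

theorem fourier_gs_bτ (hd : finrank ℝ E = 24) (τ : ℍ) (w : E) :
    𝓕 (gs (bτ τ) : E → ℂ) w = ((τ : ℂ) ^ 12)⁻¹ * gs (bτ (ModularGroup.S • τ)) w := by
  have h := fourier_gaussian_innerProductSpace (V := E) (bτ_re τ) w
  have hτ : (τ : ℂ) ≠ 0 := ne_zero τ
  have hpi : (Real.pi : ℂ) ≠ 0 := by exact_mod_cast Real.pi_ne_zero
  have hI := Complex.I_ne_zero
  have h1 : (Real.pi / bτ τ : ℂ) = Complex.I / τ := by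
    rw [bτ]
    field_simp
    rw [Complex.I_sq]
  change 𝓕 (fun x : E => Complex.exp (-bτ τ * ‖x‖ ^ 2)) w = _
  rw [h, hd, h1, gs]
  congr 1
  · rw [show ((24 : ℕ) : ℂ) / 2 = ((12 : ℕ) : ℂ) by norm_num, Complex.cpow_natCast, div_pow]
    rw [show Complex.I ^ 12 = (Complex.I ^ 2) ^ 6 by rw [← pow_mul], Complex.I_sq]
    norm_num
  · congr 1
    rw [bτ, bτ, coe_S]
    field_simp
    rw [Complex.I_sq]
    ring

theorem theta_S (hL : EvenUnimod L) (hd : finrank ℝ E = 24) :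
    ∃ κ : ℂ, ∀ (P : E → ℂ) (k : ℕ), Continuous P →
      (∃ K : ℝ, ∀ x, ‖P x‖ ≤ K * (1 + ‖x‖) ^ 2) →
      (∀ (τ : ℍ) (w : E), 𝓕 (fun x => P x * gs (bτ τ) x) w =
        ((τ : ℂ) ^ k)⁻¹ * (P w * gs (bτ (ModularGroup.S • τ)) w)) →
      ∀ τ : ℍ, (τ : ℂ) ^ k * ∑' v : L, P v * gs (bτ τ) (v : E) =
        κ * ∑' v : L, P v * gs (bτ (ModularGroup.S • τ)) (v : E) := by
  obtain ⟨κ, hκ⟩ := poisson_L hL hd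
  refine ⟨κ, fun P k hPc ⟨K, hK⟩ hF τ => ?_⟩
  have hdec := dec_gs (bτ_re τ) ℂ (fun x : E => P x * gs (bτ τ) x) K (fun x => by
    rw [norm_mul]; gcongr; exact hK x)
  have hc : Continuous (fun x : E => P x * gs (bτ τ) x) := hPc.mul (continuous_gs _)
  have hs : Summable fun v : L => 𝓕 (fun x => P x * gs (bτ τ) x) (v : E) := by
    simp_rw [hF]
    exact (summable_theta hL hd P ⟨K, hK⟩ _).mul_left _
  rw [hκ _ hc (integrable_of_dec hd hc.aestronglyMeasurable hdec) hdec hs]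
  simp_rw [hF]
  rw [tsum_mul_left]
  have hτ : (τ : ℂ) ≠ 0 := ne_zero τ
  field_simp

theorem theta_S' (hL : EvenUnimod L) (hd : finrank ℝ E = 24) (P : E → ℂ) (k : ℕ) (hPc : Continuous P)
    (hP : ∃ K : ℝ, ∀ x, ‖P x‖ ≤ K * (1 + ‖x‖) ^ 2) 
    (hF : ∀ (τ : ℍ) (w : E), 𝓕 (fun x => P x * gs (bτ τ) x) w =
        ((τ : ℂ) ^ k)⁻¹ * (P w * gs (bτ (ModularGroup.S • τ)) w)) (τ : ℍ) :
      ∑' v : L, P v * gs (bτ (ModularGroup.S • τ)) (v : E) = 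
       (τ : ℂ) ^ k * ∑' v : L, P v * gs (bτ τ) (v : E) := by
  obtain ⟨κ, hκ⟩ := theta_S hL hd
  have h1 := hκ (fun _ => 1) 12 continuous_const ⟨1, one_bound⟩
    (fun τ w => by simpa using fourier_gs_bτ hd τ w) I
  have hS : ModularGroup.S • I = I := by
    apply UpperHalfPlane.ext
    rw [coe_S]
    simp
  rw [hS] at h1
  have hI : (I : ℂ) ^ 12 = 1 := by
    rw [coe_I, show Complex.I ^ 12 = (Complex.I ^ 2) ^ 6 by rw [← pow_mul], Complex.I_sq]
    norm_num
  have hpos : ∑' v : L, (1:ℂ) * gs (bτ I) (v : E) ≠ 0 := by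
    have h2 : ∀ v : L, (1 : ℂ) * gs (bτ I) (v : E) = ((Real.exp (-Real.pi * ‖(v : E)‖ ^ 2) : ℝ) : ℂ) := by
      intro v
      rw [gs, bτ, coe_I, mul_assoc, Complex.I_mul_I]
      push_cast
      simp
    have hsum := summable_theta hL hd (fun _ => 1) ⟨1, one_bound⟩ I
    simp_rw [h2] at hsum ⊢
    rw [← Complex.ofReal_tsum]
    have hs' := Complex.summable_ofReal.1 hsum
    have : 0 < ∑' v : L, Real.exp (-Real.pi * ‖(v : E)‖ ^ 2) :=
      hs'.tsum_pos (fun v => (Real.exp_pos _).le) 0 (Real.exp_pos _)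
    exact_mod_cast this.ne'
  rw [hI, one_mul] at h1
  have hκ1 : κ = 1 := by
    have : (κ - 1) * ∑' v : L, (1:ℂ) * gs (bτ I) (v : E) = 0 := by linear_combination -h1
    rcases mul_eq_zero.1 this with h | h
    · linear_combination h
    · exact absurd h hpos
  have := hκ P k hPc hP hF τ
  rw [hκ1, one_mul] at this
  exact this.symm

/-- Kissing numbers of the first shells of a rootless lattice. -/
theorem shells (hL : EvenUnimod L) (hd : finrank ℝ E = 24) (hr : ∀ v ∈ L, ‖v‖ ^ 2 ≠ 2) :
    (Sh L 2).card = 196560 ∧ (Sh L 3).card = 16773120 ∧ (Sh L 4).card = 398034000 := by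
  have hP : ∃ K : ℝ, ∀ x : E, ‖(fun _ => (1 : ℂ)) x‖ ≤ K * (1 + ‖x‖) ^ 2 :=
    ⟨1, one_bound⟩
  have h0 : Sh L 0 = {0} := by
    ext v
    rw [hL.mem_Sh]
    simp
    rintro rfl
    exact L.zero_mem
  have h1 : Sh L 1 = ∅ := by
    ext v
    rw [hL.mem_Sh]
    simp
    exact hr v
  have h := weight12 (theta_hasSum hL hd (fun _ => 1) hP)
    (fun τ => by
      have := theta_S' hL hd (fun _ => 1) 12 continuous_const hP
        (fun τ w => by simpa using fourier_gs_bτ hd τ w) τ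
      exact_mod_cast this) (by rw [h0]; simp) (by rw [h1]; simp)
  simp at h
  exact_mod_cast h

theorem design (hL : EvenUnimod L) (hd : finrank ℝ E = 24) {p q : E} (hpq : inner ℝ p q = 0) :
    ∑ v ∈ Sh L 1, inner ℝ p v * inner ℝ q v = (0 : ℝ) := by
  let P : E → ℂ := fun x => ((inner ℝ p x : ℝ) : ℂ) * ((inner ℝ q x : ℝ) : ℂ)
  have hP : ∃ K : ℝ, ∀ x : E, ‖P x‖ ≤ K * (1 + ‖x‖) ^ 2 :=
    ⟨‖p‖ * ‖q‖, fun x => by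
      simp only [P]
      rw [norm_mul, Complex.norm_real, Complex.norm_real, Real.norm_eq_abs, Real.norm_eq_abs]
      have h1 := abs_real_inner_le_norm p x
      have h2 := abs_real_inner_le_norm q x
      have h3 : ‖x‖ * ‖x‖ ≤ (1 + ‖x‖) ^ 2 := by nlinarith [norm_nonneg x]
      calc _ ≤ (‖p‖ * ‖x‖) * (‖q‖ * ‖x‖) := by gcongr
        _ = ‖p‖ * ‖q‖ * (‖x‖ * ‖x‖) := by ring
        _ ≤ _ := by gcongr⟩
  have hPc : Continuous P := by fun_prop
  have h0 : Sh L 0 = {0} := by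
    ext v
    rw [hL.mem_Sh]
    simp
    rintro rfl
    exact L.zero_mem
  have h := weight14 (theta_hasSum hL hd P hP)
    (fun τ => by
      have := theta_S' hL hd P 14 hPc hP
        (fun τ w => by
          rw [fourier_gs2 hd (bτ_re τ) hpq, fourier_gs_bτ hd]
          have hτ : (τ : ℂ) ≠ 0 := ne_zero τ
          have hpi : (Real.pi : ℂ) ≠ 0 := by exact_mod_cast Real.pi_ne_zero
          have hI := Complex.I_ne_zero
          have h1 : (Real.pi / bτ τ : ℂ) = Complex.I / τ := by
            rw [bτ]
            field_simp
            rw [Complex.I_sq]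
          rw [h1, div_pow, Complex.I_sq]
          simp only [P]
          field_simp) τ
      exact_mod_cast this) (by rw [h0]; simp [P]) 1
  simp only [P] at h
  exact_mod_cast h
end Theta

end PartB4

section PartD
open Module

section ModTwo
variable {E : Type*} [NormedAddCommGroup E] [InnerProductSpace ℝ E]
variable {L : Submodule ℤ E} [FiniteDimensional ℝ E]

theorem EvenUnimod.four_le (hL : EvenUnimod L) (hr : ∀ v ∈ L, ‖v‖ ^ 2 ≠ 2) {v : E} (hv : v ∈ L)
    (h0 : v ≠ 0) : 4 ≤ ‖v‖ ^ 2 := by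
  have h1 := hL.norm_sq_ge hv h0
  have h2 := hr v hv
  obtain ⟨a, ha⟩ := hL.even v hv
  rw [ha] at h1 h2 ⊢
  have h3 : (1:ℝ) ≤ a := by linarith
  have h4 : (1:ℤ) ≤ a := by exact_mod_cast h3
  have h5 : a ≠ 1 := by rintro rfl; simp at h2
  have h6 : (2:ℤ) ≤ a := by omega
  have : (2:ℝ) ≤ a := by exact_mod_cast h6
  linarith

theorem cong_short (hL : EvenUnimod L) (hr : ∀ v ∈ L, ‖v‖ ^ 2 ≠ 2) {u v w : E} (hu : u ∈ L) (hv : v ∈ L)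
    (hw : w ∈ L) (huv : u - v = (2:ℤ) • w) (hu8 : ‖u‖ ^ 2 ≤ 8) (hv8 : ‖v‖ ^ 2 ≤ 8) :
    u = v ∨ u = -v ∨ (‖u‖ ^ 2 = 8 ∧ ‖v‖ ^ 2 = 8 ∧ inner ℝ u v = (0:ℝ)) := by
  by_cases h1 : u = v
  · exact Or.inl h1
  by_cases h2 : u = -v
  · exact Or.inr (Or.inl h2)
  right; right
  have hw0 : w ≠ 0 := by
    rintro rfl
    apply h1
    rw [smul_zero] at huv
    exact sub_eq_zero.1 huv
  have huv' : u + v = (2:ℤ) • (w + v) := by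
    rw [smul_add, ← huv, two_smul ℤ v]; abel
  have hw0' : w + v ≠ 0 := by
    intro h
    apply h2
    rw [h, smul_zero] at huv'
    exact eq_neg_of_add_eq_zero_left huv'
  have h3 := hL.four_le hr hw hw0
  have h4 := hL.four_le hr (L.add_mem hw hv) hw0'
  have e1 : ‖u - v‖ ^ 2 = 4 * ‖w‖ ^ 2 := by
    rw [huv, two_smul, ← two_smul ℝ, norm_smul, mul_pow]; norm_num
  have e2 : ‖u + v‖ ^ 2 = 4 * ‖w + v‖ ^ 2 := by
    rw [huv', two_smul, ← two_smul ℝ, norm_smul, mul_pow]; norm_num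
  have e3 := norm_add_sq_real u v
  have e4 := norm_sub_sq_real u v
  refine ⟨?_, ?_, ?_⟩ <;> linarith

theorem frame_card (hd : finrank ℝ E = 24) (F : Finset E) (h0 : ∀ v ∈ F, v ≠ 0)
    (h : ∀ u ∈ F, ∀ v ∈ F, u = v ∨ u = -v ∨ inner ℝ u v = (0:ℝ)) : F.card ≤ 48 := by
  classical
  let P := F.powerset.filter (fun T => ∀ u ∈ T, ∀ v ∈ T, u ≠ v → inner ℝ u v = (0:ℝ))
  obtain ⟨T, hT, hmax⟩ := P.exists_max_image Finset.card ⟨∅, by simp [P]⟩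
  simp only [P, Finset.mem_filter, Finset.mem_powerset] at hT hmax
  have hcard : T.card ≤ 24 := by
    have hli : LinearIndependent ℝ (fun v : T => (v : E)) :=
      linearIndependent_of_ne_zero_of_inner_eq_zero (fun v => h0 _ (hT.1 v.2))
        (fun u v huv => hT.2 _ u.2 _ v.2 (fun h => huv (Subtype.ext h)))
    have := hli.fintype_card_le_finrank
    rw [hd] at this
    simpa using this
  have hsub : F ⊆ T ∪ T.image (fun v => -v) := by
    intro u hu
    by_contra hcon
    rw [Finset.mem_union, not_or, Finset.mem_image] at hcon
    have horth : ∀ v ∈ T, inner ℝ u v = (0:ℝ) := by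
      intro v hv
      rcases h u hu v (hT.1 hv) with h1 | h1 | h1
      · exact absurd (h1 ▸ hv) hcon.1
      · exact absurd ⟨v, hv, h1.symm⟩ hcon.2
      · exact h1
    have := hmax (insert u T) ⟨Finset.insert_subset hu hT.1, by
      intro a ha b hb hab
      rw [Finset.mem_insert] at ha hb
      rcases ha with rfl | ha <;> rcases hb with rfl | hb
      · exact absurd rfl hab
      · exact horth b hb
      · rw [real_inner_comm]; exact horth a ha
      · exact hT.2 a ha b hb hab⟩
    rw [Finset.card_insert_of_notMem hcon.1] at this
    omega
  calc F.card ≤ _ := Finset.card_le_card hsub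
    _ ≤ T.card + (T.image (fun v => -v)).card := Finset.card_union_le _ _
    _ ≤ T.card + T.card := Nat.add_le_add_left Finset.card_image_le _
    _ ≤ 48 := by omega

variable [MeasurableSpace E] [BorelSpace E]

theorem mod_two (hL : EvenUnimod L) (hd : finrank ℝ E = 24) (hr : ∀ v ∈ L, ‖v‖ ^ 2 ≠ 2)
    {u : E} (hu : u ∈ L) : ∃ u' ∈ L, ‖u'‖ ^ 2 ≤ 8 ∧ ∃ w ∈ L, u - u' = (2:ℤ) • w := by
  classical
  haveI := hL.discrete
  haveI := hL.isZLattice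
  let b := Module.Free.chooseBasis ℤ L
  let ι := Module.Free.ChooseBasisIndex ℤ L
  have hι : Fintype.card ι = 24 := by
    rw [← Module.finrank_eq_card_chooseBasisIndex, ZLattice.rank ℝ L, hd]
  let f : E → (ι → ZMod 2) := fun v => if h : v ∈ L then fun i => ((b.repr ⟨v, h⟩ i : ℤ) : ZMod 2) else 0
  have hf : ∀ u ∈ L, ∀ v ∈ L, f u = f v → ∃ w ∈ L, u - v = (2:ℤ) • w := by
    intro u hu v hv huv
    simp only [f, dif_pos hu, dif_pos hv] at huv
    have h1 : ∀ i, ∃ k : ℤ, b.repr ⟨u, hu⟩ i - b.repr ⟨v, hv⟩ i = 2 * k := by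
      intro i
      have := congrFun huv i
      rw [← sub_eq_zero, ← Int.cast_sub, ZMod.intCast_zmod_eq_zero_iff_dvd] at this
      exact this
    choose k hk using h1
    refine ⟨((∑ i, k i • b i : L) : E), Submodule.coe_mem _, ?_⟩
    have h2 : (⟨u, hu⟩ - ⟨v, hv⟩ : L) = (2:ℤ) • (∑ i, k i • b i) := by
      apply b.repr.injective
      ext i
      rw [map_sub, map_smul, Finsupp.sub_apply, hk, Finsupp.smul_apply, b.repr_sum_self, smul_eq_mul]
    have := congrArg (fun x : L => (x : E)) h2
    simpa using this
  obtain ⟨n2, n3, n4⟩ := shells hL hd hr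
  have hS : ∀ n, ∀ v ∈ Sh L n, v ∈ L ∧ ‖v‖ ^ 2 = 2 * n := fun n v hv => hL.mem_Sh.1 hv
  have hlt : ∀ n, n = 2 ∨ n = 3 → (Sh L n).card ≤ 2 * ((Sh L n).image f).card := by
    intro n hn
    apply Finset.card_le_mul_card_image
    intro c hc
    obtain ⟨v, hv, rfl⟩ := Finset.mem_image.1 hc
    refine (Finset.card_le_card (t := {v, -v}) ?_).trans Finset.card_le_two
    intro x hx
    rw [Finset.mem_filter] at hx
    obtain ⟨w, hw, hxw⟩ := hf x (hS n x hx.1).1 v (hS n v hv).1 hx.2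
    have e1 := (hS n x hx.1).2
    have e2 := (hS n v hv).2
    have hn3 : (n:ℝ) ≤ 3 := by rcases hn with rfl | rfl <;> norm_num
    rcases cong_short hL hr (hS n x hx.1).1 (hS n v hv).1 hw hxw (by linarith) (by linarith) with h | h | h
    · simp [h]
    · simp [h]
    · linarith [h.1]
  have h4 : (Sh L 4).card ≤ 48 * ((Sh L 4).image f).card := by
    apply Finset.card_le_mul_card_image
    intro c hc
    apply frame_card hd
    · intro v hv
      rw [Finset.mem_filter] at hv
      rintro rfl
      have := (hS 4 0 hv.1).2
      norm_num at this
    · intro x hx v hv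
      rw [Finset.mem_filter] at hx hv
      have e1 := (hS 4 x hx.1).2
      have e2 := (hS 4 v hv.1).2
      obtain ⟨w, hw, hxw⟩ := hf x (hS 4 x hx.1).1 v (hS 4 v hv.1).1 (hx.2.trans hv.2.symm)
      push_cast at e1 e2
      rcases cong_short hL hr (hS 4 x hx.1).1 (hS 4 v hv.1).1 hw hxw (by linarith) (by linarith) with h | h | h
      · exact Or.inl h
      · exact Or.inr (Or.inl h)
      · exact Or.inr (Or.inr h.2.2)
  have hdisj : ∀ m n : ℕ, m ≤ 4 → n ≤ 4 → m ≠ n → Disjoint ((Sh L m).image f) ((Sh L n).image f) := by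
    intro m n hm hn hmn
    rw [Finset.disjoint_left]
    intro c hc hc'
    obtain ⟨v, hv, rfl⟩ := Finset.mem_image.1 hc
    obtain ⟨x, hx, hxv⟩ := Finset.mem_image.1 hc'
    obtain ⟨w, hw, hxw⟩ := hf x (hS n x hx).1 v (hS m v hv).1 hxv
    have e1 := (hS n x hx).2
    have e2 := (hS m v hv).2
    have hm' : (m:ℝ) ≤ 4 := by exact_mod_cast hm
    have hn' : (n:ℝ) ≤ 4 := by exact_mod_cast hn
    apply hmn
    have : (m:ℝ) = n := by
      rcases cong_short hL hr (hS n x hx).1 (hS m v hv).1 hw hxw (by linarith) (by linarith) with h | h | h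
      · rw [h] at e1; linarith
      · rw [h, norm_neg] at e1; linarith
      · linarith [h.1, h.2.1]
    exact_mod_cast this
  have h0 : ((Sh L 0).image f).card ≥ 1 := by
    apply Finset.card_pos.2
    refine ⟨f 0, Finset.mem_image_of_mem f (hL.mem_Sh.2 ⟨L.zero_mem, by simp⟩)⟩
  let U := (Sh L 0).image f ∪ ((Sh L 2).image f ∪ ((Sh L 3).image f ∪ (Sh L 4).image f))
  have hU : U.card = ((Sh L 0).image f).card + (((Sh L 2).image f).card + (((Sh L 3).image f).card + ((Sh L 4).image f).card)) := by
    simp only [U]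
    rw [Finset.card_union_of_disjoint, Finset.card_union_of_disjoint, Finset.card_union_of_disjoint]
    · exact hdisj 3 4 (by norm_num) (by norm_num) (by norm_num)
    · rw [Finset.disjoint_union_right]
      exact ⟨hdisj 2 3 (by norm_num) (by norm_num) (by norm_num), hdisj 2 4 (by norm_num) (by norm_num) (by norm_num)⟩
    · rw [Finset.disjoint_union_right, Finset.disjoint_union_right]
      exact ⟨hdisj 0 2 (by norm_num) (by norm_num) (by norm_num), hdisj 0 3 (by norm_num) (by norm_num) (by norm_num), hdisj 0 4 (by norm_num) (by norm_num) (by norm_num)⟩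
  have hcardU : Fintype.card (ι → ZMod 2) ≤ U.card := by
    rw [Fintype.card_fun, hι, ZMod.card, hU]
    have := hlt 2 (Or.inl rfl)
    have := hlt 3 (Or.inr rfl)
    norm_num
    omega
  have hUtop : U = Finset.univ := by
    rw [← Finset.card_eq_iff_eq_univ]
    exact le_antisymm (Finset.card_le_univ U) hcardU
  have hmem : f u ∈ U := by rw [hUtop]; exact Finset.mem_univ _
  have key : ∃ n : ℕ, n ≤ 4 ∧ f u ∈ (Sh L n).image f := by
    simp only [U, Finset.mem_union] at hmem
    rcases hmem with h | h | h | h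
    · exact ⟨0, by norm_num, h⟩
    · exact ⟨2, by norm_num, h⟩
    · exact ⟨3, by norm_num, h⟩
    · exact ⟨4, by norm_num, h⟩
  obtain ⟨n, hn, hmem⟩ := key
  obtain ⟨v, hv, hvu⟩ := Finset.mem_image.1 hmem
  have hn' : (n:ℝ) ≤ 4 := by exact_mod_cast hn
  refine ⟨v, (hS n v hv).1, by linarith [(hS n v hv).2], hf u hu v (hS n v hv).1 hvu.symm⟩

end ModTwo

end PartD

section PartE1
section Height
variable {E : Type*} [NormedAddCommGroup E] [InnerProductSpace ℝ E]

theorem inner_root_cases {v b : E} (hv : ‖v‖ ^ 2 = 2) (hb : ‖b‖ ^ 2 = 2) {k : ℤ}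
    (hk : inner ℝ v b = (k : ℝ)) :
    v = b ∨ v = -b ∨ k = 0 ∨ k = 1 ∨ k = -1 := by
  have e1 := norm_sub_sq_real v b
  have e2 := norm_add_sq_real v b
  rw [hk] at e1 e2
  have h1 : (k : ℝ) ≤ 2 := by nlinarith [sq_nonneg ‖v - b‖]
  have h2 : (-2 : ℝ) ≤ k := by nlinarith [sq_nonneg ‖v + b‖]
  have h3 : k ≤ 2 := by exact_mod_cast h1
  have h4 : -2 ≤ k := by exact_mod_cast h2
  by_cases h5 : k = 2
  · left
    subst h5
    have : ‖v - b‖ ^ 2 = 0 := by rw [e1]; push_cast; linarith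
    have : v - b = 0 := by simpa using this
    exact sub_eq_zero.1 this
  by_cases h6 : k = -2
  · right; left
    subst h6
    have : ‖v + b‖ ^ 2 = 0 := by rw [e2]; push_cast; linarith
    have : v + b = 0 := by simpa using this
    exact eq_neg_of_add_eq_zero_left this
  right; right; omega

/-- The formula for the inner products with the height vector. -/
theorem height_formula (Φ : Finset E) (C : ℝ) (t : E → ℤ) (k0 : ℤ)
    (hn : ∀ v ∈ Φ, ‖v‖ ^ 2 = 2) (hneg : ∀ v ∈ Φ, -v ∈ Φ)
    (h_integ : ∀ v ∈ Φ, ∀ w ∈ Φ, ∃ k : ℤ, inner ℝ v w = (k : ℝ))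
    (hsub : ∀ v ∈ Φ, ∀ b ∈ Φ, inner ℝ v b = (1 : ℝ) → b - v ∈ Φ)
    (hdes : ∀ x : E, ∑ v ∈ Φ, (inner ℝ v x : ℝ) * inner ℝ v x = C * ‖x‖ ^ 2)
    (ht1 : ∀ v ∈ Φ, 1 ≤ t v) (htk : ∀ v ∈ Φ, t v < k0)
    (htn : ∀ v ∈ Φ, t (-v) = k0 - t v)
    (htc : ∀ v ∈ Φ, ∀ b ∈ Φ, inner ℝ v b = (1 : ℝ) → ∃ j : ℤ, t v + t (b - v) - t b = k0 * j)
    (b : E) (hb : b ∈ Φ) :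
    ∃ D : ℕ, ∑ v ∈ Φ, (t v : ℝ) * inner ℝ v b = C * t b - 2 * k0 - k0 * D ∧
      (D ≠ 0 → ∃ v ∈ Φ, b - v ∈ Φ ∧ t v + t (b - v) = t b) ∧ (D ≠ 0 → t b ≠ 1) := by
  classical
  let A := Φ.filter (fun v => inner ℝ v b = (1 : ℝ))
  have hA : ∀ v, v ∈ A ↔ v ∈ Φ ∧ inner ℝ v b = (1:ℝ) := fun v => by simp [A]
  let DD := A.filter (fun v => t v + t (b - v) = t b)
  have hbb : inner ℝ b b = (2:ℝ) := by rw [real_inner_self_eq_norm_sq, hn b hb]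
  have hbn : b ≠ -b := by
    intro h
    have : inner ℝ b b = -(inner ℝ b b : ℝ) := by
      nth_rewrite 1 [h]
      rw [inner_neg_left]
    rw [hbb] at this
    norm_num at this
  have hAneg : ∀ v, v ∈ A → -v ∉ A := by
    intro v hv hv'
    rw [hA] at hv hv'
    rw [inner_neg_left, hv.2] at hv'
    norm_num at hv'
  have hAb : b ∉ A ∧ -b ∉ A := by
    constructor
    · intro h; rw [hA, hbb] at h; norm_num at h
    · intro h; rw [hA, inner_neg_left, hbb] at h; norm_num at h
  have key : ∀ v ∈ Φ, (inner ℝ v b : ℝ) = (if v = b then 2 else 0) - (if v = -b then 2 else 0)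
      + (if v ∈ A then 1 else 0) - (if -v ∈ A then 1 else 0) := by
    intro v hv
    obtain ⟨k, hk⟩ := h_integ v hv b hb
    rcases inner_root_cases (hn v hv) (hn b hb) hk with h | h | h | h | h
    · subst h
      simp [hbn, hAb, hn v hv]
    · subst h
      simp [hbn.symm, hAb, hn b hb]
    · have e1 : v ≠ b := by rintro rfl; rw [hk, h] at hbb; norm_num at hbb
      have e2 : v ≠ -b := by
        rintro rfl; rw [inner_neg_left, hbb, h] at hk; norm_num at hk
      have e3 : v ∉ A := by intro h'; rw [hA, hk, h] at h'; norm_num at h'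
      have e4 : -v ∉ A := by intro h'; rw [hA, inner_neg_left, hk, h] at h'; norm_num at h'
      simp [e1, e2, e3, e4, hk, h]
    · have e1 : v ≠ b := by rintro rfl; rw [hk, h] at hbb; norm_num at hbb
      have e2 : v ≠ -b := by
        rintro rfl; rw [inner_neg_left, hbb, h] at hk; norm_num at hk
      have e3 : v ∈ A := by rw [hA, hk, h]; simpa using hv
      have e4 := hAneg v e3
      simp [e1, e2, e3, e4, hk, h]
    · have e1 : v ≠ b := by rintro rfl; rw [hk, h] at hbb; norm_num at hbb
      have e2 : v ≠ -b := by
        rintro rfl; rw [inner_neg_left, hbb, h] at hk; norm_num at hk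
      have e3 : -v ∈ A := by rw [hA, inner_neg_left, hk, h]; simpa using hneg v hv
      have e4 : v ∉ A := fun h => hAneg v h e3
      simp [e1, e2, e3, e4, hk, h]
  have key2 : ∀ v ∈ Φ, (inner ℝ v b : ℝ) * inner ℝ v b = (if v = b then 4 else 0) + (if v = -b then 4 else 0)
      + (if v ∈ A then 1 else 0) + (if -v ∈ A then 1 else 0) := by
    intro v hv
    rw [key v hv]
    by_cases e1 : v = b
    · subst e1; simp [hbn, hAb]; norm_num
    by_cases e2 : v = -b
    · subst e2; simp [hbn.symm, hAb]; norm_num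
    by_cases e3 : v ∈ A
    · have := hAneg v e3
      simp [e1, e2, e3, this]
    · by_cases e4 : -v ∈ A <;> simp [e1, e2, e3, e4]
  have hre : ∀ g : E → ℝ, ∑ v ∈ Φ, g v = ∑ v ∈ Φ, g (-v) := by
    intro g
    refine Finset.sum_bij' (fun v _ => -v) (fun v _ => -v) hneg hneg (by simp) (by simp) (by simp)
  have hAsub : A ⊆ Φ := Finset.filter_subset _ _
  have hsA : ∀ g : E → ℝ, ∑ v ∈ Φ, g v * (if v ∈ A then 1 else 0) = ∑ v ∈ A, g v := by
    intro g
    simp only [mul_ite, mul_one, mul_zero]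
    rw [← Finset.sum_filter]
    congr 1
    ext v
    simp only [Finset.mem_filter]
    exact ⟨fun h => h.2, fun h => ⟨hAsub h, h⟩⟩
  have hsAn : ∀ g : E → ℝ, ∑ v ∈ Φ, g v * (if -v ∈ A then 1 else 0) = ∑ v ∈ A, g (-v) := by
    intro g
    rw [hre, ← hsA]
    simp
  have hcard : 2 * (A.card : ℝ) = 2 * C - 8 := by
    have h := hdes b
    rw [Finset.sum_congr rfl key2, hn b hb] at h
    simp only [Finset.sum_add_distrib] at h
    have e1 := hsA (fun _ => 1)
    have e2 := hsAn (fun _ => 1)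
    simp only [one_mul] at e1 e2
    rw [e1, e2] at h
    simp [hb, hneg b hb] at h
    linarith
  have hmain : ∑ v ∈ Φ, (t v : ℝ) * inner ℝ v b
      = 4 * t b - 2 * k0 + ∑ v ∈ A, ((t v : ℝ) + t v - k0) := by
    rw [Finset.sum_congr rfl (fun v hv => by rw [key v hv])]
    simp only [mul_add, mul_sub, Finset.sum_add_distrib, Finset.sum_sub_distrib]
    rw [hsA, hsAn]
    have e1 : ∑ v ∈ A, ((t (-v) : ℤ) : ℝ) = ∑ v ∈ A, ((k0 : ℝ) - t v) :=
      Finset.sum_congr rfl (fun v hv => by rw [htn v (hAsub hv)]; push_cast; ring)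
    rw [e1]
    simp [hb, hneg b hb, htn b hb]
    ring
  have hinvA : ∀ v ∈ A, b - v ∈ A := by
    intro v hv
    rw [hA] at hv ⊢
    refine ⟨hsub v hv.1 b hb hv.2, ?_⟩
    rw [inner_sub_left, hbb, hv.2]; norm_num
  have hinv : ∑ v ∈ A, (t v : ℝ) = ∑ v ∈ A, (t (b - v) : ℝ) :=
    Finset.sum_bij' (fun v _ => b - v) (fun v _ => b - v) hinvA hinvA (by simp) (by simp) (by simp)
  have hval : ∀ v ∈ A, (t v : ℝ) + t (b - v) - k0 = t b - k0 * (if t v + t (b - v) = t b then 1 else 0) := by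
    intro v hv
    have hv' := (hA v).1 hv
    have hw := (hA _).1 (hinvA v hv)
    obtain ⟨j, hj⟩ := htc v hv'.1 b hb hv'.2
    have a1 := ht1 v hv'.1
    have a2 := htk v hv'.1
    have a3 := ht1 _ hw.1
    have a4 := htk _ hw.1
    have a5 := ht1 b hb
    have a6 := htk b hb
    have hj0 : -1 < j := by nlinarith
    have hj2 : j < 2 := by nlinarith
    have hj3 : j = 0 ∨ j = 1 := by omega
    rcases hj3 with rfl | rfl
    · have e : t v + t (b - v) = t b := by linarith
      have e' : (t v : ℝ) + t (b - v) = t b := by exact_mod_cast e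
      rw [if_pos e]; linarith
    · have e : t v + t (b - v) = t b + k0 := by linarith
      have e' : (t v : ℝ) + t (b - v) = t b + k0 := by exact_mod_cast e
      rw [if_neg (by omega)]; linarith
  refine ⟨DD.card, ?_, ?_, ?_⟩
  · rw [hmain]
    have : ∑ v ∈ A, ((t v : ℝ) + t v - k0) = ∑ v ∈ A, ((t v : ℝ) + t (b - v) - k0) := by
      simp only [Finset.sum_add_distrib, Finset.sum_sub_distrib]
      rw [← hinv]
    rw [this, Finset.sum_congr rfl hval]
    simp only [Finset.sum_sub_distrib, ← Finset.mul_sum]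
    simp only [Finset.sum_boole, Finset.sum_const, nsmul_eq_mul]
    have : (A.card : ℝ) = C - 4 := by linarith
    rw [this]
    simp only [DD]
    ring
  · intro h
    obtain ⟨v, hv⟩ := Finset.card_ne_zero.1 h
    rw [Finset.mem_filter] at hv
    exact ⟨v, hAsub hv.1, hAsub (hinvA v hv.1), hv.2⟩
  · intro h
    obtain ⟨v, hv⟩ := Finset.card_ne_zero.1 h
    rw [Finset.mem_filter] at hv
    have := ht1 v (hAsub hv.1)
    have := ht1 _ (hAsub (hinvA v hv.1))
    omega

theorem height_contra (Φ : Finset E) (C : ℝ) (t : E → ℤ) (k0 : ℤ)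
    (hn : ∀ v ∈ Φ, ‖v‖ ^ 2 = 2) (hneg : ∀ v ∈ Φ, -v ∈ Φ)
    (h_integ : ∀ v ∈ Φ, ∀ w ∈ Φ, ∃ k : ℤ, inner ℝ v w = (k : ℝ))
    (hsub : ∀ v ∈ Φ, ∀ b ∈ Φ, inner ℝ v b = (1 : ℝ) → b - v ∈ Φ)
    (hdes : ∀ x : E, ∑ v ∈ Φ, (inner ℝ v x : ℝ) * inner ℝ v x = C * ‖x‖ ^ 2)
    (ht1 : ∀ v ∈ Φ, 1 ≤ t v) (htk : ∀ v ∈ Φ, t v < k0)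
    (htn : ∀ v ∈ Φ, t (-v) = k0 - t v)
    (htc : ∀ v ∈ Φ, ∀ b ∈ Φ, inner ℝ v b = (1 : ℝ) → ∃ j : ℤ, t v + t (b - v) - t b = k0 * j)
    (y : E) (hy0 : y ≠ 0) (hy : ∀ b ∈ Φ, t b = 1 → (inner ℝ b y : ℝ) ≤ 0)
    (S : Finset E) (c : E → ℝ) (hS : ∀ b ∈ S, b ∈ Φ ∧ t b = 1) (hc : ∑ b ∈ S, c b ≠ 0)
    (hrel : ∑ b ∈ S, c b • b = 0) : False := by
  have hF := height_formula Φ C t k0 hn hneg h_integ hsub hdes ht1 htk htn htc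
  set T : E := ∑ v ∈ Φ, (t v : ℝ) • v with hT
  have hTi : ∀ b, ∑ v ∈ Φ, (t v : ℝ) * inner ℝ v b = inner ℝ T b := by
    intro b
    rw [hT, sum_inner]
    exact Finset.sum_congr rfl (fun v _ => by rw [inner_smul_left]; simp)
  simp only [hTi] at hF
  have hSne : ∃ b, b ∈ S := by
    by_contra h
    push Not at h
    apply hc
    rw [Finset.eq_empty_of_forall_notMem h]; simp
  have hC : C = 2 * k0 := by
    have h1 : inner ℝ T (∑ b ∈ S, c b • b) = (∑ b ∈ S, c b) * (C - 2 * k0) := by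
      rw [inner_sum, Finset.sum_mul]
      refine Finset.sum_congr rfl (fun b hb => ?_)
      obtain ⟨D, hD, _, hD2⟩ := hF b (hS b hb).1
      have : D = 0 := by
        by_contra h
        exact hD2 h (hS b hb).2
      rw [inner_smul_right, hD, (hS b hb).2, this]
      simp
    rw [hrel, inner_zero_right] at h1
    rcases mul_eq_zero.1 h1.symm with h | h
    · exact absurd h hc
    · linarith
  obtain ⟨b0, hb0⟩ := hSne
  have hk0 : (0:ℝ) < k0 := by
    have := ht1 b0 (hS b0 hb0).1
    have := htk b0 (hS b0 hb0).1
    exact_mod_cast (by omega : (0:ℤ) < k0)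
  have hpos : ∀ n : ℕ, ∀ b ∈ Φ, (t b).toNat ≤ n → 0 ≤ (inner ℝ T b : ℝ) := by
    intro n
    induction n with
    | zero =>
      intro b hb h
      have := ht1 b hb
      omega
    | succ n ih =>
      intro b hb h
      obtain ⟨D, hD, hD1, _⟩ := hF b hb
      have hb1 := ht1 b hb
      by_cases hD0 : D = 0
      · rw [hD, hD0, hC]
        have : (1:ℝ) ≤ t b := by exact_mod_cast hb1
        push_cast
        nlinarith
      · obtain ⟨v, hv, hbv, hs⟩ := hD1 hD0
        have a1 := ht1 v hv
        have a2 := ht1 _ hbv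
        have e1 := ih v hv (by omega)
        have e2 := ih _ hbv (by omega)
        rw [inner_sub_right] at e2
        linarith
  have hzero : ∀ b ∈ Φ, (inner ℝ T b : ℝ) = 0 := by
    intro b hb
    have h1 := hpos _ b hb le_rfl
    have h2 := hpos _ (-b) (hneg b hb) le_rfl
    rw [inner_neg_right] at h2
    linarith
  have hyle : ∀ n : ℕ, ∀ b ∈ Φ, (t b).toNat ≤ n → (inner ℝ b y : ℝ) ≤ 0 := by
    intro n
    induction n with
    | zero =>
      intro b hb h
      have := ht1 b hb
      omega
    | succ n ih =>
      intro b hb h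
      obtain ⟨D, hD, hD1, _⟩ := hF b hb
      have hb1 := ht1 b hb
      by_cases hD0 : D = 0
      · apply hy b hb
        rw [hzero b hb, hD0, hC] at hD
        have h3 : (k0:ℝ) * ((t b : ℝ) - 1) = 0 := by push_cast at hD; linarith
        rcases mul_eq_zero.1 h3 with h | h
        · linarith
        · have : (t b : ℝ) = 1 := by linarith
          exact_mod_cast this
      · obtain ⟨v, hv, hbv, hs⟩ := hD1 hD0
        have a1 := ht1 v hv
        have a2 := ht1 _ hbv
        have e1 := ih v hv (by omega)
        have e2 := ih _ hbv (by omega)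
        rw [inner_sub_left] at e2
        linarith
  have hyz : ∀ b ∈ Φ, (inner ℝ b y : ℝ) = 0 := by
    intro b hb
    have h1 := hyle _ b hb le_rfl
    have h2 := hyle _ (-b) (hneg b hb) le_rfl
    rw [inner_neg_left] at h2
    linarith
  have h := hdes y
  rw [Finset.sum_eq_zero (fun v hv => by rw [hyz v hv, mul_zero]), hC] at h
  have : 0 < ‖y‖ ^ 2 := by positivity
  nlinarith [mul_pos hk0 this]

end Height

end PartE1

section PartE2
open Module

section Neighbour
variable {E : Type*} [NormedAddCommGroup E] [InnerProductSpace ℝ E]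
variable {L : Submodule ℤ E} [FiniteDimensional ℝ E]

/-- The lattice obtained from `L` by a deep point `c0`. -/
def Nb (L : Submodule ℤ E) (c0 : E) : Submodule ℤ E where
  carrier := {y | ∃ x ∈ L, ∃ a : ℤ, y = x - a • c0 ∧ ∃ j : ℤ, inner ℝ x c0 - a * (‖c0‖ ^ 2 / 2) = (j : ℝ)}
  zero_mem' := ⟨0, L.zero_mem, 0, by simp, 0, by simp⟩
  add_mem' := by
    rintro _ _ ⟨x, hx, a, rfl, j, hj⟩ ⟨x', hx', a', rfl, j', hj'⟩
    refine ⟨x + x', L.add_mem hx hx', a + a', by rw [add_smul]; abel, j + j', ?_⟩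
    rw [inner_add_left]
    push_cast
    linarith
  smul_mem' := by
    rintro n _ ⟨x, hx, a, rfl, j, hj⟩
    refine ⟨n • x, L.smul_mem n hx, n * a, by rw [smul_sub, smul_smul], n * j, ?_⟩
    rw [← Int.cast_smul_eq_zsmul ℝ n x, inner_smul_left]
    push_cast
    rw [← hj]
    simp
    ring

theorem mem_Nb {c0 y : E} : y ∈ Nb L c0 ↔
    ∃ x ∈ L, ∃ a : ℤ, y = x - a • c0 ∧ ∃ j : ℤ, inner ℝ x c0 - a * (‖c0‖ ^ 2 / 2) = (j : ℝ) := Iff.rfl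

theorem Nb_unimod (hL : EvenUnimod L) {c0 : E} {k : ℕ} (hk : k ≠ 0) (hkc : (k : ℤ) • c0 ∈ L)
    (hkq : ∃ j : ℤ, (k : ℝ) * (‖c0‖ ^ 2 / 2) = j) : EvenUnimod (Nb L c0) := by
  obtain ⟨jk, hjk⟩ := hkq
  constructor
  · rintro _ ⟨x, hx, a, rfl, j, hj⟩
    obtain ⟨e, he⟩ := hL.even x hx
    refine ⟨e - a * j, ?_⟩
    rw [norm_sub_sq_real, ← Int.cast_smul_eq_zsmul ℝ a c0, inner_smul_right, norm_smul, mul_pow, he]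
    push_cast
    rw [← hj]
    simp
    ring
  · intro y hy
    have hkr : (k : ℝ) ≠ 0 := by exact_mod_cast hk
    -- the integral functional
    have hψ : ∀ x ∈ L, ∃ n : ℤ, (k : ℝ) * inner ℝ x c0 = n := by
      intro x hx
      obtain ⟨n, hn⟩ := hL.inner_int hx hkc
      refine ⟨n, ?_⟩
      rw [← hn, ← Int.cast_smul_eq_zsmul ℝ, inner_smul_right]
      simp
    let ψ : ℤ → E → ℤ → Prop := fun n x a => (n : ℝ) = k * (inner ℝ x c0 - a * (‖c0‖ ^ 2 / 2))
    let I : AddSubgroup ℤ :=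
      { carrier := {n | ∃ x ∈ L, ∃ a j : ℤ, ψ (n + k * j) x a}
        zero_mem' := ⟨0, L.zero_mem, 0, 0, by simp [ψ]⟩
        add_mem' := by
          rintro n n' ⟨x, hx, a, j, h⟩ ⟨x', hx', a', j', h'⟩
          refine ⟨x + x', L.add_mem hx hx', a + a', j + j', ?_⟩
          simp only [ψ] at h h' ⊢
          rw [inner_add_left]
          push_cast at h h' ⊢
          linear_combination h + h'
        neg_mem' := by
          rintro n ⟨x, hx, a, j, h⟩
          refine ⟨-x, L.neg_mem hx, -a, -j, ?_⟩
          simp only [ψ] at h ⊢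
          rw [inner_neg_left]
          push_cast at h ⊢
          linear_combination -h }
    obtain ⟨g, hg⟩ := Int.subgroup_cyclic I
    have hgI : g ∈ I := by rw [hg]; exact AddSubgroup.mem_closure_singleton_self g
    have hkI : (k : ℤ) ∈ I := ⟨0, L.zero_mem, 0, -1, by simp [ψ]⟩
    have hI : ∀ n ∈ I, ∃ m : ℤ, n = m * g := by
      intro n hn
      rw [hg, AddSubgroup.mem_closure_singleton] at hn
      obtain ⟨m, hm⟩ := hn
      exact ⟨m, by rw [← hm]; simp⟩
    obtain ⟨h, hh⟩ := hI k hkI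
    obtain ⟨x1, hx1, a1, j1, hψ1⟩ := hgI
    have hh' : (k : ℝ) = h * g := by exact_mod_cast hh
    have hh0 : (h : ℝ) ≠ 0 := by
      intro h0; rw [h0] at hh'; simp at hh'; exact hk hh'
    have hg0 : (g : ℝ) ≠ 0 := by
      intro h0; rw [h0] at hh'; simp at hh'; exact hk hh'
    simp only [ψ] at hψ1
    push_cast at hψ1
    have hF : ∀ x ∈ L, ∀ a : ℤ, (∃ j : ℤ, inner ℝ x c0 - a * (‖c0‖ ^ 2 / 2) = (j : ℝ)) →
        ∃ n : ℤ, (inner ℝ y x : ℝ) - a * inner ℝ y c0 = n := by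
      intro x hx a hj
      obtain ⟨n, hn⟩ := hy _ (mem_Nb.2 ⟨x, hx, a, rfl, hj⟩)
      refine ⟨n, ?_⟩
      rw [← hn, inner_sub_right, ← Int.cast_smul_eq_zsmul ℝ a c0, inner_smul_right]
    obtain ⟨e, he⟩ : ∃ e : ℤ, h * ((inner ℝ y x1 : ℝ) - a1 * inner ℝ y c0) = e := by
      obtain ⟨n, hn⟩ := hF (h • x1) (L.smul_mem h hx1) (h * a1) ⟨1 + h * j1, by
        rw [← Int.cast_smul_eq_zsmul ℝ h x1, inner_smul_left]
        push_cast
        simp only [conj_trivial]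
        apply mul_left_cancel₀ hkr
        linear_combination (-h) * hψ1 - hh'⟩
      refine ⟨n, ?_⟩
      rw [← hn, ← Int.cast_smul_eq_zsmul ℝ h x1, inner_smul_right]
      push_cast
      ring
    have hext : ∀ x ∈ L, ∀ a : ℤ, ∃ n : ℤ, (inner ℝ y x : ℝ) - a * inner ℝ y c0
        - e * (inner ℝ x c0 - a * (‖c0‖ ^ 2 / 2)) = n := by
      intro x hx a
      obtain ⟨i, hi⟩ := hψ x hx
      have hm : i - a * jk ∈ I := ⟨x, hx, a, 0, by
        simp only [ψ]
        push_cast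
        rw [← hi, ← hjk]
        ring⟩
      obtain ⟨m, hm⟩ := hI _ hm
      have hm' : (i : ℝ) - a * jk = m * g := by exact_mod_cast hm
      obtain ⟨n, hn⟩ := hF (x - m • x1) (L.sub_mem hx (L.smul_mem m hx1)) (a - m * a1) ⟨- m * j1, by
        rw [inner_sub_left, ← Int.cast_smul_eq_zsmul ℝ m x1, inner_smul_left]
        push_cast
        simp only [conj_trivial]
        apply mul_left_cancel₀ hkr
        linear_combination hi - a * hjk + m * hψ1 + hm'⟩
      refine ⟨n, ?_⟩
      rw [inner_sub_right, ← Int.cast_smul_eq_zsmul ℝ m x1, inner_smul_right] at hn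
      push_cast at hn
      rw [← hn]
      -- `e (⟨x,c0⟩ - a q) = m f`
      have hgoal : (e : ℝ) * (inner ℝ x c0 - a * (‖c0‖ ^ 2 / 2))
          = m * ((inner ℝ y x1 : ℝ) - a1 * inner ℝ y c0) := by
        apply mul_left_cancel₀ hkr
        linear_combination (e : ℝ) * hi - (e : ℝ) * a * hjk + (e : ℝ) * hm' - m * g * he
          - m * ((inner ℝ y x1 : ℝ) - a1 * inner ℝ y c0) * hh'
      linear_combination -hgoal
    have hx' : y - e • c0 ∈ L := by
      apply hL.dual
      intro v hv
      obtain ⟨n, hn⟩ := hext v hv 0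
      refine ⟨n, ?_⟩
      rw [← hn, inner_sub_left, ← Int.cast_smul_eq_zsmul ℝ e c0, inner_smul_left, real_inner_comm v c0]
      simp
    refine mem_Nb.2 ⟨y - e • c0, hx', -e, by rw [neg_smul]; abel, ?_⟩
    obtain ⟨n, hn⟩ := hext 0 L.zero_mem (-1)
    refine ⟨n, ?_⟩
    rw [← hn, inner_sub_left, ← Int.cast_smul_eq_zsmul ℝ e c0, inner_smul_left, real_inner_self_eq_norm_sq]
    simp
    ring

variable [MeasurableSpace E] [BorelSpace E]

theorem design' (hL : EvenUnimod L) (hd : finrank ℝ E = 24) :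
    ∃ C : ℝ, ∀ x : E, ∑ v ∈ Sh L 1, (inner ℝ v x : ℝ) * inner ℝ v x = C * ‖x‖ ^ 2 := by
  haveI : Nontrivial E := Module.nontrivial_of_finrank_pos (R := ℝ) (by rw [hd]; norm_num)
  obtain ⟨e, he⟩ := exists_norm_eq E (zero_le_one)
  refine ⟨∑ v ∈ Sh L 1, (inner ℝ v e : ℝ) * inner ℝ v e, fun x => ?_⟩
  have h := design hL hd (p := x + ‖x‖ • e) (q := x - ‖x‖ • e) (by
    rw [inner_add_left, inner_sub_right, inner_sub_right, inner_smul_left, inner_smul_left, inner_smul_right,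
      inner_smul_right, real_inner_self_eq_norm_sq, real_inner_self_eq_norm_sq, he, real_inner_comm x e]
    simp
    ring)
  rw [Finset.sum_mul, ← sub_eq_zero, ← Finset.sum_sub_distrib, ← h]
  refine Finset.sum_congr rfl (fun v _ => ?_)
  rw [inner_add_left, inner_sub_left, inner_smul_left, real_inner_comm x v, real_inner_comm e v]
  simp
  ring

theorem deep_contra (hL : EvenUnimod L) (hd : finrank ℝ E = 24) (hr : ∀ v ∈ L, ‖v‖ ^ 2 ≠ 2)
    (p : E) (R2 : ℝ) (hR : 2 < R2) (hmin : ∀ v ∈ L, R2 ≤ ‖p - v‖ ^ 2) (S : Finset E) (c : E → ℕ)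
    (hS : ∀ v ∈ S, v ∈ L ∧ ‖p - v‖ ^ 2 = R2) (c0 : E) (hk : ∑ v ∈ S, c v ≠ 0)
    (hc0 : ∑ v ∈ S, (c v : ℝ) • v = ((∑ v ∈ S, c v : ℕ) : ℝ) • c0)
    (h2 : ∀ v ∈ S, ‖v - c0‖ ^ 2 = 2) : False := by
  classical
  set k := ∑ v ∈ S, c v with hkdef
  have hkr : (k : ℝ) ≠ 0 := by exact_mod_cast hk
  have hks : ∑ v ∈ S, (c v : ℝ) = k := by rw [hkdef]; push_cast; rfl
  have hrel0 : ∑ v ∈ S, (c v : ℝ) • (v - c0) = 0 := by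
    simp only [smul_sub, Finset.sum_sub_distrib]
    rw [hc0, ← Finset.sum_smul, hks, sub_self]
  have hkc : (k : ℤ) • c0 ∈ L := by
    have : (k : ℤ) • c0 = ∑ v ∈ S, (c v : ℤ) • v := by
      rw [← Int.cast_smul_eq_zsmul ℝ, Int.cast_natCast, ← hc0]
      refine Finset.sum_congr rfl (fun v _ => ?_)
      rw [← Int.cast_smul_eq_zsmul ℝ, Int.cast_natCast]
    rw [this]
    exact L.sum_mem (fun v hv => L.smul_mem _ (hS v hv).1)
  have hevS : ∀ v ∈ S, ‖v‖ ^ 2 = 2 * hn v := fun v hv => hL.hn_spec (hS v hv).1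
  have hkq : ∃ j : ℤ, (k : ℝ) * (‖c0‖ ^ 2 / 2) = j := by
    refine ⟨∑ v ∈ S, (c v * hn v : ℤ) - k, ?_⟩
    have e1 : ∑ v ∈ S, (c v : ℝ) * inner ℝ v c0 = k * ‖c0‖ ^ 2 := by
      have : inner ℝ (∑ v ∈ S, (c v : ℝ) • v) c0 = k * ‖c0‖ ^ 2 := by
        rw [hc0, inner_smul_left, real_inner_self_eq_norm_sq]; simp
      rw [← this, sum_inner]
      refine Finset.sum_congr rfl (fun v _ => ?_)
      rw [inner_smul_left]; simp
    have e2 : ∑ v ∈ S, (c v : ℝ) * ‖v - c0‖ ^ 2 = k * 2 := by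
      rw [← hks, Finset.sum_mul]
      exact Finset.sum_congr rfl (fun v hv => by rw [h2 v hv])
    have e3 : ∑ v ∈ S, (c v : ℝ) * ‖v - c0‖ ^ 2 = 2 * ∑ v ∈ S, (c v : ℝ) * hn v
        - 2 * ∑ v ∈ S, (c v : ℝ) * inner ℝ v c0 + k * ‖c0‖ ^ 2 := by
      rw [Finset.mul_sum, Finset.mul_sum, ← hks, Finset.sum_mul, ← Finset.sum_sub_distrib, ← Finset.sum_add_distrib]
      refine Finset.sum_congr rfl (fun v hv => ?_)
      rw [norm_sub_sq_real, hevS v hv]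
      ring
    push_cast
    linarith
  have hN := Nb_unimod hL hk hkc hkq
  obtain ⟨C, hC⟩ := design' hN hd
  have hΦ : ∀ v, v ∈ Sh (Nb L c0) 1 ↔ v ∈ Nb L c0 ∧ ‖v‖ ^ 2 = 2 := by
    intro v; rw [hN.mem_Sh]; simp
  -- the period of the height
  let I : AddSubgroup ℤ :=
    { carrier := {h | h • c0 ∈ L ∧ ∃ j : ℤ, (h : ℝ) * (‖c0‖ ^ 2 / 2) = j}
      zero_mem' := ⟨by simp, 0, by simp⟩
      add_mem' := by
        rintro a b ⟨ha, j, hj⟩ ⟨hb, j', hj'⟩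
        refine ⟨by rw [add_smul]; exact L.add_mem ha hb, j + j', ?_⟩
        push_cast; linarith
      neg_mem' := by
        rintro a ⟨ha, j, hj⟩
        refine ⟨by rw [neg_smul]; exact L.neg_mem ha, -j, ?_⟩
        push_cast; linarith }
  have hkI : (k : ℤ) ∈ I := ⟨hkc, by simpa using hkq⟩
  obtain ⟨k0, hk0pos, hk0⟩ : ∃ k0 : ℤ, 0 < k0 ∧ ∀ n, n ∈ I ↔ k0 ∣ n := by
    obtain ⟨g, hg⟩ := Int.subgroup_cyclic I
    have h1 : ∀ n, n ∈ I ↔ g ∣ n := by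
      intro n
      rw [hg, AddSubgroup.mem_closure_singleton]
      constructor
      · rintro ⟨m, hm⟩; exact ⟨m, by rw [← hm]; simp [mul_comm]⟩
      · rintro ⟨m, hm⟩; exact ⟨m, by rw [hm]; simp [mul_comm]⟩
    refine ⟨|g|, ?_, fun n => by rw [h1, abs_dvd]⟩
    rw [abs_pos]
    rintro rfl
    have := (h1 k).1 hkI
    rw [zero_dvd_iff] at this
    exact hk (by exact_mod_cast this)
  let Rep : E → ℤ → Prop := fun v a => ∃ x ∈ L, v = x - a • c0 ∧
    ∃ j : ℤ, inner ℝ x c0 - a * (‖c0‖ ^ 2 / 2) = (j : ℝ)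
  have hex : ∀ v, ∃ a : ℤ, v ∈ Nb L c0 → Rep v a := by
    intro v
    by_cases hv : v ∈ Nb L c0
    · obtain ⟨x, hx, a, h⟩ := mem_Nb.1 hv
      exact ⟨a, fun _ => ⟨x, hx, h⟩⟩
    · exact ⟨0, fun h => absurd h hv⟩
  choose α hα using hex
  have huniq : ∀ v a a', Rep v a → Rep v a' → k0 ∣ a - a' := by
    rintro v a a' ⟨x, hx, h1, j, hj⟩ ⟨x', hx', h1', j', hj'⟩
    rw [← hk0]
    have e : (a - a') • c0 = x - x' := by
      have h3 := h1.symm.trans h1'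
      rw [sub_smul, ← sub_eq_zero]
      rw [← sub_eq_zero, ← neg_eq_zero] at h3
      rw [← h3]; abel
    refine ⟨by rw [e]; exact L.sub_mem hx hx', j - j', ?_⟩
    have e' : inner ℝ ((a - a') • c0) c0 = inner ℝ (x - x') c0 := by rw [e]
    rw [← Int.cast_smul_eq_zsmul ℝ, inner_smul_left, inner_sub_left, real_inner_self_eq_norm_sq] at e'
    push_cast at e' ⊢
    simp at e'
    linarith
  have haddR : ∀ v w a a', Rep v a → Rep w a' → Rep (v + w) (a + a') := by
    rintro v w a a' ⟨x, hx, h1, j, hj⟩ ⟨x', hx', h1', j', hj'⟩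
    refine ⟨x + x', L.add_mem hx hx', by rw [h1, h1', add_smul]; abel, j + j', ?_⟩
    rw [inner_add_left]; push_cast; linarith
  let t : E → ℤ := fun v => α v % k0
  have htmod : ∀ v, k0 ∣ α v - t v := fun v => Int.dvd_self_sub_emod
  have hnz : ∀ v ∈ Nb L c0, ‖v‖ ^ 2 = 2 → ¬ k0 ∣ α v := by
    intro v hv h2 hdvd
    obtain ⟨x, hx, h1, _⟩ := hα v hv
    have : α v ∈ I := (hk0 _).2 hdvd
    refine hr v ?_ h2
    rw [h1]
    exact L.sub_mem hx this.1
  have ht1 : ∀ v ∈ Sh (Nb L c0) 1, 1 ≤ t v := by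
    intro v hv
    rw [hΦ] at hv
    have h1 := hnz v hv.1 hv.2
    have h3 : 0 ≤ t v := Int.emod_nonneg _ hk0pos.ne'
    have h4 : t v ≠ 0 := fun h => h1 (Int.dvd_of_emod_eq_zero h)
    omega
  have htk : ∀ v ∈ Sh (Nb L c0) 1, t v < k0 := fun v _ => Int.emod_lt_of_pos _ hk0pos
  have hone : ∀ v ∈ S, v - c0 ∈ Sh (Nb L c0) 1 ∧ t (v - c0) = 1 := by
    intro v hv
    have hrep : Rep (v - c0) 1 := by
      refine ⟨v, (hS v hv).1, by simp, hn v - 1, ?_⟩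
      have := h2 v hv
      rw [norm_sub_sq_real, hevS v hv] at this
      push_cast; linarith
    have hmem : v - c0 ∈ Nb L c0 := by
      obtain ⟨x, hx, h⟩ := hrep
      exact mem_Nb.2 ⟨x, hx, 1, h⟩
    have hsh := (hΦ (v - c0)).2 ⟨hmem, h2 v hv⟩
    refine ⟨hsh, ?_⟩
    have h1 := huniq _ _ _ (hα _ hmem) hrep
    have h3 := ht1 _ hsh
    have h4 := htk _ hsh
    have h5 : k0 ∣ t (v - c0) - 1 := by
      have := Int.dvd_sub h1 (htmod (v - c0))
      simpa using this
    have := Int.eq_zero_of_dvd_of_nonneg_of_lt (by omega) (by omega) h5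
    omega
  have hinj : ∀ v w : E, v - c0 = w - c0 → v = w := fun v w h => by simpa using h
  have hy2 : ‖p - c0‖ ^ 2 = R2 - 2 := by
    have e1 : ∑ v ∈ S, (c v : ℝ) * inner ℝ (p - c0) (v - c0) = 0 := by
      have : inner ℝ (p - c0) (∑ v ∈ S, (c v : ℝ) • (v - c0)) = (0:ℝ) := by rw [hrel0, inner_zero_right]
      rw [← this, inner_sum]
      refine Finset.sum_congr rfl (fun v _ => ?_)
      rw [inner_smul_right]
    have e2 : ∑ v ∈ S, (c v : ℝ) * (‖p - c0‖ ^ 2 + 2 - R2) = 2 * ∑ v ∈ S, (c v : ℝ) * inner ℝ (p - c0) (v - c0) := by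
      rw [Finset.mul_sum]
      refine Finset.sum_congr rfl (fun v hv => ?_)
      have h3 : p - v = (p - c0) - (v - c0) := by abel
      have h4 := (hS v hv).2
      rw [h3, norm_sub_sq_real, h2 v hv] at h4
      rw [← h4]; ring
    rw [e1, ← Finset.sum_mul, hks, mul_zero] at e2
    rcases mul_eq_zero.1 e2 with h | h
    · exact absurd h hkr
    · linarith
  refine height_contra (Sh (Nb L c0) 1) C t k0 (fun v hv => ((hΦ v).1 hv).2) ?_ ?_ ?_ hC ht1 htk ?_ ?_
    (p - c0) ?_ ?_ (S.image (fun v => v - c0)) (fun b => (c (b + c0) : ℝ)) ?_ ?_ ?_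
  · intro v hv
    rw [hΦ] at hv ⊢
    exact ⟨(Nb L c0).neg_mem hv.1, by rw [norm_neg]; exact hv.2⟩
  · intro v hv w hw
    exact hN.inner_int ((hΦ v).1 hv).1 ((hΦ w).1 hw).1
  · intro v hv b hb h1
    rw [hΦ] at hv hb ⊢
    refine ⟨(Nb L c0).sub_mem hb.1 hv.1, ?_⟩
    rw [norm_sub_sq_real, real_inner_comm, h1, hv.2, hb.2]; norm_num
  · intro v hv
    have hv' := (hΦ v).1 hv
    have hnv : -v ∈ Sh (Nb L c0) 1 := (hΦ _).2 ⟨(Nb L c0).neg_mem hv'.1, by rw [norm_neg]; exact hv'.2⟩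
    have h1 := haddR _ _ _ _ (hα v hv'.1) (hα (-v) ((Nb L c0).neg_mem hv'.1))
    rw [add_neg_cancel] at h1
    have h3 := huniq _ _ 0 h1 ⟨0, L.zero_mem, by simp, 0, by simp⟩
    have h4 : k0 ∣ (t v + t (-v)) := by
      have := Int.dvd_sub (Int.dvd_sub h3 (htmod v)) (htmod (-v))
      ring_nf at this ⊢
      exact this
    have a1 := ht1 v hv
    have a2 := ht1 _ hnv
    have a3 := htk v hv
    have a4 := htk _ hnv
    have h5 : k0 ∣ (t v + t (-v)) - k0 := Int.dvd_sub h4 (dvd_refl _)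
    rcases le_or_gt 0 (t v + t (-v) - k0) with h | h
    · have := Int.eq_zero_of_dvd_of_nonneg_of_lt h (by omega) h5
      omega
    · have h6 := Int.eq_zero_of_dvd_of_nonneg_of_lt (by omega) (by omega) h4
      omega
  · intro v hv b hb h1
    have hv' := (hΦ v).1 hv
    have hb' := (hΦ b).1 hb
    have hbv := (Nb L c0).sub_mem hb'.1 hv'.1
    have h1 := haddR _ _ _ _ (hα v hv'.1) (hα (b - v) hbv)
    rw [add_sub_cancel] at h1
    have h3 := huniq _ _ _ h1 (hα b hb'.1)
    have : k0 ∣ t v + t (b - v) - t b := by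
      have := Int.dvd_add (Int.dvd_sub (Int.dvd_sub h3 (htmod v)) (htmod (b - v))) (htmod b)
      ring_nf at this ⊢
      exact this
    exact this
  · intro h
    rw [h] at hy2
    simp at hy2
    linarith
  · intro b hb h1
    have hb' := (hΦ b).1 hb
    obtain ⟨x, hx, hbx, _⟩ := hα b hb'.1
    have hI : α b - 1 ∈ I := by rw [hk0, ← h1]; exact htmod b
    have hx' : x - (α b - 1) • c0 ∈ L := L.sub_mem hx hI.1
    have hb2 : x - (α b - 1) • c0 = b + c0 := by
      rw [sub_smul, one_smul]; nth_rewrite 2 [hbx]; abel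
    have h3 := hmin _ hx'
    have h4 : p - (x - (α b - 1) • c0) = (p - c0) - b := by rw [hb2]; abel
    rw [h4, norm_sub_sq_real, hy2, hb'.2, real_inner_comm] at h3
    linarith
  · intro b hb
    obtain ⟨v, hv, rfl⟩ := Finset.mem_image.1 hb
    exact hone v hv
  · rw [Finset.sum_image (fun v _ w _ h => hinj v w h)]
    simp only [sub_add_cancel]
    rw [hks]; exact hkr
  · rw [Finset.sum_image (fun v _ w _ h => hinj v w h)]
    simp only [sub_add_cancel]
    exact hrel0
end Neighbour

end PartE2

section PartE3
open Module Filter Topology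

section Covering
variable {E : Type*} [NormedAddCommGroup E] [InnerProductSpace ℝ E]
variable {L : Submodule ℤ E} [FiniteDimensional ℝ E]

theorem EvenUnimod.isClosed (hL : EvenUnimod L) : IsClosed (L : Set E) := by
  haveI : DiscreteTopology L.toAddSubgroup := hL.discrete
  exact AddSubgroup.isClosed_of_discrete (H := L.toAddSubgroup)

theorem EvenUnimod.exists_deep (hL : EvenUnimod L) :
    ∃ p : E, ∀ q : E, Metric.infDist q (L : Set E) ≤ Metric.infDist p (L : Set E) := by
  haveI := hL.discrete
  haveI := hL.isZLattice
  let b0 := Module.Free.chooseBasis ℤ L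
  let b := b0.ofZLatticeBasis ℝ L
  have hspan : Submodule.span ℤ (Set.range b) = L := b0.ofZLatticeBasis_span ℝ
  obtain ⟨r, hr⟩ := (ZSpan.fundamentalDomain_isBounded b).subset_closedBall 0
  have hK : IsCompact (Metric.closedBall (0:E) (max r 0)) := isCompact_closedBall _ _
  obtain ⟨p, _, hp⟩ := hK.exists_isMaxOn ⟨0, by simp⟩
    (Metric.continuous_infDist_pt (L : Set E)).continuousOn
  refine ⟨p, fun q => ?_⟩
  have h1 : ZSpan.fract b q ∈ Metric.closedBall (0:E) (max r 0) :=
    Metric.closedBall_subset_closedBall (le_max_left _ _) (hr (ZSpan.fract_mem_fundamentalDomain b q))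
  have h2 := hp h1
  refine le_trans ?_ h2
  have hfl : ((ZSpan.floor b q : E)) ∈ L := hspan.le (ZSpan.floor b q).2
  obtain ⟨v, hv, hv'⟩ := hL.isClosed.exists_infDist_eq_dist ⟨0, L.zero_mem⟩ (ZSpan.fract b q)
  change _ ≤ Metric.infDist (ZSpan.fract b q) (L : Set E)
  rw [hv']
  have h3 : dist (ZSpan.fract b q) v = dist q (v + ZSpan.floor b q) := by
    rw [dist_eq_norm, dist_eq_norm, ZSpan.fract_apply]
    congr 1; abel
  rw [h3]
  exact Metric.infDist_le_dist_of_mem (L.add_mem hv hfl)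

/-- The centre of a deepest hole is in the convex hull of its vertices. -/
theorem deep_hull (hL : EvenUnimod L) {p : E} {R : ℝ} (S : Finset E)
    (hS : ∀ v, v ∈ S ↔ v ∈ L ∧ ‖p - v‖ = R) (hmin : ∀ v ∈ L, R ≤ ‖p - v‖)
    (hmax : ∀ q : E, ∃ v ∈ L, ‖q - v‖ ≤ R) : p ∈ convexHull ℝ (S : Set E) := by
  by_contra hp
  obtain ⟨f, u, hfp, hfS⟩ := geometric_hahn_banach_point_closed (convex_convexHull ℝ (S : Set E))
    (S.finite_toSet.isCompact_convexHull (𝕜 := ℝ)).isClosed hp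
  let d : E := -(InnerProductSpace.toDual ℝ E).symm f
  have hd : ∀ x, inner ℝ d x = - f x := by
    intro x
    simp only [d]
    rw [inner_neg_left, InnerProductSpace.toDual_symm_apply]
  -- gap
  have hgap : ∃ δ > 0, ∀ v ∈ L, v ∉ S → R + δ ≤ ‖p - v‖ := by
    have hfin : {v : E | v ∈ L ∧ v ∉ S ∧ ‖p - v‖ ≤ R + 1}.Finite := by
      refine (hL.finite_ball (R + 1 + ‖p‖)).subset ?_
      rintro v ⟨h1, _, h3⟩
      refine ⟨h1, ?_⟩
      have : ‖v‖ ≤ ‖p‖ + ‖p - v‖ := by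
        calc ‖v‖ = ‖p - (p - v)‖ := by congr 1; abel
          _ ≤ _ := norm_sub_le _ _
      linarith
    by_cases hne : hfin.toFinset.Nonempty
    · obtain ⟨v0, hv0, hv0m⟩ := hfin.toFinset.exists_min_image (fun v => ‖p - v‖) hne
      rw [Set.Finite.mem_toFinset] at hv0
      have h1 : R < ‖p - v0‖ := lt_of_le_of_ne (hmin v0 hv0.1)
        (fun h => hv0.2.1 ((hS v0).2 ⟨hv0.1, h.symm⟩))
      refine ⟨min 1 (‖p - v0‖ - R), by simp; linarith, fun v hv hvS => ?_⟩
      by_cases h3 : ‖p - v‖ ≤ R + 1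
      · have := hv0m v (by rw [Set.Finite.mem_toFinset]; exact ⟨hv, hvS, h3⟩)
        linarith [min_le_right 1 (‖p - v0‖ - R)]
      · linarith [min_le_left 1 (‖p - v0‖ - R)]
    · refine ⟨1, one_pos, fun v hv hvS => ?_⟩
      by_contra h
      apply hne
      exact ⟨v, by rw [Set.Finite.mem_toFinset]; exact ⟨hv, hvS, by linarith⟩⟩
  obtain ⟨δ, hδ, hgap⟩ := hgap
  let ε := δ / (2 * (‖d‖ + 1))
  have hε : 0 < ε := by positivity
  have hεd : ε * ‖d‖ < δ := by
    simp only [ε]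
    rw [div_mul_eq_mul_div, div_lt_iff₀ (by positivity)]
    nlinarith [norm_nonneg d]
  obtain ⟨v, hv, hvR⟩ := hmax (p + ε • d)
  by_cases hvS : v ∈ S
  · have h1 : ‖p + ε • d - v‖ ^ 2 = R ^ 2 + 2 * ε * inner ℝ d (p - v) + ε ^ 2 * ‖d‖ ^ 2 := by
      have : p + ε • d - v = (p - v) + ε • d := by abel
      rw [this, norm_add_sq_real, ((hS v).1 hvS).2, inner_smul_right, norm_smul, real_inner_comm, mul_pow]
      simp
      ring
    have h2 : 0 < (inner ℝ d (p - v) : ℝ) := by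
      rw [hd, map_sub]
      have := hfS v (subset_convexHull ℝ _ hvS)
      linarith
    have h3 : ‖p + ε • d - v‖ ^ 2 ≤ R ^ 2 := by
      gcongr
    have : 0 < 2 * ε * inner ℝ d (p - v) := by positivity
    nlinarith [sq_nonneg (ε * ‖d‖)]
  · have h1 := hgap v hv hvS
    have h2 : ‖p - v‖ ≤ ‖p + ε • d - v‖ + ε * ‖d‖ := by
      calc ‖p - v‖ = ‖(p + ε • d - v) - ε • d‖ := by congr 1; abel
        _ ≤ _ := norm_sub_le _ _
        _ = _ := by rw [norm_smul, Real.norm_of_nonneg hε.le]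
    linarith

/-- The quadratic form on weights of vertices. -/
def Qf (S : Finset E) (c : E → ℝ) : ℝ :=
  2 * (∑ v ∈ S, c v) ^ 2 - (∑ v ∈ S, c v) * (∑ v ∈ S, c v * ‖v‖ ^ 2) + ‖∑ v ∈ S, c v • v‖ ^ 2

/-- The linear form polar to `Qf` (doubled). -/
def Lf (S : Finset E) (c : E → ℝ) (v : E) : ℝ :=
  4 * (∑ w ∈ S, c w) - (∑ w ∈ S, c w) * ‖v‖ ^ 2 - (∑ w ∈ S, c w * ‖w‖ ^ 2)
    + 2 * inner ℝ (∑ w ∈ S, c w • w) v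

theorem sum_Lf (S : Finset E) (c : E → ℝ) : ∑ v ∈ S, c v * Lf S c v = 2 * Qf S c := by
  simp only [Lf, Qf]
  set k := ∑ w ∈ S, c w with hk
  set s := ∑ w ∈ S, c w * ‖w‖ ^ 2 with hs
  set X := ∑ w ∈ S, c w • w with hX
  have h1 : ∑ v ∈ S, c v * inner ℝ X v = ‖X‖ ^ 2 := by
    rw [← real_inner_self_eq_norm_sq]
    nth_rewrite 3 [hX]
    rw [inner_sum]
    exact Finset.sum_congr rfl (fun v _ => by rw [inner_smul_right])
  have h2 : ∀ v ∈ S, c v * (4 * k - k * ‖v‖ ^ 2 - s + 2 * inner ℝ X v)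
      = c v * (4 * k - s) - k * (c v * ‖v‖ ^ 2) + 2 * (c v * inner ℝ X v) := fun v _ => by ring
  rw [Finset.sum_congr rfl h2, Finset.sum_add_distrib, Finset.sum_sub_distrib, ← Finset.sum_mul,
    ← Finset.mul_sum, ← Finset.mul_sum, h1, ← hk, ← hs]
  ring

theorem Lf_eq (S : Finset E) (c : E → ℝ) (v : E) :
    Lf S c v = 4 * (∑ w ∈ S, c w) - ∑ w ∈ S, c w * ‖v - w‖ ^ 2 := by
  simp only [Lf]
  have h2 : ∀ w ∈ S, c w * ‖v - w‖ ^ 2 = c w * ‖v‖ ^ 2 + c w * ‖w‖ ^ 2 - 2 * inner ℝ (c w • w) v := by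
    intro w _
    rw [norm_sub_sq_real, inner_smul_left, real_inner_comm v w]
    simp
    ring
  rw [Finset.sum_congr rfl h2, Finset.sum_sub_distrib, Finset.sum_add_distrib, ← Finset.mul_sum, ← sum_inner,
    ← Finset.sum_mul]
  ring

theorem Qf_sub [DecidableEq E] (S : Finset E) (c : E → ℝ) {v : E} (hv : v ∈ S) :
    Qf S (fun w => c w - if w = v then 1 else 0) = Qf S c - Lf S c v + 2 := by
  simp only [Qf, Lf, sub_mul, sub_smul, Finset.sum_sub_distrib, ite_mul, ite_smul, one_mul, zero_mul, one_smul, zero_smul,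
    Finset.sum_ite_eq', hv, if_true]
  rw [norm_sub_sq_real]
  ring

theorem Qf_even (hL : EvenUnimod L) (S : Finset E) (hS : ∀ v ∈ S, v ∈ L) (c : E → ℕ) :
    ∃ j : ℤ, Qf S (fun v => (c v : ℝ)) = 2 * j := by
  have hX : ∑ v ∈ S, (c v : ℝ) • v ∈ L := by
    refine L.sum_mem (fun v hv => ?_)
    have := L.smul_mem (c v : ℤ) (hS v hv)
    rwa [← Int.cast_smul_eq_zsmul ℝ, Int.cast_natCast] at this
  obtain ⟨e, he⟩ := hL.even _ hX
  refine ⟨(∑ v ∈ S, (c v : ℤ)) ^ 2 - (∑ v ∈ S, (c v : ℤ)) * (∑ v ∈ S, (c v : ℤ) * hn v) + e, ?_⟩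
  simp only [Qf]
  rw [he]
  have : ∑ v ∈ S, (c v : ℝ) * ‖v‖ ^ 2 = 2 * ∑ v ∈ S, (c v : ℝ) * (hn v : ℝ) := by
    rw [Finset.mul_sum]; exact Finset.sum_congr rfl (fun v hv => by rw [hL.hn_spec (hS v hv)]; ring)
  rw [this]
  push_cast
  ring

theorem exists_weights (S : Finset E) (l : E → ℝ) (hl : ∀ v ∈ S, 0 ≤ l v) (hQ : Qf S l < 0) :
    ∃ c : E → ℕ, Qf S (fun v => (c v : ℝ)) < 0 := by
  have h1 : ∀ v ∈ S, Tendsto (fun M : ℝ => (⌊l v * M⌋₊ : ℝ) / M) atTop (𝓝 (l v)) :=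
    fun v hv => tendsto_nat_floor_mul_div_atTop (hl v hv)
  have h2 : Tendsto (fun M : ℝ => Qf S (fun v => (⌊l v * M⌋₊ : ℝ) / M)) atTop (𝓝 (Qf S l)) := by
    simp only [Qf]
    have a1 := tendsto_finsetSum S h1
    have a2 : Tendsto (fun M : ℝ => ∑ v ∈ S, ((⌊l v * M⌋₊ : ℝ) / M) * ‖v‖ ^ 2) atTop (𝓝 (∑ v ∈ S, l v * ‖v‖ ^ 2)) :=
      tendsto_finsetSum S (fun v hv => (h1 v hv).mul_const _)
    have a3 : Tendsto (fun M : ℝ => ∑ v ∈ S, ((⌊l v * M⌋₊ : ℝ) / M) • v) atTop (𝓝 (∑ v ∈ S, l v • v)) :=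
      tendsto_finsetSum S (fun v hv => (h1 v hv).smul_const _)
    exact (((a1.pow 2).const_mul 2).sub (a1.mul a2)).add (a3.norm.pow 2)
  obtain ⟨M, hM, hM0⟩ := ((h2.eventually (gt_mem_nhds hQ)).and (eventually_gt_atTop 0)).exists
  refine ⟨fun v => ⌊l v * M⌋₊, ?_⟩
  have h3 : ∀ g : E → ℝ, Qf S g = M ^ 2 * Qf S (fun v => g v / M) := by
    intro g
    have e : ∀ v, g v / M = M⁻¹ * g v := fun v => by rw [div_eq_inv_mul]
    simp only [Qf, e, mul_assoc, ← smul_smul, ← Finset.mul_sum, ← Finset.smul_sum, norm_smul, norm_inv, mul_pow, Real.norm_of_nonneg hM0.le]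
    field_simp
  rw [h3]
  have : 0 < M ^ 2 := by positivity
  nlinarith

variable [MeasurableSpace E] [BorelSpace E]

/-- Vertices of a deepest hole have distance at most `√8`. -/
theorem vertex_dist (hL : EvenUnimod L) (hd : finrank ℝ E = 24) (hr : ∀ v ∈ L, ‖v‖ ^ 2 ≠ 2) {p : E} {R2 : ℝ}
    (hmin : ∀ v ∈ L, R2 ≤ ‖p - v‖ ^ 2) {v w : E} (hv : v ∈ L) (hw : w ∈ L) (hvR : ‖p - v‖ ^ 2 = R2)
    (hwR : ‖p - w‖ ^ 2 = R2) : ‖v - w‖ ^ 2 ≤ 8 := by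
  obtain ⟨u', hu', hu8, x, hx, hux⟩ := mod_two hL hd hr (L.sub_mem hv hw)
  have h1 := hmin (w + x) (L.add_mem hw hx)
  have h2 := hmin (w + u' + x) (L.add_mem (L.add_mem hw hu') hx)
  have hv' : v = w + u' + (2:ℝ) • x := by
    have : (2:ℤ) • x = (2:ℝ) • x := by rw [← Int.cast_smul_eq_zsmul ℝ]; norm_num
    rw [← this, ← hux]; abel
  set y := p - w with hy
  have e1 : p - (w + x) = y - x := by rw [hy]; abel
  have e2 : p - (w + u' + x) = (y - x) - u' := by rw [hy]; abel
  have e3 : p - v = (y - x) - (u' + x) := by rw [hv', hy, two_smul]; abel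
  have e4 : v - w = u' + (2:ℝ) • x := by rw [hv']; abel
  have e5 : y = (y - x) + x := by abel
  rw [e1] at h1
  rw [e2, norm_sub_sq_real] at h2
  rw [e3, norm_sub_sq_real, norm_add_sq_real, inner_add_right] at hvR
  rw [e5, norm_add_sq_real] at hwR
  rw [e4, norm_add_sq_real, inner_smul_right, norm_smul, mul_pow]
  norm_num
  linarith

theorem covering (hL : EvenUnimod L) (hd : finrank ℝ E = 24) (hr : ∀ v ∈ L, ‖v‖ ^ 2 ≠ 2) (q : E) :
    ∃ v ∈ L, ‖q - v‖ ^ 2 ≤ 2 := by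
  classical
  obtain ⟨p, hp⟩ := hL.exists_deep
  set R := Metric.infDist p (L : Set E) with hRdef
  have hR0 : 0 ≤ R := Metric.infDist_nonneg
  have hmin : ∀ v ∈ L, R ≤ ‖p - v‖ := by
    intro v hv
    rw [← dist_eq_norm]
    exact Metric.infDist_le_dist_of_mem hv
  have hmax : ∀ q : E, ∃ v ∈ L, ‖q - v‖ ≤ R := by
    intro q
    obtain ⟨v, hv, hv'⟩ := hL.isClosed.exists_infDist_eq_dist ⟨0, L.zero_mem⟩ q
    refine ⟨v, hv, ?_⟩
    rw [← dist_eq_norm, ← hv']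
    exact hp q
  by_cases hR2 : R ^ 2 ≤ 2
  · obtain ⟨v, hv, h⟩ := hmax q
    refine ⟨v, hv, le_trans ?_ hR2⟩
    gcongr
  exfalso
  push Not at hR2
  have hmin2 : ∀ v ∈ L, R ^ 2 ≤ ‖p - v‖ ^ 2 := fun v hv => by
    have := hmin v hv
    gcongr
  have hfin : {v : E | v ∈ L ∧ ‖p - v‖ = R}.Finite := by
    refine (hL.finite_ball (R + ‖p‖)).subset ?_
    rintro v ⟨h1, h3⟩
    refine ⟨h1, ?_⟩
    have : ‖v‖ ≤ ‖p‖ + ‖p - v‖ := by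
      calc ‖v‖ = ‖p - (p - v)‖ := by congr 1; abel
        _ ≤ _ := norm_sub_le _ _
    linarith
  set S := hfin.toFinset with hSdef
  have hS : ∀ v, v ∈ S ↔ v ∈ L ∧ ‖p - v‖ = R := fun v => by rw [hSdef, Set.Finite.mem_toFinset]; rfl
  have hSL : ∀ v ∈ S, v ∈ L := fun v hv => ((hS v).1 hv).1
  have hSR : ∀ v ∈ S, ‖p - v‖ ^ 2 = R ^ 2 := fun v hv => by rw [((hS v).1 hv).2]
  have hhull := deep_hull hL S hS hmin hmax
  rw [Finset.mem_convexHull'] at hhull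
  obtain ⟨l, hl0, hl1, hlp⟩ := hhull
  have hQl : Qf S l < 0 := by
    have h1 : ∑ v ∈ S, l v * ‖v‖ ^ 2 = R ^ 2 + ‖p‖ ^ 2 := by
      have h2 : ∀ v ∈ S, l v * ‖v‖ ^ 2 = l v * (R ^ 2 - ‖p‖ ^ 2) + 2 * inner ℝ p (l v • v) := by
        intro v hv
        rw [← hSR v hv, norm_sub_sq_real, inner_smul_right]; ring
      rw [Finset.sum_congr rfl h2, Finset.sum_add_distrib, ← Finset.sum_mul, ← Finset.mul_sum, ← inner_sum,
        hlp, hl1, real_inner_self_eq_norm_sq]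
      ring
    rw [Qf, hl1, hlp, h1]
    linarith
  obtain ⟨c1, hc1⟩ := exists_weights S l hl0 hQl
  have hex : ∃ k : ℕ, k ≠ 0 ∧ ∃ c : E → ℕ, ∑ v ∈ S, c v = k ∧ Qf S (fun v => (c v : ℝ)) ≤ 0 := by
    refine ⟨∑ v ∈ S, c1 v, ?_, c1, rfl, hc1.le⟩
    intro h
    rw [Finset.sum_eq_zero_iff] at h
    have : Qf S (fun v => (c1 v : ℝ)) = 0 := by
      have e : ∀ v ∈ S, (c1 v : ℝ) = 0 := fun v hv => by rw [h v hv]; simp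
      simp only [Qf]
      have e2 : ∑ v ∈ S, (c1 v : ℝ) • v = 0 := Finset.sum_eq_zero (fun v hv => by rw [e v hv, zero_smul])
      rw [Finset.sum_eq_zero e, e2]
      simp
    linarith
  obtain ⟨hk0, c, hck, hQ⟩ := Nat.find_spec hex
  have hmink := fun m => Nat.find_min hex (m := m)
  set k := Nat.find hex with hkdef
  have hckr : ∑ v ∈ S, (c v : ℝ) = k := by rw [← hck]; push_cast; rfl
  obtain ⟨jQ, hjQ⟩ := Qf_even hL S hSL c
  -- lower bound for the linear form
  have hlow : ∀ v ∈ S, 1 ≤ c v → 8 - 4 * (k : ℝ) ≤ Lf S (fun v => (c v : ℝ)) v := by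
    intro v hv hcv
    rw [Lf_eq, hckr]
    have h1 : ∑ w ∈ S, (c w : ℝ) * ‖v - w‖ ^ 2 ≤ ∑ w ∈ S, ((c w : ℝ) * 8 - if w = v then 8 else 0) := by
      refine Finset.sum_le_sum (fun w hw => ?_)
      by_cases hwv : w = v
      · subst hwv
        have : (1:ℝ) ≤ c w := by exact_mod_cast hcv
        simp; linarith
      · have := vertex_dist hL hd hr hmin2 (hSL v hv) (hSL w hw) (hSR v hv) (hSR w hw)
        simp only [hwv, if_false, sub_zero]
        gcongr
    rw [Finset.sum_sub_distrib, ← Finset.sum_mul, hckr, Finset.sum_ite_eq', if_pos hv] at h1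
    linarith
  have hsum := sum_Lf S (fun v => (c v : ℝ))
  have hkge : 2 ≤ k := by
    by_contra h
    have hk1 : k = 1 := by omega
    have h1 : ∑ v ∈ S, (c v : ℝ) * 4 ≤ ∑ v ∈ S, (c v : ℝ) * Lf S (fun v => (c v : ℝ)) v := by
      refine Finset.sum_le_sum (fun v hv => ?_)
      rcases Nat.eq_zero_or_pos (c v) with h0 | h0
      · simp [h0]
      · have := hlow v hv h0
        rw [hk1] at this
        gcongr
        norm_num at this
        linarith
    rw [← Finset.sum_mul, hckr, hk1, hsum] at h1
    norm_num at h1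
    linarith
  have hup : ∀ v ∈ S, 1 ≤ c v → Lf S (fun v => (c v : ℝ)) v ≤ Qf S (fun v => (c v : ℝ)) := by
    intro v hv hcv
    let c' : E → ℕ := fun w => c w - if w = v then 1 else 0
    have hc' : ∀ w, (c' w : ℝ) = (c w : ℝ) - if w = v then 1 else 0 := by
      intro w
      simp only [c']
      by_cases hwv : w = v
      · subst hwv
        simp [Nat.cast_sub hcv]
      · simp [hwv]
    have hsum' : ∑ w ∈ S, c' w = k - 1 := by
      have : ((∑ w ∈ S, c' w : ℕ) : ℝ) = k - 1 := by
        push_cast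
        simp only [hc']
        rw [Finset.sum_sub_distrib, hckr, Finset.sum_ite_eq', if_pos hv]
      have h2 : ((∑ w ∈ S, c' w : ℕ) : ℝ) + 1 = k := by linarith
      have h3 : (∑ w ∈ S, c' w) + 1 = k := by exact_mod_cast h2
      omega
    have h1 := hmink (k - 1) (by omega)
    push Not at h1
    have h2 := h1 (by omega) c' hsum'
    obtain ⟨j, hj⟩ := Qf_even hL S hSL c'
    have h3 : (2:ℝ) ≤ Qf S (fun v => (c' v : ℝ)) := by
      rw [hj] at h2 ⊢
      have : (0:ℝ) < j := by linarith
      have : (1:ℤ) ≤ j := by exact_mod_cast this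
      have : (1:ℝ) ≤ j := by exact_mod_cast this
      linarith
    simp only [hc'] at h3
    rw [Qf_sub S _ hv] at h3
    linarith
  have hpos : ∃ v ∈ S, 1 ≤ c v := by
    by_contra h
    push Not at h
    apply hk0
    rw [← hck]
    exact Finset.sum_eq_zero (fun v hv => by have := h v hv; omega)
  have hterm : ∀ v ∈ S, 0 ≤ (c v : ℝ) * (Qf S (fun v => (c v : ℝ)) - Lf S (fun v => (c v : ℝ)) v) := by
    intro v hv
    rcases Nat.eq_zero_or_pos (c v) with h0 | h0
    · simp [h0]
    · have := hup v hv h0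
      apply mul_nonneg (by positivity); linarith
  have hsum2 : ∑ v ∈ S, (c v : ℝ) * (Qf S (fun v => (c v : ℝ)) - Lf S (fun v => (c v : ℝ)) v)
      = (k - 2) * Qf S (fun v => (c v : ℝ)) := by
    simp only [mul_sub, Finset.sum_sub_distrib]
    rw [← Finset.sum_mul, hckr, hsum]
    ring
  have hQ0 : Qf S (fun v => (c v : ℝ)) = 0 := by
    rcases Nat.lt_or_ge 2 k with h | h
    · have h1 := Finset.sum_nonneg hterm
      rw [hsum2] at h1
      have : (2:ℝ) < k := by exact_mod_cast h
      nlinarith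
    · have hk2 : k = 2 := by omega
      obtain ⟨v, hv, hcv⟩ := hpos
      have h1 := hlow v hv hcv
      have h2 := hup v hv hcv
      rw [hk2] at h1
      norm_num at h1
      linarith
  have hL0 : ∀ v ∈ S, 1 ≤ c v → Lf S (fun v => (c v : ℝ)) v = 0 := by
    intro v hv hcv
    rw [hQ0, mul_zero] at hsum2
    rw [hQ0] at hterm
    have := (Finset.sum_eq_zero_iff_of_nonneg hterm).1 hsum2 v hv
    have hc : (c v : ℝ) ≠ 0 := by
      have : c v ≠ 0 := by omega
      exact_mod_cast this
    rcases mul_eq_zero.1 this with h | h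
    · exact absurd h hc
    · linarith
  have hkr : (k : ℝ) ≠ 0 := by exact_mod_cast hk0
  let c0 : E := (k : ℝ)⁻¹ • ∑ v ∈ S, (c v : ℝ) • v
  have hX : ∑ v ∈ S, (c v : ℝ) • v = (k : ℝ) • c0 := by
    simp only [c0]
    rw [smul_smul, mul_inv_cancel₀ hkr, one_smul]
  have hsub : ∀ {M : Type _} [AddCommMonoid M] (g : E → M), (∀ v ∈ S, c v = 0 → g v = 0) →
      ∑ v ∈ S.filter (fun v => 1 ≤ c v), g v = ∑ v ∈ S, g v := by
    intro M _ g hg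
    refine Finset.sum_subset (Finset.filter_subset _ _) (fun v hv hv' => ?_)
    apply hg v hv
    rw [Finset.mem_filter, not_and] at hv'
    have := hv' hv
    omega
  have hk' : ∑ v ∈ S.filter (fun v => 1 ≤ c v), c v = k := by
    rw [← hck]
    refine Finset.sum_subset (Finset.filter_subset _ _) (fun v hv hv' => ?_)
    rw [Finset.mem_filter, not_and] at hv'
    have := hv' hv
    omega
  refine deep_contra hL hd hr p (R ^ 2) hR2 hmin2 (S.filter (fun v => 1 ≤ c v)) c ?_ c0 ?_ ?_ ?_
  · intro v hv
    rw [Finset.mem_filter] at hv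
    exact ⟨hSL v hv.1, hSR v hv.1⟩
  · rw [hk']; exact hk0
  · rw [hk', ← hX]
    exact hsub _ (fun v _ h => by simp [h])
  · intro v hv
    rw [Finset.mem_filter] at hv
    have h1 := hL0 v hv.1 hv.2
    have h2 := hQ0
    simp only [Qf] at h2
    simp only [Lf] at h1
    rw [hckr, hX] at h1 h2
    rw [inner_smul_left] at h1
    rw [norm_smul, mul_pow] at h2
    simp only [conj_trivial, Real.norm_natCast] at h1 h2
    rw [norm_sub_sq_real, real_inner_comm]
    apply mul_left_cancel₀ hkr
    apply mul_left_cancel₀ hkr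
    linear_combination (-(k:ℝ)) * h1 + h2

end Covering

end PartE3

section PartC1
open ComplexConjugate

theorem omega_eq : ω = ⟨-1/2, Real.sqrt 3 / 2⟩ := by
  unfold ω
  rw [show (2 * (Real.pi : ℂ) * Complex.I / 3) = ((2 * Real.pi / 3 : ℝ) : ℂ) * Complex.I by push_cast; ring]
  rw [Complex.exp_mul_I, ← Complex.ofReal_cos, ← Complex.ofReal_sin]
  have h1 : Real.cos (2 * Real.pi / 3) = -1/2 := by
    rw [show 2 * Real.pi / 3 = Real.pi - Real.pi / 3 by ring, Real.cos_pi_sub, Real.cos_pi_div_three]; ring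
  have h2 : Real.sin (2 * Real.pi / 3) = Real.sqrt 3 / 2 := by
    rw [show 2 * Real.pi / 3 = Real.pi - Real.pi / 3 by ring, Real.sin_pi_sub, Real.sin_pi_div_three]
  rw [h1, h2]
  apply Complex.ext <;> simp

theorem omega_re : ω.re = -1/2 := by rw [omega_eq]
theorem omega_im : ω.im = Real.sqrt 3 / 2 := by rw [omega_eq]

theorem omega_sq : ω ^ 2 = -1 - ω := by
  have h3 : Real.sqrt 3 * Real.sqrt 3 = 3 := Real.mul_self_sqrt (by norm_num)
  apply Complex.ext
  · simp [pow_two, omega_re, omega_im]; nlinarith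
  · simp [pow_two, omega_re, omega_im]; ring

theorem conj_omega : conj ω = -1 - ω := by
  apply Complex.ext
  · simp [omega_re]; norm_num
  · simp [omega_im]

theorem theta_eq : θ = 1 + 2 * ω := by
  unfold θ; rw [conj_omega]; ring

theorem theta_re : θ.re = 0 := by rw [theta_eq]; simp [omega_re]; norm_num
theorem theta_im : θ.im = Real.sqrt 3 := by rw [theta_eq]; simp [omega_im]; ring

theorem theta_sq : θ ^ 2 = -3 := by
  rw [theta_eq]; linear_combination 4 * omega_sq

theorem theta_mul : θ * θ = -3 := by rw [← pow_two, theta_sq]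

theorem conj_theta : conj θ = -θ := by
  apply Complex.ext <;> simp [theta_re]

theorem theta_ne : θ ≠ 0 := by
  intro h; have := theta_sq; rw [h] at this; norm_num at this

/-- Multiples of `θ` in the Eisenstein integers. -/
def ThP (z : ℂ) : Prop := ∃ w, EisP w ∧ z = θ * w

theorem EisP.int (n : ℤ) : EisP (n : ℂ) := ⟨n, 0, by simp⟩
theorem EisP.zero : EisP 0 := by simpa using EisP.int 0
theorem EisP.one : EisP 1 := by simpa using EisP.int 1
theorem EisP.om : EisP ω := ⟨0, 1, by simp⟩
theorem EisP.add {x y : ℂ} (hx : EisP x) (hy : EisP y) : EisP (x + y) := by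
  obtain ⟨a, b, rfl⟩ := hx; obtain ⟨c, d, rfl⟩ := hy
  exact ⟨a + c, b + d, by push_cast; ring⟩
theorem EisP.neg {x : ℂ} (hx : EisP x) : EisP (-x) := by
  obtain ⟨a, b, rfl⟩ := hx
  exact ⟨-a, -b, by push_cast; ring⟩
theorem EisP.sub {x y : ℂ} (hx : EisP x) (hy : EisP y) : EisP (x - y) := by
  rw [sub_eq_add_neg]; exact hx.add hy.neg
theorem EisP.mul {x y : ℂ} (hx : EisP x) (hy : EisP y) : EisP (x * y) := by
  obtain ⟨a, b, rfl⟩ := hx; obtain ⟨c, d, rfl⟩ := hy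
  exact ⟨a * c - b * d, a * d + b * c - b * d, by
    push_cast; linear_combination (b : ℂ) * d * omega_sq⟩
theorem EisP.conj {x : ℂ} (hx : EisP x) : EisP (conj x) := by
  obtain ⟨a, b, rfl⟩ := hx
  exact ⟨a - b, -b, by simp [conj_omega]; ring⟩
theorem EisP.sum {ι : Type*} {s : Finset ι} {f : ι → ℂ} (h : ∀ i ∈ s, EisP (f i)) :
    EisP (∑ i ∈ s, f i) := Finset.sum_induction f EisP (fun _ _ => EisP.add) EisP.zero h
theorem EisP.th : EisP θ := ⟨1, 2, by rw [theta_eq]; push_cast; ring⟩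

theorem ThP.eis {x : ℂ} (h : ThP x) : EisP x := by
  obtain ⟨w, hw, rfl⟩ := h; exact EisP.th.mul hw
theorem ThP.zero : ThP 0 := ⟨0, EisP.zero, by simp⟩
theorem ThP.add {x y : ℂ} (hx : ThP x) (hy : ThP y) : ThP (x + y) := by
  obtain ⟨a, ha, rfl⟩ := hx; obtain ⟨c, hc, rfl⟩ := hy
  exact ⟨a + c, ha.add hc, by ring⟩
theorem ThP.neg {x : ℂ} (hx : ThP x) : ThP (-x) := by
  obtain ⟨a, ha, rfl⟩ := hx
  exact ⟨-a, ha.neg, by ring⟩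
theorem ThP.sub {x y : ℂ} (hx : ThP x) (hy : ThP y) : ThP (x - y) := by
  rw [sub_eq_add_neg]; exact hx.add hy.neg
theorem ThP.mul_left {x y : ℂ} (hx : EisP x) (hy : ThP y) : ThP (x * y) := by
  obtain ⟨c, hc, rfl⟩ := hy
  exact ⟨x * c, hx.mul hc, by ring⟩
theorem ThP.th {x : ℂ} (hx : EisP x) : ThP (θ * x) := ⟨x, hx, rfl⟩
theorem ThP.three {x : ℂ} (hx : EisP x) : ThP (3 * x) :=
  ⟨-(θ * x), (EisP.th.mul hx).neg, by linear_combination x * theta_sq⟩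
theorem ThP.conj {x : ℂ} (hx : ThP x) : ThP (conj x) := by
  obtain ⟨a, ha, rfl⟩ := hx
  exact ⟨-(starRingEnd ℂ a), ha.conj.neg, by rw [map_mul, conj_theta]; ring⟩
theorem ThP.sum {ι : Type*} {s : Finset ι} {f : ι → ℂ} (h : ∀ i ∈ s, ThP (f i)) :
    ThP (∑ i ∈ s, f i) := Finset.sum_induction f ThP (fun _ _ => ThP.add) ThP.zero h

theorem eis_ext {a b c d : ℤ} (h : (a : ℂ) + b * ω = c + d * ω) : a = c ∧ b = d := by
  have h3 : Real.sqrt 3 ≠ 0 := by positivity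
  have h1 := congrArg Complex.im h
  have h2 := congrArg Complex.re h
  simp [omega_re, omega_im] at h1 h2
  subst h1
  exact ⟨by exact_mod_cast (add_right_cancel h2), rfl⟩

theorem ThP.int_dvd {n : ℤ} (h : ThP (n : ℂ)) : (3 : ℤ) ∣ n := by
  obtain ⟨w, ⟨a, b, rfl⟩, h⟩ := h
  have : (n : ℂ) + (0 : ℤ) * ω = ((a - 2 * b : ℤ) : ℂ) + ((2 * a - b : ℤ) : ℂ) * ω := by
    rw [h, theta_eq]; push_cast; linear_combination (- 2 * (b : ℂ)) * omega_sq * (-1)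
  have := eis_ext this
  omega

theorem ThP.of_dvd {n : ℤ} (h : (3 : ℤ) ∣ n) : ThP (n : ℂ) := by
  obtain ⟨k, rfl⟩ := h
  push_cast
  exact ThP.three (EisP.int k)

theorem EisP.mod {z : ℂ} (h : EisP z) : ∃ n : ℤ, ThP (z - n) := by
  obtain ⟨a, b, rfl⟩ := h
  refine ⟨a + b, b * (1 + ω), (EisP.int b).mul (EisP.one.add EisP.om), ?_⟩
  rw [theta_eq]; push_cast; linear_combination (-2 * (b : ℂ)) * omega_sq

theorem ThP.om {z : ℂ} (h : EisP z) : ThP (ω * z - z) := by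
  refine ⟨z * (1 + ω), h.mul (EisP.one.add EisP.om), ?_⟩
  rw [theta_eq]; linear_combination (-2 * z) * omega_sq

theorem EisP.normSq {z : ℂ} (h : EisP z) : ∃ n : ℤ, Complex.normSq z = n ∧ 0 ≤ n := by
  obtain ⟨a, b, rfl⟩ := h
  have h3 : Real.sqrt 3 * Real.sqrt 3 = 3 := Real.mul_self_sqrt (by norm_num)
  refine ⟨a ^ 2 - a * b + b ^ 2, ?_, by nlinarith [sq_nonneg (a - b), sq_nonneg a, sq_nonneg b]⟩
  simp [Complex.normSq_apply, omega_re, omega_im]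
  nlinarith

theorem normSq_theta : Complex.normSq θ = 3 := by
  have h3 : Real.sqrt 3 * Real.sqrt 3 = 3 := Real.mul_self_sqrt (by norm_num)
  rw [Complex.normSq_apply, theta_re, theta_im, h3]; ring

theorem normSq_mod {z : ℂ} {n : ℤ} (h : ThP (z - n)) :
    ∃ k : ℤ, Complex.normSq z = n ^ 2 + 3 * k := by
  obtain ⟨w, ⟨a, b, rfl⟩, h⟩ := h
  have h3 : Real.sqrt 3 * Real.sqrt 3 = 3 := Real.mul_self_sqrt (by norm_num)
  have hz : z = n + (1 + 2 * ω) * (a + b * ω) := by rw [← theta_eq, ← h]; ring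
  refine ⟨a ^ 2 - a * b + b ^ 2 - n * b, ?_⟩
  rw [hz]
  simp [Complex.normSq_apply, omega_re, omega_im]
  ring_nf
  rw [show Real.sqrt 3 ^ 4 = 9 by rw [show (4:ℕ) = 2 * 2 by norm_num, pow_mul, Real.sq_sqrt (by norm_num)]; norm_num, Real.sq_sqrt (by norm_num)]
  ring

theorem EisUnit.eis {u : ℂ} (h : EisUnit u) : EisP u := by
  have h2 := EisP.om.mul EisP.om
  rw [← pow_two] at h2
  rcases h with rfl | rfl | rfl | rfl | rfl | rfl
  exacts [EisP.one, EisP.one.neg, EisP.om, EisP.om.neg, h2, h2.neg]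

theorem EisP.unit {z : ℂ} (h : EisP z) (h1 : Complex.normSq z = 1) : EisUnit z := by
  obtain ⟨a, b, rfl⟩ := h
  have h3 : Real.sqrt 3 * Real.sqrt 3 = 3 := Real.mul_self_sqrt (by norm_num)
  have : ((a ^ 2 - a * b + b ^ 2 : ℤ) : ℝ) = (1 : ℤ) := by
    simp [Complex.normSq_apply, omega_re, omega_im] at h1
    push_cast; nlinarith
  have h := Int.cast_injective this
  have ha : a ≤ 1 := by nlinarith [sq_nonneg (a - 2 * b)]
  have ha' : -1 ≤ a := by nlinarith [sq_nonneg (a - 2 * b)]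
  have hb : b ≤ 1 := by nlinarith [sq_nonneg (2 * a - b)]
  have hb' : -1 ≤ b := by nlinarith [sq_nonneg (2 * a - b)]
  unfold EisUnit
  rw [omega_sq]
  interval_cases a <;> interval_cases b <;> simp_all <;> try norm_num at h
  all_goals first
    | ring1
    | (left; ring1)
    | (right; ring1)
    | (right; left; ring1)
    | (right; right; ring1)
    | (right; right; left; ring1)
    | (right; right; right; ring1)
    | (right; right; right; left; ring1)
    | (right; right; right; right; ring1)
    | (right; right; right; right; left; ring1)
    | (right; right; right; right; right; ring1)
    | (right; right; right; right; right; left; ring1)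
    | (right; right; right; right; right; right; ring1)

theorem EisUnit.normSq {u : ℂ} (h : EisUnit u) : Complex.normSq u = 1 := by
  have h3 : Real.sqrt 3 * Real.sqrt 3 = 3 := Real.mul_self_sqrt (by norm_num)
  have h2 : Complex.normSq ω = 1 := by
    simp [Complex.normSq_apply, omega_re, omega_im]; nlinarith
  rcases h with rfl | rfl | rfl | rfl | rfl | rfl <;> simp [h2]

end PartC1

section PartC2
open ComplexConjugate

/-- Integral lift of a Golay codeword. -/
def cw (s : Fin 6 → ℤ) (i : Fin 12) : ℤ := ∑ j, golay j i * s j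

theorem cw_add (s t : Fin 6 → ℤ) (i : Fin 12) : cw (s + t) i = cw s i + cw t i := by
  simp [cw, mul_add, Finset.sum_add_distrib]

theorem cw_smul (n : ℤ) (s : Fin 6 → ℤ) (i : Fin 12) : cw (fun j => n * s j) i = n * cw s i := by
  simp only [cw, Finset.mul_sum]
  exact Finset.sum_congr rfl fun j _ => by ring

theorem golay_sum : ∀ j, (3 : ℤ) ∣ ∑ i, golay j i := by decide

theorem golay_gram : ∀ j k, (3 : ℤ) ∣ ∑ i, golay j i * golay k i := by decide

theorem cw_sum (s : Fin 6 → ℤ) : (3 : ℤ) ∣ ∑ i, cw s i := by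
  unfold cw
  rw [Finset.sum_comm]
  refine Finset.dvd_sum fun j _ => ?_
  rw [← Finset.sum_mul]
  exact (golay_sum j).mul_right _

theorem cw_gram (s t : Fin 6 → ℤ) : (3 : ℤ) ∣ ∑ i, cw s i * cw t i := by
  have : ∑ i, cw s i * cw t i = ∑ j, ∑ k, (∑ i, golay j i * golay k i) * (s j * t k) := by
    simp only [cw, Finset.sum_mul, Finset.mul_sum]
    rw [Finset.sum_comm]
    conv_lhs => enter [2, j]; rw [Finset.sum_comm]
    conv_rhs => rw [Finset.sum_comm]
    refine Finset.sum_congr rfl fun j _ => Finset.sum_congr rfl fun k _ => Finset.sum_congr rfl fun i _ => by ring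
  rw [this]
  exact Finset.dvd_sum fun j _ => Finset.dvd_sum fun k _ => (golay_gram j k).mul_right _

theorem cw_one : ∀ i, (3 : ℤ) ∣ cw (fun _ => 1) i - 1 := by decide

theorem cw_dual (c : Fin 12 → ℤ) (h : ∀ j, (3 : ℤ) ∣ ∑ i, c i * golay j i) :
    ∃ s : Fin 6 → ℤ, ∀ i, (3 : ℤ) ∣ c i - cw s i := by
  refine ⟨![c 0, c 1, c 2, c 3, c 4, c 5], ?_⟩
  have h0 := h 0
  have h1 := h 1
  have h2 := h 2
  have h3 := h 3
  have h4 := h 4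
  have h5 := h 5
  simp [Fin.sum_univ_succ, golay] at h0 h1 h2 h3 h4 h5
  intro i
  fin_cases i <;> simp [Fin.sum_univ_succ, cw, golay] <;> omega

theorem golay_weight : ∀ a b c d e f : Fin 3,
    (∀ i : Fin 12, ((golay 0 i * a + golay 1 i * b + golay 2 i * c + golay 3 i * d + golay 4 i * e + golay 5 i * f) % 3 = 0)) ∨
    4 ≤ ∑ i : Fin 12, ((golay 0 i * a + golay 1 i * b + golay 2 i * c + golay 3 i * d + golay 4 i * e + golay 5 i * f) ^ 2 % 3) := by
  decide +kernel

theorem leech_iff (lam : Fin 12 → ℂ) : lam ∈ Leech ↔ ∃ (m : ℤ) (s : Fin 6 → ℤ) (z : Fin 12 → ℂ),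
    (∀ i, EisP (z i)) ∧ (∀ i, lam i = m + θ * (cw s i : ℂ) + 3 * z i) ∧ ThP (∑ i, z i - m) := by
  constructor
  · rintro ⟨m, s, za, zb, -, h, a, b, h'⟩
    exact ⟨m, s, fun i => za i + zb i * ω, fun i => ⟨_, _, rfl⟩, h, _, ⟨a, b, rfl⟩, h'⟩
  · rintro ⟨m, s, z, hz, h, h'⟩
    obtain ⟨m', k, hm, hm'⟩ : ∃ m' k : ℤ, (m' = 0 ∨ m' = 1 ∨ m' = -1) ∧ m = m' + 3 * k := by
      have : m % 3 = 0 ∨ m % 3 = 1 ∨ m % 3 = 2 := by omega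
      rcases this with h | h | h
      · exact ⟨0, m / 3, by simp, by omega⟩
      · exact ⟨1, m / 3, by simp, by omega⟩
      · exact ⟨-1, m / 3 + 1, by simp, by omega⟩
    choose za zb hzz using hz
    have hk : ThP (∑ i, (((za i + k : ℤ) : ℂ) + zb i * ω) - m') := by
      have : ∑ i, (((za i + k : ℤ) : ℂ) + zb i * ω) - m' = (∑ i, z i - m) + 3 * ((5 * k : ℤ) : ℂ) := by
        have : ∑ i, (((za i + k : ℤ) : ℂ) + zb i * ω) = ∑ i, (z i + k) :=
          Finset.sum_congr rfl fun i _ => by rw [hzz]; push_cast; ring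
        rw [this, Finset.sum_add_distrib, hm']
        simp; ring
      rw [this]
      exact h'.add (ThP.three (EisP.int _))
    obtain ⟨w, ⟨a, b, rfl⟩, hw⟩ := hk
    refine ⟨m', s, fun i => za i + k, zb, hm, fun i => ?_, a, b, hw⟩
    rw [h, hzz, hm', cw]; push_cast; ring

theorem Leech.add {u v : Fin 12 → ℂ} (hu : u ∈ Leech) (hv : v ∈ Leech) : u + v ∈ Leech := by
  rw [leech_iff] at *
  obtain ⟨m, s, z, hz, h, h'⟩ := hu
  obtain ⟨m2, s2, z2, hz2, h2, h2'⟩ := hv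
  refine ⟨m + m2, s + s2, z + z2, fun i => (hz i).add (hz2 i), fun i => ?_, ?_⟩
  · simp only [Pi.add_apply, h, h2, cw_add]; push_cast; ring
  · have := h'.add h2'
    convert this using 1
    simp only [Pi.add_apply, Finset.sum_add_distrib]; push_cast; ring

theorem Leech.zero : (0 : Fin 12 → ℂ) ∈ Leech := by
  rw [leech_iff]
  exact ⟨0, 0, 0, fun i => EisP.zero, fun i => by simp [cw], by simpa using ThP.zero⟩

theorem Leech.neg {u : Fin 12 → ℂ} (hu : u ∈ Leech) : -u ∈ Leech := by
  rw [leech_iff] at *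
  obtain ⟨m, s, z, hz, h, h'⟩ := hu
  refine ⟨-m, fun j => (-1) * s j, -z, fun i => (hz i).neg, fun i => ?_, ?_⟩
  · simp only [Pi.neg_apply, h, cw_smul]; push_cast; ring
  · have := h'.neg
    convert this using 1
    simp only [Pi.neg_apply, Finset.sum_neg_distrib]; push_cast; ring

theorem Leech.om {u : Fin 12 → ℂ} (hu : u ∈ Leech) : ω • u ∈ Leech := by
  rw [leech_iff] at *
  obtain ⟨m, s, z, hz, h, h'⟩ := hu
  choose t ht using cw_one
  refine ⟨m, s + fun j => (2 * m) * 1, fun i => ω * z i - (1 + ω) * (cw s i : ℂ) - m * (1 + ω) - 2 * m * θ * t i, fun i => ?_, fun i => ?_, ?_⟩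
  · refine EisP.sub (EisP.sub (EisP.sub (EisP.om.mul (hz i)) ((EisP.one.add EisP.om).mul (EisP.int _))) ((EisP.int m).mul (EisP.one.add EisP.om))) ?_
    have := ((EisP.int (2 * m)).mul EisP.th).mul (EisP.int (t i))
    push_cast at this; exact this
  · rw [Pi.smul_apply, smul_eq_mul, h, cw_add, cw_smul]
    have := ht i
    have e : cw (fun _ => 1) i = 1 + 3 * t i := by linarith
    rw [e]; push_cast
    rw [theta_eq]
    linear_combination (2 * (cw s i : ℂ)) * omega_sq
  · simp only [Finset.sum_sub_distrib, ← Finset.mul_sum]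
    have e1 := ThP.om (EisP.sum (s := Finset.univ) (f := z) fun i _ => hz i)
    have e2 : ThP ((1 + ω) * ∑ i, (cw s i : ℂ)) := by
      refine ThP.mul_left (EisP.one.add EisP.om) ?_
      have := ThP.of_dvd (cw_sum s); push_cast at this; exact this
    have e3 : ThP (3 * ((4 * m : ℤ) * (1 + ω))) := ThP.three ((EisP.int _).mul (EisP.one.add EisP.om))
    have e4 : ThP (θ * ((2 * m * ∑ i, t i : ℤ) : ℂ)) := ThP.th (EisP.int _)
    have := (((h'.add e1).sub e2).sub e3).sub e4
    convert this using 1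
    push_cast
    simp
    ring

theorem Leech.int {u : Fin 12 → ℂ} (hu : u ∈ Leech) (n : ℤ) : (n : ℂ) • u ∈ Leech := by
  rw [leech_iff] at *
  obtain ⟨m, s, z, hz, h, h'⟩ := hu
  refine ⟨n * m, fun j => n * s j, fun i => n * z i, fun i => (EisP.int n).mul (hz i), fun i => ?_, ?_⟩
  · simp only [Pi.smul_apply, h, cw_smul, smul_eq_mul]; push_cast; ring
  · have := ThP.mul_left (EisP.int n) h'
    convert this using 1
    rw [← Finset.mul_sum]; push_cast; ring

theorem Leech.eis {u : Fin 12 → ℂ} (hu : u ∈ Leech) {a : ℂ} (ha : EisP a) : a • u ∈ Leech := by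
  obtain ⟨a, b, rfl⟩ := ha
  rw [add_smul, mul_comm, mul_smul]
  rw [← mul_smul, mul_comm, mul_smul]
  exact Leech.add (Leech.int hu a) (Leech.int (Leech.om hu) b)

theorem Leech.coord {u : Fin 12 → ℂ} (hu : u ∈ Leech) (i : Fin 12) : EisP (u i) := by
  rw [leech_iff] at *
  obtain ⟨m, s, z, hz, h, h'⟩ := hu
  rw [h]
  exact ((EisP.int m).add (EisP.th.mul (EisP.int _))).add (ThP.three (hz i)).eis

theorem Leech.inner {u v : Fin 12 → ℂ} (hu : u ∈ Leech) (hv : v ∈ Leech) :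
    ThP (1 / 3 * ∑ i, conj (u i) * v i) := by
  rw [leech_iff] at *
  obtain ⟨m, s, z, hz, h, h'⟩ := hu
  obtain ⟨m2, s2, z2, hz2, h2, h2'⟩ := hv
  obtain ⟨k, hk⟩ := cw_sum s
  obtain ⟨k2, hk2⟩ := cw_sum s2
  obtain ⟨g, hg⟩ := cw_gram s s2
  have hk' : ∑ i, (cw s i : ℂ) = 3 * k := by exact_mod_cast congrArg (fun n : ℤ => (n : ℂ)) hk
  have hk2' : ∑ i, (cw s2 i : ℂ) = 3 * k2 := by exact_mod_cast congrArg (fun n : ℤ => (n : ℂ)) hk2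
  have hg' : ∑ i, (cw s i : ℂ) * (cw s2 i : ℂ) = 3 * g := by exact_mod_cast congrArg (fun n : ℤ => (n : ℂ)) hg
  have e : ∀ i, conj (u i) * v i = m * m2 + m * θ * cw s2 i + 3 * m * z2 i - θ * m2 * cw s i + 3 * (cw s i * cw s2 i)
      - 3 * θ * (cw s i * z2 i) + 3 * m2 * conj (z i) + 3 * θ * (conj (z i) * cw s2 i) + 9 * (conj (z i) * z2 i) := by
    intro i
    rw [h, h2]
    have h3 : conj (3 : ℂ) = 3 := Complex.conj_ofNat 3
    simp [conj_theta, h3]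
    linear_combination (-(cw s i : ℂ) * cw s2 i) * theta_sq
  have e2 : 1 / 3 * ∑ i, conj (u i) * v i = 3 * ((2 * m * m2 : ℤ) : ℂ) + θ * ((m * k2 - m2 * k : ℤ) : ℂ) + m * (∑ i, z2 i - m2)
     + 3 * (g : ℂ) - θ * (∑ i, cw s i * z2 i) + m2 * conj (∑ i, z i - m) + θ * (∑ i, conj (z i) * cw s2 i) + 3 * ∑ i, conj (z i) * z2 i := by
    simp only [e, Finset.sum_add_distrib, Finset.sum_sub_distrib, ← Finset.mul_sum, hk', hk2', hg', map_sub, map_sum]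
    simp
    ring
  rw [e2]
  refine ThP.add (ThP.add (ThP.add (ThP.sub (ThP.add (ThP.add (ThP.add ?_ ?_) ?_) ?_) ?_) ?_) ?_) ?_
  · exact ThP.three (EisP.int _)
  · exact ThP.th (EisP.int _)
  · exact ThP.mul_left (EisP.int m) h2'
  · exact ThP.three (EisP.int _)
  · exact ThP.th (EisP.sum fun i _ => (EisP.int _).mul (hz2 i))
  · exact ThP.mul_left (EisP.int m2) h'.conj
  · exact ThP.th (EisP.sum fun i _ => (hz i).conj.mul (EisP.int _))
  · exact ThP.three (EisP.sum fun i _ => (hz i).conj.mul (hz2 i))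

theorem ThP.real {x : ℝ} (h : ThP (x : ℂ)) : ∃ k : ℤ, x = 3 * k := by
  obtain ⟨w, ⟨a, b, rfl⟩, h⟩ := h
  have h3 : Real.sqrt 3 * Real.sqrt 3 = 3 := Real.mul_self_sqrt (by norm_num)
  have h3' : Real.sqrt 3 ≠ 0 := by positivity
  rw [theta_eq] at h
  have h1 := congrArg Complex.re h
  have h2 := congrArg Complex.im h
  simp [omega_re, omega_im] at h1 h2
  have h4 : (2 * a - b : ℝ) = 0 := by
    have : Real.sqrt 3 * (2 * a - b) = 0 := by linear_combination (-2) * h2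
    simpa [h3'] using this
  refine ⟨-a, ?_⟩
  rw [h1]; push_cast; linear_combination (-(b : ℝ) / 2) * h3 + 3 / 2 * h4

theorem conj_mul_sum (u : Fin 12 → ℂ) : ∑ i, conj (u i) * u i = ((∑ i, Complex.normSq (u i) : ℝ) : ℂ) := by
  push_cast
  exact Finset.sum_congr rfl fun i _ => by rw [Complex.normSq_eq_conj_mul_self]

theorem Leech.norm {u : Fin 12 → ℂ} (hu : u ∈ Leech) : ∃ k : ℤ, ∑ i, Complex.normSq (u i) = 9 * k := by
  have h := Leech.inner hu hu
  rw [conj_mul_sum, show (1 / 3 : ℂ) = ((1 / 3 : ℝ) : ℂ) by push_cast; rfl, ← Complex.ofReal_mul] at h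
  obtain ⟨k, hk⟩ := h.real
  exact ⟨k, by linarith⟩

end PartC2

section PartC3
open ComplexConjugate

theorem conj_three : conj (3 : ℂ) = 3 := Complex.conj_ofNat 3

theorem sum_mul_single (f : Fin 12 → ℂ) (i : Fin 12) (a : ℂ) :
    ∑ j, f j * (Pi.single i a : Fin 12 → ℂ) j = f i * a := by
  rw [Finset.sum_eq_single i] <;> simp +contextual

theorem cw_weight (s : Fin 6 → ℤ) : (∀ i, (3 : ℤ) ∣ cw s i) ∨ 4 ≤ ∑ i, (cw s i ^ 2 % 3) := by
  have hr : ∀ j, ∃ r : Fin 3, ∃ q : ℤ, s j = r + 3 * q := by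
    intro j
    have : s j % 3 = 0 ∨ s j % 3 = 1 ∨ s j % 3 = 2 := by omega
    rcases this with h | h | h
    · exact ⟨0, s j / 3, by simp; omega⟩
    · exact ⟨1, s j / 3, by simp; omega⟩
    · exact ⟨2, s j / 3, by simp; omega⟩
  choose r q hrq using hr
  have e : ∀ i, cw s i = (golay 0 i * r 0 + golay 1 i * r 1 + golay 2 i * r 2 + golay 3 i * r 3 + golay 4 i * r 4 + golay 5 i * r 5) + 3 * cw q i := by
    intro i
    simp only [cw, Fin.sum_univ_six, hrq]
    ring
  rcases golay_weight (r 0) (r 1) (r 2) (r 3) (r 4) (r 5) with h | h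
  · left
    intro i
    have := h i
    rw [e]; omega
  · right
    convert h using 2 with i
    rw [e]
    set x := (golay 0 i * r 0 + golay 1 i * r 1 + golay 2 i * r 2 + golay 3 i * r 3 + golay 4 i * r 4 + golay 5 i * r 5 : ℤ)
    rw [show (x + 3 * cw q i) ^ 2 = x ^ 2 + 3 * (2 * x * cw q i + 3 * cw q i ^ 2) by ring]
    omega

theorem normSq_mod' {z : ℂ} {n : ℤ} (h : ThP (z - n)) :
    ∃ k : ℤ, Complex.normSq z = k ∧ 0 ≤ k ∧ n ^ 2 % 3 ≤ k := by
  have hz : EisP z := by simpa using h.eis.add (EisP.int n)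
  obtain ⟨k, hk, hk0⟩ := hz.normSq
  obtain ⟨l, hl⟩ := normSq_mod h
  refine ⟨k, hk, hk0, ?_⟩
  have : k = n ^ 2 + 3 * l := by rw [hk] at hl; exact_mod_cast hl
  have : k % 3 = n ^ 2 % 3 := by omega
  omega

theorem Leech.rootless {u : Fin 12 → ℂ} (hu : u ∈ Leech) : ∑ i, Complex.normSq (u i) ≠ 9 := by
  intro h9
  rw [leech_iff] at hu
  obtain ⟨m, s, z, hz, h, h'⟩ := hu
  by_cases hm : (3 : ℤ) ∣ m
  · obtain ⟨m', rfl⟩ := hm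
    have h1 : ∀ i, ∃ k : ℤ, Complex.normSq (u i) = 3 * k ∧ 0 ≤ k ∧ (cw s i) ^ 2 % 3 ≤ k := by
      intro i
      have : ThP ((cw s i - θ * (m' + z i)) - (cw s i : ℤ)) := by
        rw [show (cw s i - θ * (m' + z i)) - ((cw s i : ℤ) : ℂ) = -(θ * (m' + z i)) by ring]
        exact (ThP.th ((EisP.int m').add (hz i))).neg
      obtain ⟨k, hk, h0, h1⟩ := normSq_mod' this
      refine ⟨k, ?_, h0, h1⟩
      rw [h, ← hk, ← normSq_theta, ← map_mul]
      congr 1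
      push_cast
      linear_combination (-(m' : ℂ) - z i) * (-1) * theta_sq
    choose k hk hk0 hk1 using h1
    have hsum : ∑ i, k i = 3 := by
      have : ((∑ i, 3 * k i : ℤ) : ℝ) = (9 : ℤ) := by
        push_cast; rw [← h9]; exact Finset.sum_congr rfl fun i _ => (hk i).symm
      have := Int.cast_injective this
      rw [← Finset.mul_sum] at this
      omega
    rcases cw_weight s with hw | hw
    · choose t ht using hw
      have hu3 : ∀ i, u i = 3 * (m' + θ * t i + z i) := by
        intro i; rw [h, ht]; push_cast; ring
      set w : Fin 12 → ℂ := fun i => m' + θ * t i + z i with hwdef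
      have hwE : ∀ i, EisP (w i) := fun i => ((EisP.int m').add (EisP.th.mul (EisP.int _))).add (hz i)
      choose n hn hn0 using fun i => (hwE i).normSq
      have hns : ∑ i, n i = 1 := by
        have : ((∑ i, 9 * n i : ℤ) : ℝ) = (9 : ℤ) := by
          push_cast; refine Eq.trans ?_ h9
          refine Finset.sum_congr rfl fun i _ => ?_
          rw [hu3 i, map_mul, hn]
          congr 1
          rw [Complex.normSq_ofNat]; norm_num
        have := Int.cast_injective this
        rw [← Finset.mul_sum] at this
        omega
      obtain ⟨i0, -, hi0⟩ : ∃ i ∈ Finset.univ, n i ≠ 0 := by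
        apply Finset.exists_ne_zero_of_sum_ne_zero; rw [hns]; norm_num
      have hs := Finset.add_sum_erase Finset.univ n (Finset.mem_univ i0)
      have hnn : 0 ≤ ∑ i ∈ Finset.univ.erase i0, n i := Finset.sum_nonneg fun i _ => hn0 i
      have h00 := hn0 i0
      have hz0 : ∑ i ∈ Finset.univ.erase i0, n i = 0 := by omega
      have hz1 := (Finset.sum_eq_zero_iff_of_nonneg fun i _ => hn0 i).1 hz0
      have hw0 : ∀ i, i ≠ i0 → w i = 0 := by
        intro i hi
        have := hn i
        rw [hz1 i (by simp [hi])] at this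
        simpa using this
      have hsw : ∑ i, w i = w i0 := Finset.sum_eq_single i0 (fun i _ hi => hw0 i hi) (by simp)
      have hth : ThP (w i0 - (0 : ℤ)) := by
        rw [← hsw]
        simp only [hwdef, Finset.sum_add_distrib, ← Finset.mul_sum]
        have := (h'.add (ThP.th (EisP.int (∑ i, t i)))).add (ThP.three (EisP.int (5 * m')))
        convert this using 1
        push_cast; simp; ring
      obtain ⟨l, hl⟩ := normSq_mod hth
      rw [hn i0] at hl
      have : n i0 = 3 * l := by push_cast at hl; have : (n i0 : ℝ) = ((3 * l : ℤ) : ℝ) := by rw [hl]; push_cast; ring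
                                exact_mod_cast this
      omega
    · have : ∑ i, (cw s i ^ 2 % 3) ≤ ∑ i, k i := Finset.sum_le_sum fun i _ => hk1 i
      omega
  · have h1 : ∀ i, (1 : ℝ) ≤ Complex.normSq (u i) := by
      intro i
      have : ThP (u i - m) := by
        rw [h, show (m : ℂ) + θ * (cw s i : ℂ) + 3 * z i - m = θ * (cw s i : ℂ) + 3 * z i by ring]
        exact (ThP.th (EisP.int _)).add (ThP.three (hz i))
      obtain ⟨k, hk, h0, h1⟩ := normSq_mod' this
      have hm2 : m ^ 2 % 3 = 1 := by
        have : m % 3 = 1 ∨ m % 3 = 2 := by omega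
        rcases this with h | h <;> simp [pow_two, Int.mul_emod, h]
      rw [hk]; exact_mod_cast (by omega : 1 ≤ k)
    have := Finset.sum_le_sum (s := (Finset.univ : Finset (Fin 12))) fun i _ => h1 i
    simp at this
    linarith

/-- Trace integrality implies `θ`-integrality. -/
theorem ThP.of_trace {h : ℂ} (k l : ℤ) (hk : 2 / 3 * h.re = k) (hl : 2 / 3 * (ω * h).re = l) : ThP h := by
  have h3 : Real.sqrt 3 * Real.sqrt 3 = 3 := Real.mul_self_sqrt (by norm_num)
  have h3' : Real.sqrt 3 ≠ 0 := by positivity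
  simp [omega_re, omega_im] at hl
  refine ⟨_, ⟨-(l + k), -k, rfl⟩, ?_⟩
  rw [theta_eq]
  apply Complex.ext
  · simp [omega_re, omega_im]
    linear_combination 3 / 2 * hk - (k : ℝ) / 2 * h3
  · simp [omega_re, omega_im]
    refine mul_left_cancel₀ h3' ?_
    linear_combination (-3) * hl - 3 / 2 * hk + (l + k / 2) * h3

theorem leech_dual (x : Fin 12 → ℂ) (hx : ∀ u ∈ Leech, ThP (1 / 3 * ∑ i, conj (x i) * u i)) : x ∈ Leech := by
  -- coordinates are Eisenstein integers
  have hE : ∀ i, EisP (x i) := by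
    intro i
    have hm : Pi.single i (3 * θ) ∈ Leech := by
      rw [leech_iff]
      refine ⟨0, 0, Pi.single i θ, fun j => ?_, fun j => ?_, ?_⟩
      · rcases eq_or_ne j i with rfl | hj
        · simpa using EisP.th
        · simpa [hj] using EisP.zero
      · rcases eq_or_ne j i with rfl | hj <;> simp [cw, *]
      · simpa using ThP.th EisP.one
    obtain ⟨w, hw, h⟩ := hx _ hm
    have : ∑ j, conj (x j) * (Pi.single i (3 * θ) : Fin 12 → ℂ) j = conj (x i) * (3 * θ) := by
      rw [Finset.sum_eq_single i] <;> simp +contextual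
    rw [this] at h
    have : conj (x i) = w := by
      apply mul_left_cancel₀ theta_ne; linear_combination h
    rw [← this] at hw
    simpa using hw.conj
  have hd : ∀ i, ThP (x i - x 0) := by
    intro i
    have hm : (Pi.single i 3 - Pi.single 0 3 : Fin 12 → ℂ) ∈ Leech := by
      rw [leech_iff]
      refine ⟨0, 0, Pi.single i 1 - Pi.single 0 1, fun j => ?_, fun j => ?_, ?_⟩
      · refine EisP.sub ?_ ?_
        · by_cases hj : j = i
          · subst hj; simpa using EisP.one
          · simpa [hj] using EisP.zero
        · by_cases hj : j = 0
          · subst hj; simpa using EisP.one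
          · simpa [hj] using EisP.zero
      · simp [cw, Pi.single_apply]; split_ifs <;> norm_num
      · simpa [Finset.sum_sub_distrib] using ThP.zero
    have h := hx _ hm
    have : ∑ j, conj (x j) * (Pi.single i 3 - Pi.single 0 3 : Fin 12 → ℂ) j = conj (x i) * 3 - conj (x 0) * 3 := by
      simp only [Pi.sub_apply, mul_sub, Finset.sum_sub_distrib]
      rw [sum_mul_single (fun j => conj (x j)), sum_mul_single (fun j => conj (x j))]
    rw [this] at h
    have h := h.conj
    simp [conj_three] at h
    convert h using 1
    ring
  obtain ⟨m, hm⟩ := (hE 0).mod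
  have hm' : ∀ i, ThP (x i - m) := fun i => by simpa using (hd i).add hm
  choose y hy hxy using hm'
  have hxi : ∀ i, x i = m + θ * y i := fun i => by rw [← hxy]; ring
  choose c hc using fun i => (hy i).mod
  -- the codeword
  have hcg : ∀ j, (3 : ℤ) ∣ ∑ i, c i * golay j i := by
    intro j
    have hg : ∀ i, cw (Pi.single j 1) i = golay j i := by
      intro i; simp [cw, Pi.single_apply]
    have hmem : (fun i => θ * (golay j i : ℂ)) ∈ Leech := by
      rw [leech_iff]
      exact ⟨0, Pi.single j 1, 0, fun _ => EisP.zero, fun i => by simp [hg], by simpa using ThP.zero⟩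
    have h := hx _ hmem
    obtain ⟨k, hk⟩ := golay_sum j
    have hk' : ∑ i, (golay j i : ℂ) = 3 * k := by exact_mod_cast congrArg (fun n : ℤ => (n : ℂ)) hk
    have e : ∀ i, conj (x i) * (θ * (golay j i : ℂ)) = m * θ * golay j i + 3 * (conj (y i) * golay j i) := by
      intro i
      rw [hxi]; simp [conj_theta]; linear_combination (-(conj (y i)) * golay j i) * theta_sq
    simp only [e, Finset.sum_add_distrib, ← Finset.mul_sum, hk'] at h
    have h1 : ThP (∑ i, conj (y i) * golay j i) := by
      have := h.sub (ThP.th ((EisP.int m).mul (EisP.int k)))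
      convert this using 1
      ring
    have h2 : ThP (∑ i, conj (y i - c i) * golay j i) := ThP.sum fun i _ => by
      rw [mul_comm]; exact ThP.mul_left (EisP.int _) (hc i).conj
    apply ThP.int_dvd
    have := h1.sub h2
    convert this using 1
    push_cast
    rw [← Finset.sum_sub_distrib]
    refine Finset.sum_congr rfl fun i _ => ?_
    simp; ring
  obtain ⟨s, hs⟩ := cw_dual c hcg
  have hy' : ∀ i, ThP (y i - cw s i) := by
    intro i
    have := (hc i).add (ThP.of_dvd (hs i))
    convert this using 1
    push_cast; ring
  choose w hw hyw using hy'
  rw [leech_iff]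
  have hxf : ∀ i, x i = m + θ * (cw s i : ℂ) + 3 * (-w i) := by
    intro i
    rw [hxi, show y i = cw s i + θ * w i by rw [← hyw]; ring]
    linear_combination (w i) * theta_sq
  refine ⟨m, s, fun i => -w i, fun i => (hw i).neg, hxf, ?_⟩
  have hmem : ((fun _ => 1) + Pi.single 0 3 : Fin 12 → ℂ) ∈ Leech := by
    rw [leech_iff]
    refine ⟨1, 0, Pi.single 0 1, fun j => ?_, fun j => ?_, ?_⟩
    · by_cases hj : j = 0
      · subst hj; simpa using EisP.one
      · simpa [hj] using EisP.zero
    · simp [cw, Pi.single_apply]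
    · simpa using ThP.zero
  have h := hx _ hmem
  obtain ⟨k, hk⟩ := cw_sum s
  have hk' : ∑ i, (cw s i : ℂ) = 3 * k := by exact_mod_cast congrArg (fun n : ℤ => (n : ℂ)) hk
  have e : ∑ i, conj (x i) * ((fun _ => 1) + Pi.single 0 3 : Fin 12 → ℂ) i = ∑ i, conj (x i) + conj (x 0) * 3 := by
    simp only [Pi.add_apply, mul_add, mul_one, Finset.sum_add_distrib]
    congr 1
    rw [sum_mul_single (fun j => conj (x j))]
  rw [e] at h
  have h := h.conj
  have e2 : conj (1 / 3 * (∑ i, conj (x i) + conj (x 0) * 3)) = 1 / 3 * (∑ i, x i) + x 0 := by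
    simp [conj_three]; ring
  rw [e2] at h
  simp only [hxf, Finset.sum_add_distrib, ← Finset.mul_sum, hk'] at h
  have h5 := ((h.sub (ThP.th (EisP.int k))).sub (ThP.three (EisP.int (2 * m)))).sub ((ThP.th (EisP.int (cw s 0))).add (ThP.three (hw 0).neg))
  convert h5 using 1
  push_cast
  simp
  ring

end PartC3

section PartC4
open ComplexConjugate

/-- The complex Leech lattice rescaled to an even unimodular lattice. -/
def LeechR : Submodule ℤ (EuclideanSpace ℂ (Fin 12)) where
  carrier := {x | ∃ u ∈ Leech, ∀ i, x i = ((Real.sqrt 2 / 3 : ℝ) : ℂ) * u i}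
  add_mem' := by
    rintro x y ⟨u, hu, hx⟩ ⟨v, hv, hy⟩
    exact ⟨u + v, Leech.add hu hv, fun i => by simp only [PiLp.add_apply, Pi.add_apply, hx, hy]; ring⟩
  zero_mem' := ⟨0, Leech.zero, fun i => by simp⟩
  smul_mem' := by
    rintro n x ⟨u, hu, hx⟩
    exact ⟨(n : ℂ) • u, Leech.int hu n, fun i => by
      simp only [PiLp.smul_apply, Pi.smul_apply, hx, zsmul_eq_mul, smul_eq_mul]; ring⟩

theorem real_inner_eq (x y : EuclideanSpace ℂ (Fin 12)) : inner ℝ x y = (∑ i, conj (x i) * y i).re := by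
  rw [PiLp.inner_apply, Complex.re_sum]
  exact Finset.sum_congr rfl fun i _ => (Complex.inner _ _).trans (by rw [mul_comm])

theorem norm_sq_eq' (x : EuclideanSpace ℂ (Fin 12)) : ‖x‖ ^ 2 = ∑ i, Complex.normSq (x i) := by
  rw [EuclideanSpace.norm_sq_eq]
  simp [Complex.normSq_eq_norm_sq]

theorem sc_sq : Complex.normSq ((Real.sqrt 2 / 3 : ℝ) : ℂ) = 2 / 9 := by
  have h : Real.sqrt 2 * Real.sqrt 2 = 2 := Real.mul_self_sqrt (by norm_num)
  rw [Complex.normSq_ofReal]; linear_combination h / 9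

theorem LeechR_norm {x : EuclideanSpace ℂ (Fin 12)} {u : Fin 12 → ℂ}
    (h : ∀ i, x i = ((Real.sqrt 2 / 3 : ℝ) : ℂ) * u i) : ‖x‖ ^ 2 = 2 / 9 * ∑ i, Complex.normSq (u i) := by
  rw [norm_sq_eq', Finset.mul_sum]
  exact Finset.sum_congr rfl fun i _ => by rw [h, map_mul, sc_sq]

theorem LeechR_unimod : EvenUnimod LeechR where
  even := by
    rintro x ⟨u, hu, hx⟩
    obtain ⟨k, hk⟩ := Leech.norm hu
    exact ⟨k, by rw [LeechR_norm hx, hk]; ring⟩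
  dual := by
    intro x hx
    have h2 : ((Real.sqrt 2 : ℝ) : ℂ) * ((Real.sqrt 2 : ℝ) : ℂ) = 2 := by
      rw [← Complex.ofReal_mul, Real.mul_self_sqrt (by norm_num)]; norm_num
    set y : Fin 12 → ℂ := fun i => ((3 * Real.sqrt 2 / 2 : ℝ) : ℂ) * x i with hy
    have hxy : ∀ i, x i = ((Real.sqrt 2 / 3 : ℝ) : ℂ) * y i := by
      intro i; simp only [hy]; push_cast; linear_combination (-(x i) / 2) * h2
    refine ⟨y, leech_dual y fun u hu => ?_, hxy⟩
    have key : ∀ v ∈ Leech, ∃ k : ℤ, 2 / 3 * (1 / 3 * ∑ i, conj (y i) * v i).re = k := by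
      intro v hv
      obtain ⟨k, hk⟩ := hx (WithLp.toLp 2 fun i => ((Real.sqrt 2 / 3 : ℝ) : ℂ) * v i) ⟨v, hv, fun i => rfl⟩
      refine ⟨k, ?_⟩
      rw [← hk, real_inner_eq]
      have : ∑ i, conj (x i) * (((Real.sqrt 2 / 3 : ℝ) : ℂ) * v i) = ((2 / 9 : ℝ) : ℂ) * ∑ i, conj (y i) * v i := by
        rw [Finset.mul_sum]
        refine Finset.sum_congr rfl fun i _ => ?_
        rw [hxy, map_mul, Complex.conj_ofReal]
        push_cast
        linear_combination (conj (y i) * v i / 9) * h2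
      rw [show (∑ i, conj (x i) * (WithLp.toLp 2 fun i => ((Real.sqrt 2 / 3 : ℝ) : ℂ) * v i).ofLp i) = ∑ i, conj (x i) * (((Real.sqrt 2 / 3 : ℝ) : ℂ) * v i) from rfl, this, Complex.re_ofReal_mul,
        show (1 / 3 : ℂ) = ((1 / 3 : ℝ) : ℂ) by push_cast; rfl, Complex.re_ofReal_mul]
      ring
    obtain ⟨k, hk⟩ := key u hu
    obtain ⟨l, hl⟩ := key _ (Leech.om hu)
    refine ThP.of_trace k l hk ?_
    rw [← hl]
    congr 2
    simp only [Finset.mul_sum, Pi.smul_apply, smul_eq_mul]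
    exact Finset.sum_congr rfl fun i _ => by ring

theorem leech_covering (c : Fin 12 → ℂ) : ∃ u ∈ Leech, ∑ i, Complex.normSq (c i - u i) ≤ 9 := by
  obtain ⟨v, ⟨u, hu, hv⟩, h⟩ := covering LeechR_unimod
    (by rw [finrank_real_of_complex]; simp)
    (by
      rintro v ⟨u, hu, hv⟩ h
      rw [LeechR_norm hv] at h
      exact Leech.rootless hu (by linarith))
    (WithLp.toLp 2 fun i => ((Real.sqrt 2 / 3 : ℝ) : ℂ) * c i)
  refine ⟨u, hu, ?_⟩
  rw [LeechR_norm (u := fun i => c i - u i)] at h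
  · linarith
  · intro i
    simp [hv]; ring

end PartC4

section PartF
open ComplexConjugate

/-- The Leech part of a vector. -/
def lp (v : V) : Fin 12 → ℂ := fun i => v (Fin.castLE (by norm_num) i)

theorem lp_add (u v : V) : lp (u + v) = lp u + lp v := rfl
theorem lp_sub (u v : V) : lp (u - v) = lp u - lp v := rfl
theorem lp_smul (a : ℂ) (v : V) : lp (a • v) = a • lp v := rfl

theorem herm_eq (u v : V) : herm u v = -(1 / 3 * ∑ i, conj (lp u i) * lp v i) - θ * (conj (u 12) * v 13) + θ * (conj (u 13) * v 12) := by
  unfold herm lp; rw [conj_theta]; ring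

theorem herm_add_right (u v w : V) : herm u (v + w) = herm u v + herm u w := by
  simp only [herm_eq, lp_add, Pi.add_apply, mul_add, Finset.sum_add_distrib]; ring

theorem herm_smul_right (a : ℂ) (u v : V) : herm u (a • v) = a * herm u v := by
  have : ∑ i, conj (lp u i) * lp (a • v) i = a * ∑ i, conj (lp u i) * lp v i := by
    rw [Finset.mul_sum]
    exact Finset.sum_congr rfl fun i _ => by rw [lp_smul, Pi.smul_apply, smul_eq_mul]; ring
  simp only [herm_eq, this, Pi.smul_apply, smul_eq_mul]; ring

theorem herm_sub_right (u v w : V) : herm u (v - w) = herm u v - herm u w := by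
  simp only [herm_eq, lp_sub, Pi.sub_apply, mul_sub, Finset.sum_sub_distrib]; ring

theorem herm_conj (u v : V) : conj (herm u v) = herm v u := by
  have : ∑ i, conj (lp v i) * lp u i = conj (∑ i, conj (lp u i) * lp v i) := by
    rw [map_sum]
    exact Finset.sum_congr rfl fun i _ => by simp [mul_comm]
  simp only [herm_eq, this]
  simp [conj_theta, conj_three]
  ring

theorem herm_smul_left (a : ℂ) (u v : V) : herm (a • u) v = conj a * herm u v := by
  rw [← herm_conj, herm_smul_right, map_mul, herm_conj]

theorem herm_sub_left (u v w : V) : herm (u - v) w = herm u w - herm v w := by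
  rw [← herm_conj, herm_sub_right, map_sub, herm_conj, herm_conj]

theorem mem_Lset {v : V} : v ∈ Lset ↔ lp v ∈ Leech ∧ EisP (v 12) ∧ EisP (v 13) := Iff.rfl

theorem Lset.add {u v : V} (hu : u ∈ Lset) (hv : v ∈ Lset) : u + v ∈ Lset :=
  ⟨Leech.add hu.1 hv.1, hu.2.1.add hv.2.1, hu.2.2.add hv.2.2⟩

theorem Lset.smul {v : V} (hv : v ∈ Lset) {a : ℂ} (ha : EisP a) : a • v ∈ Lset :=
  ⟨Leech.eis hv.1 ha, ha.mul hv.2.1, ha.mul hv.2.2⟩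

theorem Lset.sub {u v : V} (hu : u ∈ Lset) (hv : v ∈ Lset) : u - v ∈ Lset := by
  have := Lset.add hu (Lset.smul hv EisP.one.neg)
  simpa [sub_eq_add_neg] using this

theorem Lset.herm {u v : V} (hu : u ∈ Lset) (hv : v ∈ Lset) : ThP (herm u v) := by
  rw [herm_eq]
  exact ((Leech.inner hu.1 hv.1).neg.sub (ThP.th (hu.2.1.conj.mul hv.2.2))).add (ThP.th (hu.2.2.conj.mul hv.2.1))

theorem isRoot_iff {r : V} : IsRoot r ↔ r ∈ Lset ∧ herm r r = -3 := by
  refine ⟨fun h => ⟨h.1, h.2.1⟩, fun h => ⟨h.1, h.2, ?_⟩⟩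
  intro α hα y hy hr
  obtain ⟨n, hn, hn0⟩ := hα.normSq
  have hre : herm y y = (((herm y y).re : ℝ) : ℂ) := (Complex.conj_eq_iff_re.1 (herm_conj y y)).symm
  have hT := Lset.herm hy hy
  rw [hre] at hT
  obtain ⟨k, hk⟩ := hT.real
  have h2 := h.2
  rw [hr, herm_smul_right, herm_smul_left, hre, hk, ← mul_assoc, mul_comm α, ← Complex.normSq_eq_conj_mul_self, hn] at h2
  have h3 : ((n * (3 * k) : ℤ) : ℂ) = ((-3 : ℤ) : ℂ) := by push_cast; push_cast at h2; exact h2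
  have h4 : n * (3 * k) = -3 := Int.cast_injective h3
  have h5 : n ∣ 1 := ⟨-k, by linarith⟩
  have h6 : n = 1 := Int.eq_one_of_dvd_one hn0 h5
  exact hα.unit (by rw [hn, h6]; norm_num)

theorem one_sub_om : ∃ e, EisP e ∧ 1 - ω = θ * e :=
  ⟨-(1 + ω), (EisP.one.add EisP.om).neg, by rw [theta_eq]; linear_combination 2 * omega_sq⟩

theorem one_sub_com : ∃ e, EisP e ∧ 1 - conj ω = θ * e := by
  obtain ⟨e, he, h⟩ := one_sub_om
  exact ⟨-conj e, he.conj.neg, by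
    have := congrArg conj h
    simp only [map_sub, map_one, map_mul, conj_theta] at this
    rw [this]; ring⟩

theorem om_conj : ω * conj ω = 1 := by rw [conj_omega]; linear_combination -omega_sq

/-- The two admissible multipliers. -/
def Mul2 (μ : ℂ) : Prop := μ = ω ∨ μ = conj ω

theorem Mul2.norm {μ : ℂ} (h : Mul2 μ) : μ * conj μ = 1 := by
  rcases h with rfl | rfl
  · exact om_conj
  · rw [Complex.conj_conj, mul_comm]; exact om_conj

theorem Mul2.th {μ : ℂ} (h : Mul2 μ) : ∃ e, EisP e ∧ 1 - μ = θ * e := by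
  rcases h with rfl | rfl
  · exact one_sub_om
  · exact one_sub_com

theorem Mul2.conj {μ : ℂ} (h : Mul2 μ) : Mul2 (conj μ) := by
  rcases h with rfl | rfl
  · exact Or.inr rfl
  · left; simp

theorem refl_mem {μ : ℂ} (hμ : Mul2 μ) {a v : V} (ha : IsRoot a) (hv : v ∈ Lset) : reflMap μ a v ∈ Lset := by
  obtain ⟨e, he, h⟩ := hμ.th
  obtain ⟨w, hw, h'⟩ := Lset.herm ha.1 hv
  unfold reflMap
  have : (1 - μ) * herm a v / herm a a = e * w := by
    rw [h, h', ha.2.1]; linear_combination (-(e * w) / 3) * theta_sq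
  rw [this]
  exact Lset.sub hv (Lset.smul ha.1 (he.mul hw))

theorem refl_herm {μ : ℂ} (hμ : μ * conj μ = 1) {a : V} (ha : herm a a = -3) (u v : V) :
    herm (reflMap μ a u) (reflMap μ a v) = herm u v := by
  simp only [reflMap, ha, herm_sub_left, herm_sub_right, herm_smul_left, herm_smul_right]
  rw [← herm_conj a u]
  simp only [map_div₀, map_mul, map_sub, map_one, map_neg, conj_three]
  linear_combination (-(conj (herm a u)) * herm a v / 3) * hμ

theorem refl_inv {μ : ℂ} (hμ : μ * conj μ = 1) {a : V} (ha : herm a a = -3) (v : V) :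
    reflMap (conj μ) a (reflMap μ a v) = v := by
  simp only [reflMap, ha, herm_sub_right, herm_smul_right]
  ext i
  simp only [Pi.sub_apply, Pi.smul_apply, smul_eq_mul]
  linear_combination (-(herm a v) * a i / 3) * hμ

theorem refl_root {μ : ℂ} (hμ : Mul2 μ) {a v : V} (ha : IsRoot a) (hv : IsRoot v) : IsRoot (reflMap μ a v) := by
  rw [isRoot_iff]
  exact ⟨refl_mem hμ ha hv.1, by rw [refl_herm hμ.norm ha.2.1, hv.2.1]⟩

theorem EisUnit.conj_mul {u : ℂ} (h : EisUnit u) : conj u * u = 1 := by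
  rw [← Complex.normSq_eq_conj_mul_self, h.normSq]; norm_num

theorem unit_root {u : ℂ} (hu : EisUnit u) {v : V} (hv : IsRoot v) : IsRoot (u • v) := by
  rw [isRoot_iff]
  refine ⟨Lset.smul hv.1 hu.eis, ?_⟩
  rw [herm_smul_left, herm_smul_right, hv.2.1, ← mul_assoc, hu.conj_mul, one_mul]

theorem rad_root {v : V} (h : Rad Psi8 v) : IsRoot v := by
  induction h with
  | base h => exact h.1
  | refl _ _ ha hb => exact refl_root (Or.inl rfl) ha hb
  | inv _ _ ha hb => exact refl_root (Or.inr rfl) ha hb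
  | unit hu _ h => exact unit_root hu h

theorem glue12 (lam : Fin 12 → ℂ) (x y : ℂ) : glue lam x y 12 = x := by simp [glue]
theorem glue13 (lam : Fin 12 → ℂ) (x y : ℂ) : glue lam x y 13 = y := by simp [glue]
theorem glue_lp (lam : Fin 12 → ℂ) (x y : ℂ) : lp (glue lam x y) = lam := by
  funext i
  have : ((Fin.castLE (by norm_num : 12 ≤ 14) i : Fin 14) : ℕ) < 12 := i.2
  unfold lp glue
  rw [dif_pos this]
  rfl
theorem glue_eq (v : V) : v = glue (lp v) (v 12) (v 13) := by
  funext i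
  unfold glue
  split_ifs with h h'
  · rfl
  · congr 1; exact Fin.ext h'
  · congr 1; apply Fin.ext; have := i.2; change (i : ℕ) = 13; omega

theorem psi_of_one {v : V} (hv : IsRoot v) (h1 : v 12 = 1) : v ∈ Psi8 := by
  refine ⟨hv, lp v, (v 13).re, 0, hv.1.1, ?_⟩
  have hn := hv.2.1
  rw [herm_eq, h1] at hn
  have e : v 13 = θ * (-3 - normL (lp v)) / 6 + ((v 13).re : ℂ) + ((0 : ℤ) : ℂ) := by
    have hre : ((v 13).re : ℂ) = (v 13 + conj (v 13)) / 2 := by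
      rw [Complex.add_conj]; push_cast; ring
    rw [hre]
    unfold normL
    simp only [map_one] at hn
    push_cast
    linear_combination (θ / 6) * hn + ((v 13 - conj (v 13)) / 6) * theta_sq
  conv_lhs => rw [glue_eq v, h1, e]

theorem height_zero {v : V} (hv : IsRoot v) : v 12 ≠ 0 := by
  intro h
  have hn := hv.2.1
  rw [herm_eq, h, conj_mul_sum] at hn
  simp only [map_zero, mul_zero, zero_mul, sub_zero, add_zero] at hn
  have : ((∑ i, Complex.normSq (lp v i) : ℝ) : ℂ) = ((9 : ℝ) : ℂ) := by
    push_cast; push_cast at hn; linear_combination (-3) * hn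
  exact Leech.rootless hv.1.1 (Complex.ofReal_injective this)

theorem exists_psi (u : Fin 12 → ℂ) (hu : u ∈ Leech) :
    ∃ s ∈ Psi8, lp s = u ∧ s 12 = 1 ∧ ∀ n : ℤ, ∃ s' ∈ Psi8, lp s' = u ∧ s' 12 = 1 ∧ s' 13 = s 13 + n := by
  obtain ⟨k, hk⟩ := Leech.norm hu
  have key : ∀ n : ℤ, glue u 1 ((k - 1) * (1 + ω) + n) ∈ Psi8 := by
    intro n
    refine psi_of_one (isRoot_iff.2 ⟨mem_Lset.2 ⟨?_, ?_, ?_⟩, ?_⟩) (glue12 _ _ _)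
    · rw [glue_lp]; exact hu
    · rw [glue12]; exact EisP.one
    · rw [glue13]
      have := ((EisP.int (k - 1)).mul (EisP.one.add EisP.om)).add (EisP.int n)
      push_cast at this; exact this
    · rw [herm_eq, glue12, glue13, glue_lp, conj_mul_sum, hk]
      simp only [map_add, map_mul, map_sub, map_one, map_intCast, conj_omega]
      rw [theta_eq]
      push_cast
      linear_combination (-4 * ((k : ℂ) - 1)) * omega_sq
  refine ⟨glue u 1 ((k - 1) * (1 + ω) + (0 : ℤ)), key 0, glue_lp _ _ _, glue12 _ _ _, fun n => ⟨_, key n, glue_lp _ _ _, glue12 _ _ _, ?_⟩⟩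
  rw [glue13, glue13]; push_cast; ring

theorem disk_calc {X : ℂ} (h1 : -3 < X.re) (h2 : X.re < 0) (h3 : |X.im| ≤ Real.sqrt 3 / 2) :
    ∃ μ, Mul2 μ ∧ Complex.normSq (1 + (1 - μ) * X / 3) < 1 := by
  have hs : Real.sqrt 3 * Real.sqrt 3 = 3 := Real.mul_self_sqrt (by norm_num)
  have hs0 : 0 < Real.sqrt 3 := by positivity
  obtain ⟨h4, h5⟩ := abs_le.1 h3
  have e : ∀ μ : ℂ, (1 - μ) * X / 3 = ((1 / 3 : ℝ) : ℂ) * ((1 - μ) * X) := by intro μ; push_cast; ring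
  have hp : X.re * (X.re + 3) < 0 := mul_neg_of_neg_of_pos h2 (by linarith)
  have h6 : Real.sqrt 3 * Real.sqrt 3 * X.re ^ 2 = 3 * X.re ^ 2 := by rw [hs]
  have h7 : Real.sqrt 3 * Real.sqrt 3 * X.im ^ 2 = 3 * X.im ^ 2 := by rw [hs]
  rcases le_total X.im 0 with h | h
  · refine ⟨ω, Or.inl rfl, ?_⟩
    have hq : X.im * (X.im + Real.sqrt 3) ≤ 0 := mul_nonpos_of_nonpos_of_nonneg h (by linarith)
    rw [e, Complex.normSq_apply]
    simp only [Complex.add_re, Complex.add_im, Complex.one_re, Complex.one_im, Complex.ofReal_re, Complex.ofReal_im, Complex.mul_re, Complex.mul_im, Complex.sub_re, Complex.sub_im, omega_re, omega_im]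
    nlinarith [h6, h7]
  · refine ⟨conj ω, Or.inr rfl, ?_⟩
    have hq : X.im * (X.im - Real.sqrt 3) ≤ 0 := mul_nonpos_of_nonneg_of_nonpos h (by linarith)
    rw [e, Complex.normSq_apply]
    simp only [Complex.add_re, Complex.add_im, Complex.one_re, Complex.one_im, Complex.ofReal_re, Complex.ofReal_im, Complex.mul_re, Complex.mul_im, Complex.sub_re, Complex.sub_im, omega_re, omega_im, Complex.conj_re, Complex.conj_im]
    nlinarith [h6, h7]

theorem reduce {v : V} (hv : IsRoot v) (h1 : 1 < Complex.normSq (v 12)) :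
    ∃ s ∈ Psi8, ∃ μ, Mul2 μ ∧ Complex.normSq ((reflMap μ s v) 12) < Complex.normSq (v 12) := by
  set α := v 12 with hα
  have hα0 : α ≠ 0 := height_zero hv
  have hN : 0 < Complex.normSq α := Complex.normSq_pos.2 hα0
  set w : V := α⁻¹ • v with hw
  have hw12 : w 12 = 1 := by simp [hw, ← hα, hα0]
  have hww : herm w w = ((-3 / Complex.normSq α : ℝ) : ℂ) := by
    rw [hw, herm_smul_left, herm_smul_right, hv.2.1, ← mul_assoc, ← Complex.normSq_eq_conj_mul_self, Complex.normSq_inv]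
    push_cast; ring
  obtain ⟨u, hu, hD⟩ := leech_covering (lp w)
  have hre : ∀ s ∈ Psi8, lp s = u → s 12 = 1 → (herm s w).re = (-3 - 3 / Complex.normSq α + 1 / 3 * ∑ i, Complex.normSq (lp w i - u i)) / 2 := by
    intro s hs hsu hs1
    have hd : herm (w - s) (w - s) = ((-(1 / 3 * ∑ i, Complex.normSq (lp w i - u i)) : ℝ) : ℂ) := by
      rw [herm_eq, conj_mul_sum, lp_sub, hsu]
      simp only [Pi.sub_apply, hw12, hs1]
      push_cast; simp
    rw [herm_sub_left, herm_sub_right, herm_sub_right, hww, hs.1.2.1, ← herm_conj s w] at hd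
    have := congrArg Complex.re hd
    simp only [Complex.sub_re, Complex.conj_re, Complex.ofReal_re, Complex.neg_re] at this
    have h3 : (3 : ℂ).re = 3 := rfl
    rw [h3] at this
    linear_combination (-1 / 2) * this
  obtain ⟨s0, hs0, hl0, h120, hsh⟩ := exists_psi u hu
  have h3p : 0 < Real.sqrt 3 := by positivity
  obtain ⟨N, hNr⟩ : ∃ N : ℤ, |(herm s0 w).im / Real.sqrt 3 - N| ≤ 1 / 2 := ⟨_, abs_sub_round _⟩
  obtain ⟨s, hs, hl, h12, h13⟩ := hsh (-N)
  have him : |(herm s w).im| ≤ Real.sqrt 3 / 2 := by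
    have e : herm s w = herm s0 w - θ * (N : ℂ) := by
      rw [herm_eq, herm_eq, hl, hl0, h12, h120, h13, hw12]
      simp; ring
    have e2 : (herm s w).im = Real.sqrt 3 * ((herm s0 w).im / Real.sqrt 3 - N) := by
      rw [e]; simp [theta_re, theta_im]; field_simp
    rw [e2, abs_mul, abs_of_pos h3p]
    nlinarith
  have hr := hre s hs hl h12
  have hDn : 0 ≤ ∑ i, Complex.normSq (lp w i - u i) := Finset.sum_nonneg fun i _ => Complex.normSq_nonneg _
  have hq : 0 < 3 / Complex.normSq α := by positivity
  have hq2 : 3 / Complex.normSq α < 3 := by rw [div_lt_iff₀ hN]; linarith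
  obtain ⟨μ, hμ, hlt⟩ := disk_calc (X := herm s w) (by rw [hr]; linarith) (by rw [hr]; linarith) him
  refine ⟨s, hs, μ, hμ, ?_⟩
  have e : (reflMap μ s v) 12 = α * (1 + (1 - μ) * herm s w / 3) := by
    have : herm s w = α⁻¹ * herm s v := by rw [hw, herm_smul_right]
    simp only [reflMap, Pi.sub_apply, Pi.smul_apply, smul_eq_mul, h12, hs.1.2.1, this, ← hα]
    field_simp
    ring
  rw [e, map_mul]
  nlinarith

theorem root_rad_aux (n : ℕ) : ∀ v : V, IsRoot v → Complex.normSq (v 12) ≤ n → Rad Psi8 v := by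
  induction n with
  | zero =>
    intro v hv h
    exact absurd (by simpa using le_antisymm (by simpa using h) (Complex.normSq_nonneg _)) (height_zero hv)
  | succ n ih =>
    intro v hv h
    have hE : EisP (v 12) := hv.1.2.1
    obtain ⟨k, hk, hk0⟩ := hE.normSq
    have hk1 : k ≠ 0 := by
      rintro rfl
      exact height_zero hv (by simpa using hk)
    rcases eq_or_ne k 1 with rfl | hk2
    · have hu : EisUnit (v 12) := hE.unit (by simpa using hk)
      have hu' : EisUnit (conj (v 12)) := hE.conj.unit (by simpa using hk)
      have : v = v 12 • (conj (v 12) • v) := by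
        rw [smul_smul, mul_comm, hu.conj_mul, one_smul]
      rw [this]
      exact Rad.unit hu (Rad.base (psi_of_one (unit_root hu' hv) (by simpa using hu.conj_mul)))
    · obtain ⟨s, hs, μ, hμ, hlt⟩ := reduce hv (by rw [hk]; exact_mod_cast (by omega : 1 < k))
      have hr := refl_root hμ hs.1 hv
      obtain ⟨l, hl, hl0⟩ := hr.1.2.1.normSq
      have h' : Rad Psi8 (reflMap μ s v) := by
        refine ih _ hr ?_
        rw [hl, hk] at hlt
        rw [hk] at h
        rw [hl]
        have h1 : l < k := by exact_mod_cast hlt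
        have h2 : k ≤ (n + 1 : ℕ) := by exact_mod_cast h
        exact_mod_cast (by omega : l ≤ n)
      rw [← refl_inv hμ.norm hs.1.2.1 v]
      rcases hμ with rfl | rfl
      · exact Rad.inv (Rad.base hs) h'
      · rw [Complex.conj_conj]; exact Rad.refl (Rad.base hs) h'

theorem root_rad {v : V} (hv : IsRoot v) : Rad Psi8 v := by
  obtain ⟨n, hn⟩ := exists_nat_ge (Complex.normSq (v 12))
  exact root_rad_aux n v hv hn

theorem refl_add (μ : ℂ) (r u v : V) : reflMap μ r (u + v) = reflMap μ r u + reflMap μ r v := by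
  simp only [reflMap, herm_add_right, mul_add, add_div, add_smul]; abel

theorem refl_smul (μ : ℂ) (r : V) (c : ℂ) (v : V) : reflMap μ r (c • v) = c • reflMap μ r v := by
  simp only [reflMap, herm_smul_right, smul_sub, smul_smul]
  congr 2; ring

theorem refl_sub (μ : ℂ) (r u v : V) : reflMap μ r (u - v) = reflMap μ r u - reflMap μ r v := by
  simp only [reflMap, herm_sub_right, mul_sub, sub_div, sub_smul]; abel

/-- Reflection in a root as a linear equivalence. -/
def reflE (r : V) (hr : IsRoot r) : V ≃ₗ[ℂ] V where
  toFun := reflMap ω r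
  map_add' := refl_add _ _
  map_smul' := refl_smul _ _
  invFun := reflMap (conj ω) r
  left_inv := refl_inv om_conj hr.2.1
  right_inv := fun v => by
    have := refl_inv (Mul2.conj (Or.inl rfl : Mul2 ω)).norm hr.2.1 v
    rwa [Complex.conj_conj] at this

theorem reflE_mem (r : V) (hr : IsRoot r) : reflE r hr ∈ AutL := by
  refine ⟨fun v => ⟨fun hv => refl_mem (Or.inl rfl) hr hv, fun hv => ?_⟩, fun u v => refl_herm om_conj hr.2.1 u v⟩
  have := refl_mem (Or.inr rfl : Mul2 (conj ω)) hr hv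
  exact (refl_inv om_conj hr.2.1 v) ▸ this

theorem refl_conjugate {μ : ℂ} (hμ : μ * conj μ = 1) {a : V} (ha : herm a a = -3) (b v : V) :
    reflMap ω (reflMap μ a b) (reflMap μ a v) = reflMap μ a (reflMap ω b v) := by
  conv_lhs => unfold reflMap
  change reflMap μ a v - ((1 - ω) * herm (reflMap μ a b) (reflMap μ a v) / herm (reflMap μ a b) (reflMap μ a b)) • reflMap μ a b = _
  rw [refl_herm hμ ha, refl_herm hμ ha]
  conv_rhs => rw [show reflMap ω b v = v - ((1 - ω) * herm b v / herm b b) • b from rfl]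
  rw [refl_sub, refl_smul]

theorem reflE_closure {r : V} (h : Rad Psi8 r) : ∀ hr : IsRoot r,
    reflE r hr ∈ Subgroup.closure (ReflAutos Psi8) := by
  induction h with
  | base h => exact fun hr => Subgroup.subset_closure ⟨reflE_mem _ hr, _, h, fun v => rfl⟩
  | @refl a b ha hb iha ihb =>
    intro hr
    have ra := rad_root ha
    have rb := rad_root hb
    have : reflE _ hr = reflE a ra * reflE b rb * (reflE a ra)⁻¹ := by
      rw [eq_mul_inv_iff_mul_eq]
      apply LinearEquiv.ext
      intro v
      exact refl_conjugate om_conj ra.2.1 b v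
    rw [this]
    exact mul_mem (mul_mem (iha ra) (ihb rb)) (inv_mem (iha ra))
  | @inv a b ha hb iha ihb =>
    intro hr
    have ra := rad_root ha
    have rb := rad_root hb
    have : reflE _ hr = (reflE a ra)⁻¹ * reflE b rb * reflE a ra := by
      rw [← mul_inv_eq_iff_eq_mul]
      apply LinearEquiv.ext
      intro v
      exact refl_conjugate (Mul2.conj (Or.inl rfl : Mul2 ω)).norm ra.2.1 b v
    rw [this]
    exact mul_mem (mul_mem (inv_mem (iha ra)) (ihb rb)) (iha ra)
  | @unit u r hu h ih =>
    intro hr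
    have rr := rad_root h
    have : reflE _ hr = reflE r rr := by
      apply LinearEquiv.ext
      intro v
      change reflMap ω (u • r) v = reflMap ω r v
      unfold reflMap
      rw [hr.2.1, rr.2.1, herm_smul_left, smul_smul]
      congr 2
      linear_combination ((1 - ω) * herm r v / (-3)) * hu.conj_mul
    rw [this]
    exact ih rr



end PartF

/-- `rad(Ψ) = Φ_L`, the set of all roots of `L`; in particular the `ω`-reflections in
the elements of `Ψ` generate the reflection group `R(L)`. -/
theorem stmt8 :
    (∀ v : V, Rad Psi8 v ↔ IsRoot v) ∧
    Subgroup.closure (ReflAutos Psi8) = RL := by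
  refine ⟨fun v => ⟨rad_root, root_rad⟩, le_antisymm ?_ ?_⟩
  · refine Subgroup.closure_mono ?_
    rintro g ⟨hg, r, hr, h⟩
    exact ⟨hg, r, hr.1, h⟩
  · refine (Subgroup.closure_le _).2 ?_
    rintro g ⟨hg, r, hr, h⟩
    have : g = reflE r hr := LinearEquiv.ext h
    rw [this]
    exact reflE_closure (root_rad hr) hr

end Bimonster
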